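/- For every prime p and every v ∈ ℚ_p, the set of u ∈ ℝ such that (u,v) does not satisfy condition (1.2) has Hausdorff dimension zero. -/

import Mathlib

/-- Condition (1.2): `liminf_{|q|,|q₀| → ∞} |q|·|qu − q₀|·|qv − q₀|_p = 0`. -/
def Cond12 (p : ℕ) [Fact p.Prime] (u : ℝ) (v : ℚ_[p]) : Prop :=
  ∀ ε : ℝ, 0 < ε → ∀ N : ℕ, ∃ q q₀ : ℤ,
    (N : ℤ) ≤ |q| ∧ (N : ℤ) ≤ |q₀| ∧
    (|q| : ℝ) * |(q : ℝ) * u - (q₀ : ℝ)| * ‖(q : ℚ_[p]) * v - (q₀ : ℚ_[p])‖ < ε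

open MeasureTheory Filter Topology Set

abbrev SL2R : Type := Matrix.SpecialLinearGroup (Fin 2) ℝ

/-- The linear action of `SL₂(ℝ)` on the plane. -/
def act (g : SL2R) (x : ℝ × ℝ) : ℝ × ℝ :=
  (g 0 0 * x.1 + g 0 1 * x.2, g 1 0 * x.1 + g 1 1 * x.2)

lemma act_mul (g h : SL2R) (x : ℝ × ℝ) : act (g * h) x = act g (act h x) := by
  simp only [act, Matrix.SpecialLinearGroup.coe_mul, Matrix.mul_apply, Fin.sum_univ_two]
  ext <;> simp <;> ring

lemma act_one (x : ℝ × ℝ) : act 1 x = x := by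
  ext <;> simp [act]

lemma act_smul (g : SL2R) (a : ℝ) (x : ℝ × ℝ) : act g (a • x) = a • act g x := by
  ext <;> simp [act] <;> ring

lemma act_sub (g : SL2R) (x y : ℝ × ℝ) : act g (x - y) = act g x - act g y := by
  ext <;> simp [act] <;> ring

lemma act_inv_act (g : SL2R) (x : ℝ × ℝ) : act g⁻¹ (act g x) = x := by
  rw [← act_mul, inv_mul_cancel, act_one]

lemma image_act_mul (g h : SL2R) (X : Set (ℝ × ℝ)) : act (g * h) '' X = act g '' (act h '' X) := by
  rw [Set.image_image]; simp only [act_mul]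

lemma image_act_one (X : Set (ℝ × ℝ)) : act 1 '' X = X := by
  simp [act_one]

/-- The element of `SL₂(ℝ)` with prescribed entries. -/
def mkSL (a b c d : ℝ) (h : a * d - b * c = 1) : SL2R :=
  ⟨!![a, b; c, d], by rw [Matrix.det_fin_two_of]; exact h⟩

@[simp] lemma mkSL_00 (a b c d : ℝ) (h : a * d - b * c = 1) : mkSL a b c d h 0 0 = a := rfl
@[simp] lemma mkSL_01 (a b c d : ℝ) (h : a * d - b * c = 1) : mkSL a b c d h 0 1 = b := rfl
@[simp] lemma mkSL_10 (a b c d : ℝ) (h : a * d - b * c = 1) : mkSL a b c d h 1 0 = c := rfl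
@[simp] lemma mkSL_11 (a b c d : ℝ) (h : a * d - b * c = 1) : mkSL a b c d h 1 1 = d := rfl

lemma SL2R_det (g : SL2R) : g 0 0 * g 1 1 - g 0 1 * g 1 0 = 1 := by
  have := g.det_coe
  rwa [Matrix.det_fin_two] at this

lemma SL2R_mul_00 (g h : SL2R) : (g * h) 0 0 = g 0 0 * h 0 0 + g 0 1 * h 1 0 := by
  simp [Matrix.mul_apply, Fin.sum_univ_two]
lemma SL2R_mul_01 (g h : SL2R) : (g * h) 0 1 = g 0 0 * h 0 1 + g 0 1 * h 1 1 := by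
  simp [Matrix.mul_apply, Fin.sum_univ_two]
lemma SL2R_mul_10 (g h : SL2R) : (g * h) 1 0 = g 1 0 * h 0 0 + g 1 1 * h 1 0 := by
  simp [Matrix.mul_apply, Fin.sum_univ_two]
lemma SL2R_mul_11 (g h : SL2R) : (g * h) 1 1 = g 1 0 * h 0 1 + g 1 1 * h 1 1 := by
  simp [Matrix.mul_apply, Fin.sum_univ_two]
lemma SL2R_inv_00 (g : SL2R) : g⁻¹ 0 0 = g 1 1 := by
  rw [Matrix.SpecialLinearGroup.SL2_inv_expl]; rfl
lemma SL2R_inv_01 (g : SL2R) : g⁻¹ 0 1 = - g 0 1 := by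
  rw [Matrix.SpecialLinearGroup.SL2_inv_expl]; rfl
lemma SL2R_inv_10 (g : SL2R) : g⁻¹ 1 0 = - g 1 0 := by
  rw [Matrix.SpecialLinearGroup.SL2_inv_expl]; rfl
lemma SL2R_inv_11 (g : SL2R) : g⁻¹ 1 1 = g 0 0 := by
  rw [Matrix.SpecialLinearGroup.SL2_inv_expl]; rfl

lemma SL2R_ext {g h : SL2R} (h0 : g 0 0 = h 0 0) (h1 : g 0 1 = h 0 1) (h2 : g 1 0 = h 1 0)
    (h3 : g 1 1 = h 1 1) : g = h := by
  ext i j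
  fin_cases i <;> fin_cases j <;> assumption

/-- All entries of `g` are at most `C` in absolute value. -/
def EntriesLE (C : ℝ) (g : SL2R) : Prop :=
  |g 0 0| ≤ C ∧ |g 0 1| ≤ C ∧ |g 1 0| ≤ C ∧ |g 1 1| ≤ C

/-- All entries of `g` are within `r` of those of the identity. -/
def NearOne (r : ℝ) (g : SL2R) : Prop :=
  |g 0 0 - 1| ≤ r ∧ |g 0 1| ≤ r ∧ |g 1 0| ≤ r ∧ |g 1 1 - 1| ≤ r

/-- The standard lattice in the plane. -/
def Z2 : Set (ℝ × ℝ) := {x | ∃ m n : ℤ, x = ((m : ℝ), (n : ℝ))}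

/-- The lower unipotent matrix with entry `-δ`. -/
def lowU (δ : ℝ) : SL2R := mkSL 1 0 (-δ) 1 (by ring)

/-- The diagonal matrix with entries `B ^ β` and `B ^ (-β)`. -/
noncomputable def diagB (B : ℕ) (hB : 2 ≤ B) (β : ℕ) : SL2R :=
  mkSL ((B : ℝ) ^ β) 0 0 ((B : ℝ) ^ β)⁻¹ (by
    have : (B : ℝ) ^ β ≠ 0 := by positivity
    field_simp; ring)

/-- The lattices spanned by the columns `(B^{-t}p^{-n}, B^t p^{-n} (v_n - c))` and
`(0, B^t p^n)`. -/
def latt (p B : ℕ) (vn : ℕ → ℤ) (c : ℝ) (t n : ℕ) : Set (ℝ × ℝ) :=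
  {x | ∃ q d : ℤ, x = ((q : ℝ) / ((B : ℝ) ^ t * (p : ℝ) ^ n),
    (B : ℝ) ^ t * (p : ℝ) ^ n * d + (B : ℝ) ^ t / (p : ℝ) ^ n * (vn n - c) * q)}

section Lattice

variable {p B : ℕ} {vn : ℕ → ℤ}

lemma latt_eq_image (hp : 2 ≤ p) (hB : 2 ≤ B) (c : ℝ) (t n : ℕ) :
    ∃ g : SL2R, latt p B vn c t n = act g '' Z2 := by
  have h1 : (B : ℝ) ^ t ≠ 0 := by positivity
  have h2 : (p : ℝ) ^ n ≠ 0 := by positivity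
  refine ⟨mkSL (((B : ℝ) ^ t * (p : ℝ) ^ n)⁻¹) 0 ((B : ℝ) ^ t / (p : ℝ) ^ n * (vn n - c))
    ((B : ℝ) ^ t * (p : ℝ) ^ n) (by field_simp; ring), ?_⟩
  ext x
  constructor
  · rintro ⟨q, d, rfl⟩
    refine ⟨(q, d), ⟨q, d, rfl⟩, ?_⟩
    ext <;> simp [act] <;> ring
  · rintro ⟨_, ⟨q, d, rfl⟩, rfl⟩
    refine ⟨q, d, ?_⟩
    ext <;> simp [act] <;> ring

lemma latt_move (hp : 2 ≤ p) (hB : 2 ≤ B) (c c' : ℝ) (t n : ℕ) :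
    latt p B vn c' t n = act (lowU ((c' - c) * (B : ℝ) ^ (2 * t))) '' latt p B vn c t n := by
  have h1 : (B : ℝ) ^ t ≠ 0 := by positivity
  have h2 : (p : ℝ) ^ n ≠ 0 := by positivity
  ext x
  constructor
  · rintro ⟨q, d, rfl⟩
    refine ⟨_, ⟨q, d, rfl⟩, ?_⟩
    ext
    · simp [act, lowU]
    · simp only [act, lowU, mkSL_10, mkSL_11]
      rw [pow_mul']
      field_simp; ring
  · rintro ⟨_, ⟨q, d, rfl⟩, rfl⟩
    refine ⟨q, d, ?_⟩
    ext
    · simp [act, lowU]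
    · simp only [act, lowU, mkSL_10, mkSL_11]
      rw [pow_mul']
      field_simp; ring

lemma latt_time (hp : 2 ≤ p) (hB : 2 ≤ B) (c : ℝ) (t β n : ℕ) :
    latt p B vn c t n = act (diagB B hB β) '' latt p B vn c (t + β) n := by
  have h1 : (B : ℝ) ^ t ≠ 0 := by positivity
  have h3 : (B : ℝ) ^ β ≠ 0 := by positivity
  have h2 : (p : ℝ) ^ n ≠ 0 := by positivity
  ext x
  constructor
  · rintro ⟨q, d, rfl⟩
    refine ⟨_, ⟨q, d, rfl⟩, ?_⟩
    ext
    · simp only [act, diagB, mkSL_00, mkSL_01, pow_add]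
      field_simp; ring
    · simp only [act, diagB, mkSL_10, mkSL_11, pow_add]
      field_simp; ring
  · rintro ⟨_, ⟨q, d, rfl⟩, rfl⟩
    refine ⟨q, d, ?_⟩
    ext
    · simp only [act, diagB, mkSL_00, mkSL_01, pow_add]
      field_simp; ring
    · simp only [act, diagB, mkSL_10, mkSL_11, pow_add]
      field_simp; ring

lemma image_Z2_sub (g : SL2R) {x y : ℝ × ℝ} (hx : x ∈ act g '' Z2) (hy : y ∈ act g '' Z2) :
    x - y ∈ act g '' Z2 := by
  obtain ⟨_, ⟨a, b, rfl⟩, rfl⟩ := hx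
  obtain ⟨_, ⟨c, d, rfl⟩, rfl⟩ := hy
  exact ⟨_, ⟨a - c, b - d, rfl⟩, by rw [← act_sub]; simp⟩

lemma image_Z2_zsmul (g : SL2R) {x : ℝ × ℝ} (hx : x ∈ act g '' Z2) (k : ℤ) :
    (k : ℝ) • x ∈ act g '' Z2 := by
  obtain ⟨_, ⟨a, b, rfl⟩, rfl⟩ := hx
  exact ⟨_, ⟨k * a, k * b, rfl⟩, by rw [← act_smul]; simp⟩

lemma latt_sub (hp : 2 ≤ p) (hB : 2 ≤ B) {c : ℝ} {t n : ℕ} {x y : ℝ × ℝ}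
    (hx : x ∈ latt p B vn c t n) (hy : y ∈ latt p B vn c t n) : x - y ∈ latt p B vn c t n := by
  obtain ⟨g, hg⟩ := latt_eq_image (vn := vn) hp hB c t n
  rw [hg] at hx hy ⊢
  exact image_Z2_sub g hx hy

lemma latt_zsmul (hp : 2 ≤ p) (hB : 2 ≤ B) {c : ℝ} {t n : ℕ} {x : ℝ × ℝ}
    (hx : x ∈ latt p B vn c t n) (k : ℤ) : (k : ℝ) • x ∈ latt p B vn c t n := by
  obtain ⟨g, hg⟩ := latt_eq_image (vn := vn) hp hB c t n
  rw [hg] at hx ⊢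
  exact image_Z2_zsmul g hx k

lemma vn_add (hv : ∀ n, ((p : ℤ) ^ (2 * n)) ∣ vn (n + 1) - vn n) (n j : ℕ) :
    ((p : ℤ) ^ (2 * n)) ∣ vn (n + j) - vn n := by
  induction j with
  | zero => simp
  | succ j ih =>
    have h := (pow_dvd_pow (p : ℤ) (by omega : 2 * n ≤ 2 * (n + j))).trans (hv (n + j))
    have := dvd_add h ih
    rwa [sub_add_sub_cancel] at this

lemma latt_down (hp : 2 ≤ p) (hB : 2 ≤ B) (hv : ∀ n, ((p : ℤ) ^ (2 * n)) ∣ vn (n + 1) - vn n)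
    {c : ℝ} {t n j : ℕ} {x : ℝ × ℝ} (hx : x ∈ latt p B vn c t (n + j)) :
    (p : ℝ) ^ j • x ∈ latt p B vn c t n := by
  have h1 : (B : ℝ) ^ t ≠ 0 := by positivity
  have h2 : (p : ℝ) ^ n ≠ 0 := by positivity
  have h3 : (p : ℝ) ^ j ≠ 0 := by positivity
  obtain ⟨q, d, rfl⟩ := hx
  obtain ⟨e, he⟩ := vn_add hv n j
  refine ⟨q, d * p ^ (2 * j) + e * q, ?_⟩
  have he' : (vn (n + j) : ℝ) = vn n + (p : ℝ) ^ (2 * n) * e := by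
    have : vn (n + j) = vn n + (p : ℤ) ^ (2 * n) * e := by linarith
    rw [this]; push_cast; ring
  rw [he']
  ext
  · simp [pow_add]; field_simp
  · simp [pow_add, two_mul]; field_simp; ring

lemma latt_up (hp : 2 ≤ p) (hB : 2 ≤ B) (hv : ∀ n, ((p : ℤ) ^ (2 * n)) ∣ vn (n + 1) - vn n)
    {c : ℝ} {t n j : ℕ} {x : ℝ × ℝ} (hx : x ∈ latt p B vn c t n) :
    (p : ℝ) ^ j • x ∈ latt p B vn c t (n + j) := by
  have h1 : (B : ℝ) ^ t ≠ 0 := by positivity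
  have h2 : (p : ℝ) ^ n ≠ 0 := by positivity
  have h3 : (p : ℝ) ^ j ≠ 0 := by positivity
  obtain ⟨q, d, rfl⟩ := hx
  obtain ⟨e, he⟩ := vn_add hv n j
  refine ⟨q * p ^ (2 * j), d - e * q, ?_⟩
  have he' : (vn (n + j) : ℝ) = vn n + (p : ℝ) ^ (2 * n) * e := by
    have : vn (n + j) = vn n + (p : ℤ) ^ (2 * n) * e := by linarith
    rw [this]; push_cast; ring
  rw [he']
  ext
  · simp [pow_add, two_mul]; field_simp
  · simp [pow_add, two_mul]; field_simp; ring

end Lattice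

/-- Nonzero vectors of `Λ` have coordinate product at least `ε` or second coordinate at
least `Θ`. -/
def Fat (ε Θ : ℝ) (Λ : Set (ℝ × ℝ)) : Prop :=
  ∀ x ∈ Λ, x ≠ 0 → ε ≤ |x.1 * x.2| ∨ Θ ≤ |x.2|

section Lattice

variable {p B : ℕ} {vn : ℕ → ℤ}

lemma image_Z2_of_int (a b c d : ℤ) (h : a * d - b * c = 1) :
    act (mkSL a b c d (by exact_mod_cast h)) '' Z2 = Z2 := by
  ext x
  constructor
  · rintro ⟨_, ⟨m, n, rfl⟩, rfl⟩
    exact ⟨a * m + b * n, c * m + d * n, by simp [act]⟩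
  · rintro ⟨m, n, rfl⟩
    refine ⟨_, ⟨d * m - b * n, - c * m + a * n, rfl⟩, ?_⟩
    have h' : (a : ℝ) * d - b * c = 1 := by exact_mod_cast h
    ext
    · simp [act]; linear_combination (m : ℝ) * h'
    · simp [act]; linear_combination (n : ℝ) * h'

lemma exists_bounded_basis (g : SL2R) {q d : ℤ} (hqd : IsCoprime q d) {ρ : ℝ} (hρ : 0 < ρ)
    (h1 : |(act g (q, d)).1| ≤ 1) (h2 : |(act g (q, d)).2| ≤ 1)
    (h3 : ρ ≤ (act g (q, d)).1 ^ 2 + (act g (q, d)).2 ^ 2) :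
    ∃ g' : SL2R, act g' '' Z2 = act g '' Z2 ∧ EntriesLE (1 + 1 / ρ) g' := by
  obtain ⟨u, w, huw⟩ := hqd
  set γ : SL2R := mkSL q (-w : ℤ) d u (by
    have : (u : ℝ) * q + w * d = 1 := by exact_mod_cast huw
    push_cast; linarith) with hγ
  have hγZ : act γ '' Z2 = Z2 := image_Z2_of_int q (-w) d u (by linarith)
  set e := act g (q, d) with he
  set x : ℝ := ((g * γ) 0 1 * e.1 + (g * γ) 1 1 * e.2) / (e.1 ^ 2 + e.2 ^ 2) with hx
  set k : ℤ := - round x with hk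
  set ν : SL2R := mkSL (1 : ℤ) k (0 : ℤ) (1 : ℤ) (by simp) with hν
  have hνZ : act ν '' Z2 = Z2 := image_Z2_of_int 1 k 0 1 (by simp)
  refine ⟨g * γ * ν, ?_, ?_⟩
  · rw [image_act_mul, image_act_mul, hνZ, hγZ]
  have hpos : 0 < e.1 ^ 2 + e.2 ^ 2 := lt_of_lt_of_le hρ h3
  have c00 : (g * γ) 0 0 = e.1 := by
    rw [SL2R_mul_00]; simp [hγ, he, act]
  have c10 : (g * γ) 1 0 = e.2 := by
    rw [SL2R_mul_10]; simp [hγ, he, act]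
  have hdet := SL2R_det (g * γ)
  rw [c00, c10] at hdet
  have d00 : (g * γ * ν) 0 0 = e.1 := by
    rw [SL2R_mul_00, c00]; simp [hν]
  have d10 : (g * γ * ν) 1 0 = e.2 := by
    rw [SL2R_mul_10, c10]; simp [hν]
  have hxk : |x + k| ≤ 1 / 2 := by
    have := abs_sub_round x
    rw [hk]; push_cast; rwa [← sub_eq_add_neg]
  have d01 : (g * γ * ν) 0 1 = (x + k) * e.1 - e.2 / (e.1 ^ 2 + e.2 ^ 2) := by
    rw [SL2R_mul_01, c00]; simp only [hν, mkSL_01, mkSL_11, Int.cast_one]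
    rw [hx]; field_simp; linear_combination (-e.2) * hdet
  have d11 : (g * γ * ν) 1 1 = (x + k) * e.2 + e.1 / (e.1 ^ 2 + e.2 ^ 2) := by
    rw [SL2R_mul_11, c10]; simp only [hν, mkSL_01, mkSL_11, Int.cast_one]
    rw [hx]; field_simp; linear_combination (e.1) * hdet
  have hρ' : 0 < 1 / ρ := by positivity
  have key : ∀ y : ℝ, |y| ≤ 1 → |y / (e.1 ^ 2 + e.2 ^ 2)| ≤ 1 / ρ := by
    intro y hy
    rw [abs_div, abs_of_pos hpos]
    exact div_le_div₀ zero_le_one hy hρ h3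
  have key2 : ∀ y : ℝ, |y| ≤ 1 → |(x + k) * y| ≤ 1 := by
    intro y hy
    rw [abs_mul]
    nlinarith [abs_nonneg (x + k), abs_nonneg y]
  refine ⟨by rw [d00]; linarith, ?_, by rw [d10]; linarith, ?_⟩
  · rw [d01]
    exact (abs_sub _ _).trans (add_le_add (key2 _ h1) (key _ h2))
  · rw [d11]
    exact (abs_add_le _ _).trans (add_le_add (key2 _ h2) (key _ h1))

lemma latt_dirichlet (hp : 2 ≤ p) (hB : 2 ≤ B) (c : ℝ) (t n : ℕ) {l : ℝ} (hl : 0 < l)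
    (h : 1 ≤ l * ((B : ℝ) ^ t * (p : ℝ) ^ n)) :
    ∃ q d : ℤ, 0 < q ∧ (q : ℝ) / ((B : ℝ) ^ t * (p : ℝ) ^ n) ≤ l ∧
      |(B : ℝ) ^ t * (p : ℝ) ^ n * d + (B : ℝ) ^ t / (p : ℝ) ^ n * (vn n - c) * q| ≤ 1 / l := by
  have h1 : 0 < (B : ℝ) ^ t := by positivity
  have h2 : 0 < (p : ℝ) ^ n := by positivity
  have hN : 0 < ⌊l * ((B : ℝ) ^ t * (p : ℝ) ^ n)⌋₊ := Nat.floor_pos.2 h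
  obtain ⟨j, k, hk, hk2, hjk⟩ :=
    Real.exists_int_int_abs_mul_sub_le ((vn n - c) / ((p : ℝ) ^ n) ^ 2) hN
  refine ⟨k, -j, hk, ?_, ?_⟩
  · rw [div_le_iff₀ (by positivity)]
    calc (k : ℝ) ≤ ⌊l * ((B : ℝ) ^ t * (p : ℝ) ^ n)⌋₊ := by exact_mod_cast hk2
      _ ≤ _ := Nat.floor_le (by positivity)
  · have : (B : ℝ) ^ t * (p : ℝ) ^ n * (-j : ℤ) + (B : ℝ) ^ t / (p : ℝ) ^ n * (vn n - c) * k
        = (B : ℝ) ^ t * (p : ℝ) ^ n * (k * ((vn n - c) / ((p : ℝ) ^ n) ^ 2) - j) := by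
      push_cast; field_simp; ring
    rw [this, abs_mul, abs_of_pos (by positivity : (0 : ℝ) < (B : ℝ) ^ t * (p : ℝ) ^ n)]
    have hlt := (Nat.lt_floor_add_one (l * ((B : ℝ) ^ t * (p : ℝ) ^ n))).le
    calc (B : ℝ) ^ t * (p : ℝ) ^ n * |k * ((vn n - c) / ((p : ℝ) ^ n) ^ 2) - j|
        ≤ (B : ℝ) ^ t * (p : ℝ) ^ n * (1 / (l * ((B : ℝ) ^ t * (p : ℝ) ^ n))) := by
          gcongr
          exact hjk.trans (by gcongr)
      _ = 1 / l := by field_simp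

lemma latt_basis (hp : 2 ≤ p) (hB : 2 ≤ B) (c : ℝ) (t n : ℕ) {ε Θ : ℝ} (hε : 0 < ε)
    (hΘ : 1 < Θ) (hF : Fat ε Θ (latt p B vn c t n)) :
    ∃ g : SL2R, latt p B vn c t n = act g '' Z2 ∧ EntriesLE (1 + 1 / ε) g := by
  have h1 : 0 < (B : ℝ) ^ t := by positivity
  have h2 : 0 < (p : ℝ) ^ n := by positivity
  have hB1 : (1 : ℝ) ≤ (B : ℝ) ^ t := one_le_pow₀ (by exact_mod_cast (by omega : 1 ≤ B))
  have hp1 : (1 : ℝ) ≤ (p : ℝ) ^ n := one_le_pow₀ (by exact_mod_cast (by omega : 1 ≤ p))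
  obtain ⟨q0, d0, hq0, hA, hD⟩ := latt_dirichlet (vn := vn) hp hB c t n one_pos (by nlinarith)
  have hg0 : 0 < (Int.gcd q0 d0) := Int.gcd_pos_of_ne_zero_left _ hq0.ne'
  obtain ⟨q, hq⟩ := Int.gcd_dvd_left q0 d0
  obtain ⟨d, hd⟩ := Int.gcd_dvd_right q0 d0
  set m := Int.gcd q0 d0 with hm
  have hm1 : (1 : ℝ) ≤ m := by exact_mod_cast hg0
  have hcop : IsCoprime q d := by
    rw [Int.isCoprime_iff_gcd_eq_one]
    have : Int.gcd (m * q) (m * d) = m := by rw [← hq, ← hd]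
    rw [Int.gcd_mul_left, Int.natAbs_natCast] at this
    exact Nat.eq_of_mul_eq_mul_left hg0 (by omega)
  have hq0' : (q0 : ℝ) = m * q := by rw [hq]; push_cast; ring
  have hd0' : (d0 : ℝ) = m * d := by rw [hd]; push_cast; ring
  have hqpos : 0 < q := by
    by_contra hcon
    push Not at hcon
    have : q0 ≤ 0 := by rw [hq]; exact mul_nonpos_of_nonneg_of_nonpos (by positivity) hcon
    omega
  have hqp : (0 : ℝ) < q := by exact_mod_cast hqpos
  set g0 : SL2R := mkSL (((B : ℝ) ^ t * (p : ℝ) ^ n)⁻¹) 0 ((B : ℝ) ^ t / (p : ℝ) ^ n * (vn n - c))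
    ((B : ℝ) ^ t * (p : ℝ) ^ n) (by field_simp; ring) with hg₀
  have hgL : latt p B vn c t n = act g0 '' Z2 := by
    ext x
    constructor
    · rintro ⟨q, d, rfl⟩
      refine ⟨(q, d), ⟨q, d, rfl⟩, ?_⟩
      ext <;> simp [act, hg₀] <;> ring
    · rintro ⟨_, ⟨q, d, rfl⟩, rfl⟩
      refine ⟨q, d, ?_⟩
      ext <;> simp [act, hg₀] <;> ring
  have e1 : (act g0 (q, d)).1 = q / ((B : ℝ) ^ t * (p : ℝ) ^ n) := by
    simp [act, hg₀]; ring
  have e2 : (act g0 (q, d)).2 = (B : ℝ) ^ t * (p : ℝ) ^ n * d +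
      (B : ℝ) ^ t / (p : ℝ) ^ n * (vn n - c) * q := by
    simp [act, hg₀]; ring
  have a1 : |(act g0 (q, d)).1| ≤ 1 := by
    rw [e1, abs_of_pos (by positivity)]
    refine le_trans ?_ hA
    have : (q : ℝ) ≤ q0 := by rw [hq0']; nlinarith
    exact div_le_div_of_nonneg_right this (by positivity)
  have a2 : |(act g0 (q, d)).2| ≤ 1 := by
    rw [e2]
    have : (B : ℝ) ^ t * (p : ℝ) ^ n * d0 + (B : ℝ) ^ t / (p : ℝ) ^ n * (vn n - c) * q0
      = m * ((B : ℝ) ^ t * (p : ℝ) ^ n * d + (B : ℝ) ^ t / (p : ℝ) ^ n * (vn n - c) * q) := by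
      rw [hq0', hd0']; ring
    rw [this, abs_mul, abs_of_pos (by linarith : (0 : ℝ) < m), div_one] at hD
    nlinarith [abs_nonneg ((B : ℝ) ^ t * (p : ℝ) ^ n * d +
      (B : ℝ) ^ t / (p : ℝ) ^ n * (vn n - c) * q)]
  have hmem : act g0 (q, d) ∈ latt p B vn c t n := by
    rw [hgL]; exact ⟨_, ⟨q, d, rfl⟩, rfl⟩
  have hne : act g0 (q, d) ≠ 0 := by
    intro h0
    have : (act g0 (q, d)).1 = 0 := by rw [h0]; rfl
    rw [e1] at this
    have h3 : (0 : ℝ) < q / ((B : ℝ) ^ t * (p : ℝ) ^ n) := by positivity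
    linarith
  have hprod : ε ≤ |(act g0 (q, d)).1 * (act g0 (q, d)).2| := by
    rcases hF _ hmem hne with h | h
    · exact h
    · linarith
  obtain ⟨g', hg', hC⟩ := exists_bounded_basis g0 hcop (ρ := ε) hε a1 a2 (by
    refine hprod.trans ?_
    rw [abs_mul]
    nlinarith [sq_abs (act g0 (q, d)).1, sq_abs (act g0 (q, d)).2,
      sq_nonneg (|(act g0 (q, d)).1| - |(act g0 (q, d)).2|),
      sq_nonneg (|(act g0 (q, d)).1|), sq_nonneg (|(act g0 (q, d)).2|)])
  exact ⟨g', hgL.trans hg'.symm, hC⟩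

lemma latt_ne (hp : 2 ≤ p) (hB : 2 ≤ B) (c : ℝ) (t : ℕ) {n m : ℕ} (hnm : n < m) :
    latt p B vn c t m ≠ latt p B vn c t n := by
  have h1 : 0 < (B : ℝ) ^ t := by positivity
  have h2 : 0 < (p : ℝ) ^ n := by positivity
  have h3 : 0 < (p : ℝ) ^ m := by positivity
  intro h
  have hx : ((0 : ℝ), (B : ℝ) ^ t * (p : ℝ) ^ n) ∈ latt p B vn c t n := ⟨0, 1, by simp⟩
  rw [← h] at hx
  obtain ⟨q, d, hqd⟩ := hx
  rw [Prod.mk.injEq] at hqd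
  obtain ⟨e1, e2⟩ := hqd
  have hq : (q : ℝ) = 0 := by
    rcases div_eq_zero_iff.1 e1.symm with h | h
    · exact h
    · exact absurd h (by positivity)
  rw [hq] at e2
  have e3 : (p : ℝ) ^ n = (p : ℝ) ^ m * d := by
    have : (B : ℝ) ^ t * (p : ℝ) ^ n = (B : ℝ) ^ t * ((p : ℝ) ^ m * d) := by linarith
    exact mul_left_cancel₀ h1.ne' this
  have e4 : (p : ℤ) ^ n = (p : ℤ) ^ m * d := by exact_mod_cast e3
  have : (p : ℤ) ^ m ≤ (p : ℤ) ^ n := Int.le_of_dvd (by positivity) ⟨d, e4⟩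
  have h5 : (p : ℤ) ^ n < (p : ℤ) ^ m := pow_lt_pow_right₀ (by exact_mod_cast hp) hnm
  omega

lemma latt_nondeg (hp : 2 ≤ p) (hB : 2 ≤ B) (hv : ∀ n, ((p : ℤ) ^ (2 * n)) ∣ vn (n + 1) - vn n)
    (c : ℝ) (t : ℕ) {n m N : ℕ} (hnm : n < m) (hmN : m ≤ n + N) {ε Θ C : ℝ} (hε : 0 < ε)
    (hC : 0 < C) (hΘ : 2 * C * (p : ℝ) ^ N < Θ) (hF : Fat ε Θ (latt p B vn c t n))
    {g : SL2R} (hg : latt p B vn c t n = act g '' Z2) (hgC : EntriesLE C g)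
    {h : SL2R} (hh : NearOne 1 h) (hmap : latt p B vn c t m = act h '' latt p B vn c t n) :
    ε / (4 * C ^ 2 * (p : ℝ) ^ (2 * N)) ≤ |h 1 1 - h 0 0| + |h 0 1| := by
  obtain ⟨k, rfl⟩ : ∃ k, m = n + k := ⟨m - n, by omega⟩
  have hpk : 0 < (p : ℝ) ^ k := by positivity
  have hpN : 0 < (p : ℝ) ^ N := by positivity
  have hkN : (p : ℝ) ^ k ≤ (p : ℝ) ^ N :=
    pow_le_pow_right₀ (by exact_mod_cast (by omega : 1 ≤ p)) (by omega)
  obtain ⟨a00, a01, a10, a11⟩ := hgC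
  obtain ⟨b00, b01, b10, b11⟩ := hh
  have main : ∀ x ∈ latt p B vn c t n, |x.1| ≤ C → |x.2| ≤ C → act h x ≠ x →
      ε / (2 * C ^ 2 * (p : ℝ) ^ (2 * N)) ≤ |h 0 0 - 1| + |h 0 1| := by
    intro x hx hx1 hx2 hne
    have hmem : (p : ℝ) ^ k • (act h x - x) ∈ latt p B vn c t n := by
      rw [smul_sub]
      refine latt_sub hp hB (latt_down hp hB hv ?_) ?_
      · rw [hmap]; exact ⟨x, hx, rfl⟩
      · have := latt_zsmul hp hB hx ((p : ℤ) ^ k)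
        simpa using this
    have hne' : (p : ℝ) ^ k • (act h x - x) ≠ 0 := by
      rw [Ne, smul_eq_zero, not_or]
      exact ⟨hpk.ne', sub_ne_zero.2 hne⟩
    set y := (p : ℝ) ^ k • (act h x - x) with hy
    have y1 : y.1 = (p : ℝ) ^ k * ((h 0 0 - 1) * x.1 + h 0 1 * x.2) := by
      simp only [hy, act, Prod.smul_fst, Prod.fst_sub, smul_eq_mul]; ring
    have y2 : y.2 = (p : ℝ) ^ k * (h 1 0 * x.1 + (h 1 1 - 1) * x.2) := by
      simp only [hy, act, Prod.smul_snd, Prod.snd_sub, smul_eq_mul]; ring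
    have y2le : |y.2| ≤ (p : ℝ) ^ N * (2 * C) := by
      rw [y2, abs_mul, abs_of_pos hpk]
      apply mul_le_mul hkN _ (abs_nonneg _) hpN.le
      refine (abs_add_le _ _).trans ?_
      rw [abs_mul, abs_mul]
      nlinarith [abs_nonneg x.1, abs_nonneg x.2]
    have y1le : |y.1| ≤ (p : ℝ) ^ N * (C * (|h 0 0 - 1| + |h 0 1|)) := by
      rw [y1, abs_mul, abs_of_pos hpk]
      apply mul_le_mul hkN _ (abs_nonneg _) hpN.le
      refine (abs_add_le _ _).trans ?_
      rw [abs_mul, abs_mul]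
      nlinarith [abs_nonneg x.1, abs_nonneg x.2, abs_nonneg (h 0 0 - 1), abs_nonneg (h 0 1)]
    have hprod : ε ≤ |y.1 * y.2| := by
      rcases hF y hmem hne' with h | h
      · exact h
      · exfalso; linarith
    rw [abs_mul] at hprod
    rw [div_le_iff₀ (by positivity)]
    calc ε ≤ |y.1| * |y.2| := hprod
      _ ≤ ((p : ℝ) ^ N * (C * (|h 0 0 - 1| + |h 0 1|))) * ((p : ℝ) ^ N * (2 * C)) := by
          gcongr
      _ = _ := by rw [two_mul N, pow_add]; ring
  have hpi : ε / (2 * C ^ 2 * (p : ℝ) ^ (2 * N)) ≤ |h 0 0 - 1| + |h 0 1| := by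
    by_cases hc1 : act h (act g (1, 0)) = act g (1, 0)
    · by_cases hc2 : act h (act g (0, 1)) = act g (0, 1)
      · exfalso
        refine latt_ne (vn := vn) hp hB c t hnm ?_
        rw [hmap, hg, ← image_act_mul]
        have : h * g = g := by
          rw [← act_mul] at hc1 hc2
          simp only [act, mul_one, mul_zero, add_zero, zero_add, Prod.mk.injEq] at hc1 hc2
          exact SL2R_ext hc1.1 hc2.1 hc1.2 hc2.2
        rw [this]
      · refine main _ ?_ ?_ ?_ hc2
        · rw [hg]; exact ⟨_, ⟨0, 1, by simp⟩, rfl⟩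
        · simpa [act] using a01
        · simpa [act] using a11
    · refine main _ ?_ ?_ ?_ hc1
      · rw [hg]; exact ⟨_, ⟨1, 0, by simp⟩, rfl⟩
      · simpa [act] using a00
      · simpa [act] using a10
  have hdet := SL2R_det h
  have hA : |h 0 0 - 1| ≤ |h 0 1| + 2 * |h 1 1 - h 0 0| := by
    have e : (h 0 0 - 1) * (h 0 0 + 1) = h 0 1 * h 1 0 - (h 1 1 - h 0 0) * h 0 0 := by
      linear_combination hdet
    have l1 : |h 0 0 - 1| * |h 0 0 + 1| ≤ |h 0 1| * |h 1 0| + |h 1 1 - h 0 0| * |h 0 0| := by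
      rw [← abs_mul, e, ← abs_mul, ← abs_mul]; exact abs_sub _ _
    have l2 : 1 ≤ |h 0 0 + 1| := by
      have := abs_le.1 b00
      rw [abs_of_nonneg] <;> linarith
    have l3 : |h 0 0| ≤ 2 := by
      have := abs_le.1 b00
      rw [abs_le]; constructor <;> linarith
    nlinarith [abs_nonneg (h 0 0 - 1), abs_nonneg (h 0 1), abs_nonneg (h 1 1 - h 0 0)]
  have : ε / (4 * C ^ 2 * (p : ℝ) ^ (2 * N)) = ε / (2 * C ^ 2 * (p : ℝ) ^ (2 * N)) / 2 := by
    field_simp; ring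
  rw [this]
  linarith

end Lattice

/-- A sequence of plane lattices in which neighbours are commensurable up to powers of `p`. -/
structure LatSeq (p : ℕ) (Λ : ℕ → Set (ℝ × ℝ)) : Prop where
  sub : ∀ n x y, x ∈ Λ n → y ∈ Λ n → x - y ∈ Λ n
  zsmul : ∀ n x (k : ℤ), x ∈ Λ n → (k : ℝ) • x ∈ Λ n
  down : ∀ n j x, x ∈ Λ (n + j) → (p : ℝ) ^ j • x ∈ Λ n
  up : ∀ n j x, x ∈ Λ n → (p : ℝ) ^ j • x ∈ Λ (n + j)

lemma latt_latSeq {p B : ℕ} {vn : ℕ → ℤ} (hp : 2 ≤ p) (hB : 2 ≤ B)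
    (hv : ∀ n, ((p : ℤ) ^ (2 * n)) ∣ vn (n + 1) - vn n) (c : ℝ) (t : ℕ) :
    LatSeq p (latt p B vn c t) where
  sub _ _ _ hx hy := latt_sub hp hB hx hy
  zsmul _ _ k hx := latt_zsmul hp hB hx k
  down _ _ _ hx := latt_down hp hB hv hx
  up _ _ _ hx := latt_up hp hB hv hx

/-- Residues modulo `p ^ (2 * kk)` of the coordinates, in the basis `g`, of the vectors of
`p ^ j Λ`. -/
def resSet (p kk : ℕ) (g : SL2R) (j : ℕ) (Λ : Set (ℝ × ℝ)) :
    Set (ZMod (p ^ (2 * kk)) × ZMod (p ^ (2 * kk))) :=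
  {z | ∃ a b : ℤ, z = ((a : ZMod _), (b : ZMod _)) ∧
    ∃ y ∈ Λ, act g ((a : ℝ), (b : ℝ)) = (p : ℝ) ^ j • y}

lemma image_subset_of_resSet {p kk : ℕ} (hp : 2 ≤ p) {Λ : ℕ → Set (ℝ × ℝ)} (hΛ : LatSeq p Λ)
    {n m j : ℕ} (hj : j ≤ kk) {g g' : SL2R} (hg : Λ n = act g '' Z2) (hg' : Λ m = act g' '' Z2)
    (hres : resSet p kk g j (Λ (n + j)) = resSet p kk g' j (Λ (m + j))) {x : ℝ × ℝ}
    (hx : x ∈ Λ (n + j)) : act (g' * g⁻¹) x ∈ Λ (m + j) := by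
  have hpj : (p : ℝ) ^ j ≠ 0 := by positivity
  have h1 := hΛ.down n j x hx
  rw [hg] at h1
  obtain ⟨_, ⟨a, b, rfl⟩, hab⟩ := h1
  have hmem : ((a : ZMod (p ^ (2 * kk))), (b : ZMod (p ^ (2 * kk)))) ∈
      resSet p kk g j (Λ (n + j)) := ⟨a, b, rfl, x, hx, hab⟩
  rw [hres] at hmem
  obtain ⟨a', b', hz, y, hy, hy'⟩ := hmem
  rw [Prod.mk.injEq, ZMod.intCast_eq_intCast_iff_dvd_sub,
    ZMod.intCast_eq_intCast_iff_dvd_sub] at hz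
  obtain ⟨⟨u, hu⟩, ⟨w, hw⟩⟩ := hz
  have hu' : (a : ℝ) = a' - (p : ℝ) ^ (2 * kk) * u := by
    have : a = a' - ((p ^ (2 * kk) : ℕ) : ℤ) * u := by linarith
    rw [this]; push_cast; ring
  have hw' : (b : ℝ) = b' - (p : ℝ) ^ (2 * kk) * w := by
    have : b = b' - ((p ^ (2 * kk) : ℕ) : ℤ) * w := by linarith
    rw [this]; push_cast; ring
  have hz : act g' ((u : ℝ), (w : ℝ)) ∈ Λ m := by rw [hg']; exact ⟨_, ⟨u, w, rfl⟩, rfl⟩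
  have hz2 := hΛ.zsmul _ _ ((p : ℤ) ^ (2 * (kk - j))) (hΛ.up m j _ hz)
  have key : act (g' * g⁻¹) x
      = y - (((p : ℤ) ^ (2 * (kk - j)) : ℤ) : ℝ) • (p : ℝ) ^ j • act g' ((u : ℝ), (w : ℝ)) := by
    have hinj : Function.Injective (fun z : ℝ × ℝ => (p : ℝ) ^ j • z) :=
      smul_right_injective _ hpj
    apply hinj
    simp only
    rw [← act_smul, ← hab, act_mul, act_inv_act, smul_sub, ← hy', smul_smul, smul_smul, hu', hw']
    have hpow : (p : ℝ) ^ j * ((((p : ℤ) ^ (2 * (kk - j)) : ℤ) : ℝ) * (p : ℝ) ^ j)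
        = (p : ℝ) ^ (2 * kk) := by
      push_cast
      rw [← pow_add, ← pow_add]; congr 1; omega
    rw [← mul_assoc] at hpow
    rw [hpow, ← act_smul, ← act_sub]
    rfl
  rw [key]
  exact hΛ.sub _ _ _ hy hz2

lemma exists_near_return (p : ℕ) (hp : 2 ≤ p) (C r : ℝ) (hC : 0 < C) (hr : 0 < r) (kk : ℕ) :
    ∃ N0 : ℕ, ∀ Λ : ℕ → Set (ℝ × ℝ), LatSeq p Λ → ∀ K : Finset ℕ, N0 < K.card →
      (∀ n ∈ K, ∃ g : SL2R, Λ n = act g '' Z2 ∧ EntriesLE C g) →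
      ∃ n ∈ K, ∃ m ∈ K, n < m ∧ ∃ h : SL2R, NearOne r h ∧
        ∀ j ≤ kk, Λ (m + j) = act h '' Λ (n + j) := by
  classical
  set ρ : ℝ := r / (2 * C) with hρ
  have hρ0 : 0 < ρ := by positivity
  set A : ℤ := ⌈C / ρ⌉ + 1 with hA
  have : NeZero (p ^ (2 * kk)) := ⟨by positivity⟩
  let Col := (Fin 4 → Set.Icc (-A) A) ×
    (Fin (kk + 1) → Set (ZMod (p ^ (2 * kk)) × ZMod (p ^ (2 * kk))))
  have : Finite Col := inferInstance
  have : Fintype Col := Fintype.ofFinite _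
  refine ⟨Fintype.card Col, fun Λ hΛ K hK hb => ?_⟩
  choose! g hg hgC using hb
  have hfl : ∀ y : ℝ, |y| ≤ C → ⌊y / ρ⌋ ∈ Set.Icc (-A) A := by
    intro y hy
    rw [abs_le] at hy
    have hc : C / ρ ≤ ⌈C / ρ⌉ := Int.le_ceil _
    constructor
    · rw [Int.le_floor]
      have : -(C / ρ) ≤ y / ρ := by rw [← neg_div]; gcongr; exact hy.1
      push_cast [hA]; linarith
    · have h1 : (⌊y / ρ⌋ : ℝ) ≤ y / ρ := Int.floor_le _
      have h2 : y / ρ ≤ C / ρ := by gcongr; exact hy.2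
      have h3 : (⌊y / ρ⌋ : ℝ) ≤ (⌈C / ρ⌉ : ℝ) := by linarith
      have h4 : ⌊y / ρ⌋ ≤ ⌈C / ρ⌉ := by exact_mod_cast h3
      omega
  let col : K → Col := fun n =>
    (![⟨⌊g n 0 0 / ρ⌋, hfl _ (hgC n n.2).1⟩, ⟨⌊g n 0 1 / ρ⌋, hfl _ (hgC n n.2).2.1⟩,
      ⟨⌊g n 1 0 / ρ⌋, hfl _ (hgC n n.2).2.2.1⟩, ⟨⌊g n 1 1 / ρ⌋, hfl _ (hgC n n.2).2.2.2⟩],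
      fun j => resSet p kk (g n) j (Λ (n + j)))
  obtain ⟨n, m, hnm, hcol⟩ := Fintype.exists_ne_map_eq_of_card_lt col (by simpa using hK)
  wlog hlt : (n : ℕ) < m generalizing n m
  · exact this m n hnm.symm hcol.symm
      (lt_of_le_of_ne (not_lt.1 hlt) fun h => hnm (Subtype.ext h.symm))
  refine ⟨n, n.2, m, m.2, hlt, g m * (g n)⁻¹, ?_, ?_⟩
  · have h1 := congrArg Prod.fst hcol
    have e0 : ⌊g n 0 0 / ρ⌋ = ⌊g m 0 0 / ρ⌋ := congrArg Subtype.val (congrFun h1 0)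
    have e1 : ⌊g n 0 1 / ρ⌋ = ⌊g m 0 1 / ρ⌋ := congrArg Subtype.val (congrFun h1 1)
    have e2 : ⌊g n 1 0 / ρ⌋ = ⌊g m 1 0 / ρ⌋ := congrArg Subtype.val (congrFun h1 2)
    have e3 : ⌊g n 1 1 / ρ⌋ = ⌊g m 1 1 / ρ⌋ := congrArg Subtype.val (congrFun h1 3)
    have hd : ∀ y z : ℝ, ⌊y / ρ⌋ = ⌊z / ρ⌋ → |z - y| ≤ ρ := by
      intro y z h
      have := Int.abs_sub_lt_one_of_floor_eq_floor h.symm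
      rw [← sub_div, abs_div, abs_of_pos hρ0, div_lt_one hρ0] at this
      exact this.le
    have d0 := hd _ _ e0
    have d1 := hd _ _ e1
    have d2 := hd _ _ e2
    have d3 := hd _ _ e3
    obtain ⟨a00, a01, a10, a11⟩ := hgC n n.2
    have hdet := SL2R_det (g n)
    have hρC : ρ * C + ρ * C = r := by rw [hρ]; field_simp; ring
    have two : ∀ a b c d : ℝ, |a| ≤ ρ → |b| ≤ C → |c| ≤ ρ → |d| ≤ C → |a * b + c * d| ≤ r := by
      intro a b c d h1 h2 h3 h4
      rw [← hρC]
      refine (abs_add_le _ _).trans ?_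
      rw [abs_mul, abs_mul]
      exact add_le_add (mul_le_mul h1 h2 (abs_nonneg _) hρ0.le)
        (mul_le_mul h3 h4 (abs_nonneg _) hρ0.le)
    refine ⟨?_, ?_, ?_, ?_⟩
    · rw [SL2R_mul_00, SL2R_inv_00, SL2R_inv_10]
      rw [show g m 0 0 * g n 1 1 + g m 0 1 * -g n 1 0 - 1
        = (g m 0 0 - g n 0 0) * g n 1 1 + (g m 0 1 - g n 0 1) * (-g n 1 0) by
          linear_combination hdet]
      exact two _ _ _ _ d0 a11 d1 (by rwa [abs_neg])
    · rw [SL2R_mul_01, SL2R_inv_01, SL2R_inv_11]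
      rw [show g m 0 0 * -g n 0 1 + g m 0 1 * g n 0 0
        = (g m 0 0 - g n 0 0) * (-g n 0 1) + (g m 0 1 - g n 0 1) * (g n 0 0) by ring]
      exact two _ _ _ _ d0 (by rwa [abs_neg]) d1 a00
    · rw [SL2R_mul_10, SL2R_inv_00, SL2R_inv_10]
      rw [show g m 1 0 * g n 1 1 + g m 1 1 * -g n 1 0
        = (g m 1 0 - g n 1 0) * g n 1 1 + (g m 1 1 - g n 1 1) * (-g n 1 0) by ring]
      exact two _ _ _ _ d2 a11 d3 (by rwa [abs_neg])
    · rw [SL2R_mul_11, SL2R_inv_01, SL2R_inv_11]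
      rw [show g m 1 0 * -g n 0 1 + g m 1 1 * g n 0 0 - 1
        = (g m 1 0 - g n 1 0) * (-g n 0 1) + (g m 1 1 - g n 1 1) * (g n 0 0) by
          linear_combination hdet]
      exact two _ _ _ _ d2 (by rwa [abs_neg]) d3 a00
  · intro j hj
    have hres : resSet p kk (g n) j (Λ (n + j)) = resSet p kk (g m) j (Λ (m + j)) :=
      congrFun (congrArg Prod.snd hcol) ⟨j, by omega⟩
    apply Set.Subset.antisymm
    · intro y hy
      refine ⟨act (g n * (g m)⁻¹) y,
        image_subset_of_resSet hp hΛ hj (hg m m.2) (hg n n.2) hres.symm hy, ?_⟩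
      rw [← act_mul]
      simp [act_one, mul_assoc]
    · rintro _ ⟨x, hx, rfl⟩
      exact image_subset_of_resSet hp hΛ hj (hg n n.2) (hg m m.2) hres hx

lemma NearOne.mono {r r' : ℝ} (h : r ≤ r') {g : SL2R} (hg : NearOne r g) : NearOne r' g :=
  ⟨hg.1.trans h, hg.2.1.trans h, hg.2.2.1.trans h, hg.2.2.2.trans h⟩

lemma NearOne.norm_act_sub_le {r : ℝ} {g : SL2R} (hg : NearOne r g) (x : ℝ × ℝ) :
    ‖act g x - x‖ ≤ 2 * r * ‖x‖ := by
  obtain ⟨h0, h1, h2, h3⟩ := hg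
  have x1 : |x.1| ≤ ‖x‖ := norm_fst_le x
  have x2 : |x.2| ≤ ‖x‖ := norm_snd_le x
  have two : ∀ a b : ℝ, |a| ≤ r → |b| ≤ r → |a * x.1 + b * x.2| ≤ 2 * r * ‖x‖ := by
    intro a b ha hb
    refine (abs_add_le _ _).trans ?_
    rw [abs_mul, abs_mul]
    nlinarith [abs_nonneg a, abs_nonneg b, abs_nonneg x.1, abs_nonneg x.2]
  rw [Prod.norm_def, sup_le_iff]
  constructor
  · rw [show (act g x - x).1 = (g 0 0 - 1) * x.1 + g 0 1 * x.2 by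
      simp only [act, Prod.fst_sub]; ring]
    exact two _ _ h0 h1
  · rw [show (act g x - x).2 = g 1 0 * x.1 + (g 1 1 - 1) * x.2 by
      simp only [act, Prod.snd_sub]; ring]
    exact two _ _ h2 h3

/-- The lattices attached to `(c, t, n)` and `(c', t', n')`, together with their next `k`
successors, differ by a common matrix that is `r`-close to the identity. -/
def CloseLat (p B : ℕ) (vn : ℕ → ℤ) (r : ℝ) (k : ℕ) (c : ℝ) (t n : ℕ) (c' : ℝ) (t' n' : ℕ) :
    Prop :=
  ∃ h : SL2R, NearOne r h ∧ ∀ j ≤ k, latt p B vn c' t' (n' + j) = act h '' latt p B vn c t (n + j)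

/-- Bounded functions of `(c, t, n)` depending uniformly continuously on finitely many of the
lattices `latt c t (n + j)`. -/
def IsU (p B : ℕ) (vn : ℕ → ℤ) (φ : ℝ → ℕ → ℕ → ℝ) : Prop :=
  (∃ M, ∀ c t n, |φ c t n| ≤ M) ∧ ∀ ε > 0, ∃ r > 0, ∃ k, ∀ c t n c' t' n',
    CloseLat p B vn r k c t n c' t' n' → |φ c' t' n' - φ c t n| ≤ ε

lemma CloseLat.mono {p B : ℕ} {vn : ℕ → ℤ} {r r' : ℝ} {k k' : ℕ} {c : ℝ} {t n : ℕ} {c' : ℝ}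
    {t' n' : ℕ} (h : CloseLat p B vn r k c t n c' t' n') (hr : r ≤ r') (hk : k' ≤ k) :
    CloseLat p B vn r' k' c t n c' t' n' := by
  obtain ⟨g, hg, hj⟩ := h
  exact ⟨g, hg.mono hr, fun j hj' => hj j (hj'.trans hk)⟩

section

variable {p B : ℕ} {vn : ℕ → ℤ} {φ ψ : ℝ → ℕ → ℕ → ℝ}

lemma IsU.add (hφ : IsU p B vn φ) (hψ : IsU p B vn ψ) :
    IsU p B vn (fun c t n => φ c t n + ψ c t n) := by
  obtain ⟨⟨M, hM⟩, h1⟩ := hφ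
  obtain ⟨⟨M', hM'⟩, h2⟩ := hψ
  refine ⟨⟨M + M', fun c t n => (abs_add_le _ _).trans (add_le_add (hM c t n) (hM' c t n))⟩,
    fun ε hε => ?_⟩
  obtain ⟨r, hr, k, h⟩ := h1 (ε / 2) (by positivity)
  obtain ⟨r', hr', k', h'⟩ := h2 (ε / 2) (by positivity)
  refine ⟨min r r', lt_min hr hr', max k k', fun c t n c' t' n' hc => ?_⟩
  have e1 := h _ _ _ _ _ _ (hc.mono (min_le_left _ _) (le_max_left _ _))
  have e2 := h' _ _ _ _ _ _ (hc.mono (min_le_right _ _) (le_max_right _ _))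
  rw [add_sub_add_comm]
  exact (abs_add_le _ _).trans (by linarith)

lemma IsU.mul (hφ : IsU p B vn φ) (hψ : IsU p B vn ψ) :
    IsU p B vn (fun c t n => φ c t n * ψ c t n) := by
  obtain ⟨⟨M, hM⟩, h1⟩ := hφ
  obtain ⟨⟨M', hM'⟩, h2⟩ := hψ
  have hM0 : 0 ≤ M := (abs_nonneg _).trans (hM 0 0 0)
  have hM0' : 0 ≤ M' := (abs_nonneg _).trans (hM' 0 0 0)
  refine ⟨⟨M * M', fun c t n => by
    rw [abs_mul]; exact mul_le_mul (hM c t n) (hM' c t n) (abs_nonneg _) hM0⟩, fun ε hε => ?_⟩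
  obtain ⟨r, hr, k, h⟩ := h1 (ε / (2 * (M' + 1))) (by positivity)
  obtain ⟨r', hr', k', h'⟩ := h2 (ε / (2 * (M + 1))) (by positivity)
  refine ⟨min r r', lt_min hr hr', max k k', fun c t n c' t' n' hc => ?_⟩
  have e1 := h _ _ _ _ _ _ (hc.mono (min_le_left _ _) (le_max_left _ _))
  have e2 := h' _ _ _ _ _ _ (hc.mono (min_le_right _ _) (le_max_right _ _))
  rw [show φ c' t' n' * ψ c' t' n' - φ c t n * ψ c t n
    = (φ c' t' n' - φ c t n) * ψ c' t' n' + φ c t n * (ψ c' t' n' - ψ c t n) by ring]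
  refine (abs_add_le _ _).trans ?_
  rw [abs_mul, abs_mul]
  have f1 : |φ c' t' n' - φ c t n| * |ψ c' t' n'| ≤ ε / (2 * (M' + 1)) * (M' + 1) :=
    mul_le_mul e1 ((hM' _ _ _).trans (by linarith)) (abs_nonneg _) (by positivity)
  have f2 : |φ c t n| * |ψ c' t' n' - ψ c t n| ≤ (M + 1) * (ε / (2 * (M + 1))) :=
    mul_le_mul ((hM _ _ _).trans (by linarith)) e2 (abs_nonneg _) (by positivity)
  have f3 : ε / (2 * (M' + 1)) * (M' + 1) = ε / 2 := by field_simp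
  have f4 : (M + 1) * (ε / (2 * (M + 1))) = ε / 2 := by field_simp
  linarith

lemma isU_const (a : ℝ) : IsU p B vn (fun _ _ _ => a) :=
  ⟨⟨|a|, fun _ _ _ => le_rfl⟩, fun ε hε => ⟨1, one_pos, 0, fun _ _ _ _ _ _ _ => by
    simpa using hε.le⟩⟩

lemma IsU.const_mul (hφ : IsU p B vn φ) (a : ℝ) : IsU p B vn (fun c t n => a * φ c t n) :=
  (isU_const a).mul hφ

lemma IsU.shift (hφ : IsU p B vn φ) (k : ℕ) : IsU p B vn (fun c t n => φ c t (n + k)) := by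
  obtain ⟨⟨M, hM⟩, h1⟩ := hφ
  refine ⟨⟨M, fun c t n => hM _ _ _⟩, fun ε hε => ?_⟩
  obtain ⟨r, hr, k', h⟩ := h1 ε hε
  refine ⟨r, hr, k + k', fun c t n c' t' n' ⟨g, hg, hj⟩ => h _ _ _ _ _ _ ⟨g, hg, fun j hj' => ?_⟩⟩
  rw [add_assoc, add_assoc]
  exact hj (k + j) (by omega)

lemma IsU.comp (hφ : IsU p B vn φ) {χ : ℝ → ℝ} {L : ℝ} (hL : 0 < L)
    (hχ : ∀ x y, |χ x - χ y| ≤ L * |x - y|) (hχb : ∀ x, |χ x| ≤ 1) :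
    IsU p B vn (fun c t n => χ (φ c t n)) := by
  obtain ⟨-, h1⟩ := hφ
  refine ⟨⟨1, fun c t n => hχb _⟩, fun ε hε => ?_⟩
  obtain ⟨r, hr, k, h⟩ := h1 (ε / L) (by positivity)
  refine ⟨r, hr, k, fun c t n c' t' n' hc => (hχ _ _).trans ?_⟩
  have := h _ _ _ _ _ _ hc
  rw [le_div_iff₀ hL] at this
  linarith

lemma IsU.continuous (hp : 2 ≤ p) (hB : 2 ≤ B) (hφ : IsU p B vn φ) (t n : ℕ) :
    Continuous (fun c => φ c t n) := by
  rw [Metric.continuous_iff]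
  intro c ε hε
  obtain ⟨r, hr, k, h⟩ := hφ.2 (ε / 2) (by positivity)
  have hBt : 0 < (B : ℝ) ^ (2 * t) := by positivity
  refine ⟨r / (B : ℝ) ^ (2 * t), by positivity, fun c' hc' => ?_⟩
  rw [Real.dist_eq] at hc' ⊢
  refine lt_of_le_of_lt (h c t n c' t n ⟨lowU ((c' - c) * (B : ℝ) ^ (2 * t)), ?_, fun j _ =>
    latt_move hp hB c c' t (n + j)⟩) (by linarith)
  rw [lt_div_iff₀ hBt] at hc'
  refine ⟨by simpa [lowU] using hr.le, by simpa [lowU] using hr.le, ?_,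
    by simpa [lowU] using hr.le⟩
  simp only [lowU, mkSL_10, abs_neg, abs_mul, abs_of_pos hBt]
  exact hc'.le

end

lemma latt_zero_mem (p B : ℕ) (vn : ℕ → ℤ) (c : ℝ) (t n : ℕ) : (0 : ℝ × ℝ) ∈ latt p B vn c t n :=
  ⟨0, 0, by simp; rfl⟩

/-- The supremum of `g` over the lattice attached to `(c, t, n)`. -/
noncomputable def supLat (p B : ℕ) (vn : ℕ → ℤ) (g : ℝ × ℝ → ℝ) (c : ℝ) (t n : ℕ) : ℝ :=
  sSup (g '' latt p B vn c t n)

section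

variable {p B : ℕ} {vn : ℕ → ℤ} {g : ℝ × ℝ → ℝ}

lemma le_supLat (h1 : ∀ x, g x ≤ 1) {c : ℝ} {t n : ℕ} {x : ℝ × ℝ} (hx : x ∈ latt p B vn c t n) :
    g x ≤ supLat p B vn g c t n :=
  le_csSup ⟨1, by rintro _ ⟨y, -, rfl⟩; exact h1 y⟩ ⟨x, hx, rfl⟩

lemma supLat_le {a : ℝ} {c : ℝ} {t n : ℕ} (h : ∀ x ∈ latt p B vn c t n, g x ≤ a) :
    supLat p B vn g c t n ≤ a :=
  csSup_le ⟨_, 0, latt_zero_mem _ _ _ _ _ _, rfl⟩ (by rintro _ ⟨y, hy, rfl⟩; exact h y hy)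

lemma supLat_nonneg (h0 : ∀ x, 0 ≤ g x) (h1 : ∀ x, g x ≤ 1) (c : ℝ) (t n : ℕ) :
    0 ≤ supLat p B vn g c t n :=
  (h0 0).trans (le_supLat h1 (latt_zero_mem _ _ _ _ _ _))

lemma isU_supLat (h0 : ∀ x, 0 ≤ g x) (h1 : ∀ x, g x ≤ 1) (hg : Continuous g) {M : ℝ}
    (hM : 0 < M) (hsupp : ∀ x, M < ‖x‖ → g x = 0) : IsU p B vn (supLat p B vn g) := by
  refine ⟨⟨1, fun c t n => ?_⟩, fun ε hε => ?_⟩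
  · rw [abs_of_nonneg (supLat_nonneg h0 h1 c t n)]
    exact supLat_le fun x _ => h1 x
  have huc := (isCompact_closedBall (0 : ℝ × ℝ) (4 * M)).uniformContinuousOn_of_continuous
    hg.continuousOn
  rw [Metric.uniformContinuousOn_iff] at huc
  obtain ⟨δ, hδ, huc⟩ := huc ε hε
  set r := min (1 / 4) (δ / (8 * M)) with hr
  have hr0 : 0 < r := lt_min (by norm_num) (by positivity)
  have hr4 : r ≤ 1 / 4 := min_le_left _ _
  have hrδ : r ≤ δ / (8 * M) := min_le_right _ _
  refine ⟨r, hr0, 0, fun c t n c' t' n' ⟨h, hh, hj⟩ => ?_⟩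
  have hmap := hj 0 le_rfl
  simp only [add_zero] at hmap
  have key : ∀ x, |g (act h x) - g x| ≤ ε := by
    intro x
    have hd := hh.norm_act_sub_le x
    have hle : 2 * r * ‖x‖ ≤ ‖x‖ / 2 := by nlinarith [norm_nonneg x]
    by_cases hx : ‖x‖ ≤ 2 * M
    · have h2 : ‖act h x‖ ≤ ‖act h x - x‖ + ‖x‖ := by
        simpa using norm_add_le (act h x - x) x
      refine (huc (act h x) (by rw [mem_closedBall_zero_iff]; linarith) x
        (by rw [mem_closedBall_zero_iff]; linarith) ?_).le
      rw [dist_eq_norm]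
      refine lt_of_le_of_lt hd ?_
      calc 2 * r * ‖x‖ ≤ 2 * (δ / (8 * M)) * (2 * M) := by gcongr
        _ = δ / 2 := by field_simp; ring
        _ < δ := by linarith
    · push Not at hx
      have h2 : ‖x‖ ≤ ‖act h x - x‖ + ‖act h x‖ := by
        have := norm_sub_le (act h x) (act h x - x)
        simp only [sub_sub_cancel] at this
        linarith
      rw [hsupp x (by linarith), hsupp (act h x) (by linarith)]
      simpa using hε.le
  rw [abs_le]
  constructor
  · have : supLat p B vn g c t n ≤ supLat p B vn g c' t' n' + ε := by
      refine supLat_le fun x hx => ?_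
      have h3 : g (act h x) ≤ supLat p B vn g c' t' n' :=
        le_supLat h1 (by rw [hmap]; exact ⟨x, hx, rfl⟩)
      have := (abs_le.1 (key x)).1
      linarith
    linarith
  · have : supLat p B vn g c' t' n' ≤ supLat p B vn g c t n + ε := by
      refine supLat_le fun y hy => ?_
      rw [hmap] at hy
      obtain ⟨x, hx, rfl⟩ := hy
      have h3 : g x ≤ supLat p B vn g c t n := le_supLat h1 hx
      have := (abs_le.1 (key x)).2
      linarith
    linarith

end

/-- A plateau function equal to `1` on `{ε l ≤ |x₁| ≤ l, |x₂| ≤ K l}` and supported near it. -/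
noncomputable def plateau (ε l K : ℝ) (x : ℝ × ℝ) : ℝ :=
  max 0 (min 1 (min (2 * |x.1| / (ε * l) - 1) (min (2 - |x.1| / l) (2 - |x.2| / (K * l)))))

section

variable {ε l K : ℝ}

lemma plateau_nonneg (x : ℝ × ℝ) : 0 ≤ plateau ε l K x := le_max_left _ _

lemma plateau_le_one (x : ℝ × ℝ) : plateau ε l K x ≤ 1 :=
  max_le zero_le_one (min_le_left _ _)

lemma continuous_plateau : Continuous (plateau ε l K) := by
  unfold plateau; fun_prop

lemma plateau_pos_imp (hl : 0 < l) (hK : 0 < K) {x : ℝ × ℝ}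
    (h : 0 < plateau ε l K x) : x.1 ≠ 0 ∧ |x.1| < 2 * l ∧ |x.2| < 2 * (K * l) := by
  unfold plateau at h
  rw [lt_max_iff] at h
  simp only [lt_self_iff_false, false_or, lt_min_iff] at h
  obtain ⟨-, h1, h2, h3⟩ := h
  refine ⟨?_, ?_, ?_⟩
  · intro h0
    rw [h0] at h1
    norm_num at h1
  · have : |x.1| / l < 2 := by linarith
    rwa [div_lt_iff₀ hl] at this
  · have : |x.2| / (K * l) < 2 := by linarith
    rwa [div_lt_iff₀ (by positivity)] at this

lemma plateau_eq_one (hε : 0 < ε) (hl : 0 < l) (hK : 0 < K) {x : ℝ × ℝ}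
    (h1 : ε * l ≤ |x.1|) (h2 : |x.1| ≤ l) (h3 : |x.2| ≤ K * l) : plateau ε l K x = 1 := by
  unfold plateau
  have e1 : 1 ≤ |x.1| / (ε * l) := by rwa [one_le_div (by positivity)]
  have e2 : |x.1| / l ≤ 1 := by rwa [div_le_one hl]
  have e3 : |x.2| / (K * l) ≤ 1 := by rwa [div_le_one (by positivity)]
  rw [min_eq_left, max_eq_right zero_le_one]
  refine le_min ?_ (le_min ?_ ?_)
  · rw [mul_div_assoc]; linarith
  · linarith
  · linarith

lemma isU_plateau {p B : ℕ} {vn : ℕ → ℤ} (hl : 0 < l) (hK : 0 < K) :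
    IsU p B vn (supLat p B vn (plateau ε l K)) := by
  refine isU_supLat plateau_nonneg plateau_le_one continuous_plateau
    (M := 2 * l + 2 * (K * l)) (by positivity) fun x hx => ?_
  by_contra h
  have h' : 0 < plateau ε l K x := lt_of_le_of_ne (plateau_nonneg x) (Ne.symm h)
  obtain ⟨-, h1, h2⟩ := plateau_pos_imp hl hK h'
  have hKl : 0 < K * l := by positivity
  have : ‖x‖ ≤ 2 * l + 2 * (K * l) := by
    rw [Prod.norm_def, Real.norm_eq_abs, Real.norm_eq_abs, sup_le_iff]
    constructor <;> linarith
  linarith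

/-- If the lattice at `s` is fat, the plateau supremum vanishes at `s + δ B^{-2t}` for
`-1 ≤ δ ≤ 0`. -/
lemma supLat_plateau_eq_zero {p B : ℕ} {vn : ℕ → ℤ} (hp : 2 ≤ p) (hB : 2 ≤ B)
    (hl : 0 < l) (hK : 0 < K) (hlε : 2 * l * (2 * (K * l) + 2 * l) ≤ ε) {Θ : ℝ}
    (hΘ : 2 * (K * l) + 2 * l ≤ Θ) {s : ℝ} {t n : ℕ} (hF : Fat ε Θ (latt p B vn s t n)) {δ : ℝ}
    (hδ : δ ∈ Icc (-1 : ℝ) 0) :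
    supLat p B vn (plateau ε l K) (s + δ / (B : ℝ) ^ (2 * t)) t n = 0 := by
  have hBt : 0 < (B : ℝ) ^ (2 * t) := by positivity
  refine le_antisymm (supLat_le fun x hx => ?_) (supLat_nonneg plateau_nonneg plateau_le_one _ _ _)
  by_contra hcon
  push Not at hcon
  obtain ⟨h0, h1, h2⟩ := plateau_pos_imp hl hK hcon
  set c := s + δ / (B : ℝ) ^ (2 * t) with hc
  have hmem : act (lowU (-δ)) x ∈ latt p B vn s t n := by
    rw [latt_move hp hB c s t n]
    refine ⟨x, hx, ?_⟩
    rw [show (s - c) * (B : ℝ) ^ (2 * t) = -δ by rw [hc]; field_simp; ring]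
  have e1 : (act (lowU (-δ)) x).1 = x.1 := by simp [act, lowU]
  have e2 : (act (lowU (-δ)) x).2 = δ * x.1 + x.2 := by simp [act, lowU]
  have hne : act (lowU (-δ)) x ≠ 0 := by
    intro h; apply h0; rw [← e1, h]; rfl
  have hδ1 : |δ| ≤ 1 := abs_le.2 ⟨hδ.1, hδ.2.trans zero_le_one⟩
  have b2 : |δ * x.1 + x.2| < 2 * (K * l) + 2 * l := by
    refine lt_of_le_of_lt (abs_add_le _ _) ?_
    rw [abs_mul]
    nlinarith [abs_nonneg x.1, abs_nonneg δ]
  rcases hF _ hmem hne with h | h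
  · rw [e1, e2, abs_mul] at h
    have : |x.1| * |δ * x.1 + x.2| < 2 * l * (2 * (K * l) + 2 * l) :=
      mul_lt_mul'' h1 b2 (abs_nonneg _) (abs_nonneg _)
    linarith
  · rw [e2] at h; linarith

end

lemma exists_shift_supLat_ge_one {p B : ℕ} {vn : ℕ → ℤ} (hp : 2 ≤ p) (hB : 2 ≤ B)
    {ε l K κ₀ J Θ : ℝ} (hε : 0 < ε) (hl : 0 < l) (hK : 0 < K) (hκ₀ : 0 < κ₀)
    (hJ : (1 / l + l) / (κ₀ * (ε * l)) + 1 ≤ J) {s : ℝ} {t n : ℕ}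
    (hlt : 1 ≤ l * ((B : ℝ) ^ t * (p : ℝ) ^ n)) (hΘ : 1 / l < Θ)
    (hF : Fat ε Θ (latt p B vn s t n)) {δ κ : ℝ} (hδ : δ ∈ Icc (-1 : ℝ) 0)
    (hκ : κ₀ ≤ |κ|) (hκK : |κ| ≤ K) :
    ∃ i : ℤ, |(i : ℝ)| ≤ J ∧
      1 ≤ supLat p B vn (plateau ε l K) (s + (δ - i * κ) / (B : ℝ) ^ (2 * t)) t n := by
  have hBt : 0 < (B : ℝ) ^ (2 * t) := by positivity
  obtain ⟨q, d, hq, hx1, hx2⟩ := latt_dirichlet (vn := vn) hp hB s t n hl hlt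
  set x : ℝ × ℝ := ((q : ℝ) / ((B : ℝ) ^ t * (p : ℝ) ^ n),
    (B : ℝ) ^ t * (p : ℝ) ^ n * d + (B : ℝ) ^ t / (p : ℝ) ^ n * (vn n - s) * q) with hx
  have hqp : (0 : ℝ) < q := by exact_mod_cast hq
  have hmem : x ∈ latt p B vn s t n := ⟨q, d, rfl⟩
  have hpos : 0 < x.1 := by
    simp only [hx]; positivity
  replace hx1 : x.1 ≤ l := hx1
  replace hx2 : |x.2| ≤ 1 / l := hx2
  have hne : x ≠ 0 := fun h => by rw [h] at hpos; exact lt_irrefl _ hpos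
  have hlow : ε * l ≤ x.1 := by
    rcases hF x hmem hne with h | h
    · rw [abs_mul, abs_of_pos hpos] at h
      have : x.1 * |x.2| ≤ x.1 * (1 / l) := by gcongr
      have h2 : ε ≤ x.1 / l := by rw [mul_one_div] at this; linarith
      rwa [le_div_iff₀ hl] at h2
    · linarith
  set z := x.2 - δ * x.1 with hz
  set w := κ * x.1 with hw
  have hκpos : 0 < |κ| := lt_of_lt_of_le hκ₀ hκ
  have hwpos : 0 < |w| := by rw [hw, abs_mul, abs_of_pos hpos]; positivity
  have hwne : w ≠ 0 := abs_pos.1 hwpos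
  refine ⟨round (-(z / w)), ?_, ?_⟩
  · refine le_trans ?_ hJ
    have h1 := abs_sub_round (-(z / w))
    have h2 : |((round (-(z / w)) : ℤ) : ℝ)| ≤ |z / w| + 1 / 2 := by
      have := abs_sub_abs_le_abs_sub ((round (-(z / w)) : ℤ) : ℝ) (-(z / w))
      rw [abs_sub_comm, abs_neg] at this
      linarith
    have h3 : |z| ≤ 1 / l + l := by
      refine (abs_sub _ _).trans ?_
      rw [abs_mul, abs_of_pos hpos]
      have hδ1 : |δ| ≤ 1 := abs_le.2 ⟨hδ.1, hδ.2.trans zero_le_one⟩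
      nlinarith
    have h4 : κ₀ * (ε * l) ≤ |w| := by
      rw [hw, abs_mul, abs_of_pos hpos]
      exact mul_le_mul hκ hlow (by positivity) (by positivity)
    have h5 : |z / w| ≤ (1 / l + l) / (κ₀ * (ε * l)) := by
      rw [abs_div]
      exact div_le_div₀ (by positivity) h3 (by positivity) h4
    linarith
  · set i := round (-(z / w)) with hi
    have hy : act (lowU (δ - i * κ)) x ∈
        latt p B vn (s + (δ - i * κ) / (B : ℝ) ^ (2 * t)) t n := by
      rw [latt_move hp hB s]
      refine ⟨x, hmem, ?_⟩
      congr 2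
      field_simp
      ring
    refine le_trans (le_of_eq ?_) (le_supLat plateau_le_one hy)
    symm
    have e1 : (act (lowU (δ - i * κ)) x).1 = x.1 := by simp [act, lowU]
    have e2 : (act (lowU (δ - i * κ)) x).2 = -(w * (-(z / w) - i)) := by
      simp only [act, lowU, mkSL_10, mkSL_11]
      rw [mul_sub, mul_neg, mul_div_cancel₀ _ hwne, hw, hz]; ring
    refine plateau_eq_one hε hl hK ?_ ?_ ?_
    · rw [e1, abs_of_pos hpos]; exact hlow
    · rw [e1, abs_of_pos hpos]; exact hx1
    · rw [e2, abs_neg, abs_mul]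
      have h1 := abs_sub_round (-(z / w))
      have h2 : |w| ≤ K * l := by
        rw [hw, abs_mul, abs_of_pos hpos]
        exact mul_le_mul hκK hx1 hpos.le hK.le
      have : |w| * |-(z / w) - i| ≤ |w| * (1 / 2) := by gcongr
      linarith

/-- Conjugating a near-identity matrix times a shear by a bounded unipotent. -/
lemma nearOne_conj {h : SL2R} {κ δ R r K : ℝ} (hr : 0 ≤ r) (hδ : |δ| ≤ R) (hK : 0 ≤ K)
    (hκ : |κ| ≤ K) (h00 : |h 0 0 - 1| ≤ r) (h01 : |h 0 1| ≤ r) (h10 : h 1 0 = κ)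
    (h11 : |h 1 1 - 1| ≤ r) :
    NearOne (r * ((1 + K) * (1 + R) ^ 2)) (lowU δ * h * lowU (κ - δ)) := by
  have hR : 0 ≤ R := (abs_nonneg _).trans hδ
  set a := h 0 0 - 1
  set b := h 0 1
  set d := h 1 1 - 1
  have ha : h 0 0 = 1 + a := by simp [a]
  have hb : h 0 1 = b := rfl
  have hd : h 1 1 = 1 + d := by simp [d]
  have m : ∀ x y X Y : ℝ, |x| ≤ X → |y| ≤ Y → |x * y| ≤ X * Y := fun x y X Y hx hy => by
    rw [abs_mul]; exact mul_le_mul hx hy (abs_nonneg _) ((abs_nonneg _).trans hx)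
  have A : ∀ x y X Y : ℝ, |x| ≤ X → |y| ≤ Y → |x + y| ≤ X + Y := fun x y X Y hx hy =>
    (abs_add_le _ _).trans (add_le_add hx hy)
  have hδκ : |δ - κ| ≤ R + K := (abs_sub _ _).trans (add_le_add hδ hκ)
  have hnδ : |(-δ)| ≤ R := by rwa [abs_neg]
  have hnκ : |(-κ)| ≤ K := by rwa [abs_neg]
  refine ⟨?_, ?_, ?_, ?_⟩
  · have e : (lowU δ * h * lowU (κ - δ)) 0 0 - 1 = a + b * (δ - κ) := by
      simp only [SL2R_mul_00, SL2R_mul_01, lowU, mkSL_00, mkSL_01,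
        mkSL_10, ha, hb]
      ring
    rw [e]
    refine (A _ _ _ _ h00 (m _ _ _ _ h01 hδκ)).trans ?_
    rw [show r + r * (R + K) = r * (1 + R + K) by ring]
    gcongr
    nlinarith [mul_nonneg hK hR, mul_nonneg hR hR, mul_nonneg hK (mul_nonneg hR hR)]
  · have e : (lowU δ * h * lowU (κ - δ)) 0 1 = b := by
      simp only [SL2R_mul_00, SL2R_mul_01, lowU, mkSL_00, mkSL_01,
        mkSL_11, hb]
      ring
    rw [e]
    refine h01.trans (le_mul_of_one_le_right hr ?_)
    nlinarith [mul_nonneg hK hR, mul_nonneg hR hR, mul_nonneg hK (mul_nonneg hR hR)]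
  · have e : (lowU δ * h * lowU (κ - δ)) 1 0
        = (-δ) * a + d * (δ - κ) + (-δ) * (b * (δ - κ)) := by
      simp only [SL2R_mul_10, SL2R_mul_11, lowU, mkSL_00,
        mkSL_10, mkSL_11, ha, hb, hd, h10]
      ring
    rw [e]
    refine (A _ _ _ _ (A _ _ _ _ (m _ _ _ _ hnδ h00) (m _ _ _ _ h11 hδκ))
      (m _ _ _ _ hnδ (m _ _ _ _ h01 hδκ))).trans ?_
    rw [show R * r + r * (R + K) + R * (r * (R + K)) = r * (R + (R + K) + R * (R + K)) by ring]
    gcongr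
    nlinarith [mul_nonneg hK hR, mul_nonneg hR hR, mul_nonneg hK (mul_nonneg hR hR)]
  · have e : (lowU δ * h * lowU (κ - δ)) 1 1 - 1 = d + (-δ) * b := by
      simp only [SL2R_mul_10, SL2R_mul_11, lowU, mkSL_01,
        mkSL_10, mkSL_11, hb, hd]
      ring
    rw [e]
    refine (A _ _ _ _ h11 (m _ _ _ _ hnδ h01)).trans ?_
    rw [show r + R * r = r * (1 + R) by ring]
    gcongr
    nlinarith [mul_nonneg hK hR, mul_nonneg hR hR, mul_nonneg hK (mul_nonneg hR hR)]

lemma exists_good_start {X Y : Set ℝ} {κ : ℝ} {J : ℕ} {υ : ℝ} (hυ : 0 ≤ υ)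
    (hX : volume X ≤ ENNReal.ofReal (3 * υ)) (hY : volume Y ≤ ENNReal.ofReal (1 / 4))
    (hJ : (2 * J + 1) * (3 * υ) ≤ 1 / 2) :
    ∃ δ ∈ Icc (-1 : ℝ) 0, δ ∉ Y ∧ ∀ i : ℤ, |i| ≤ J → δ - i * κ ∉ X := by
  by_contra hcon
  push Not at hcon
  have hsub : Icc (-1 : ℝ) 0 ⊆ Y ∪ ⋃ i ∈ Finset.Icc (-(J : ℤ)) J, (fun δ : ℝ => δ + (-(i * κ))) ⁻¹' X := by
    intro δ hδ
    by_cases hδY : δ ∈ Y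
    · exact Or.inl hδY
    · obtain ⟨i, hi, hiX⟩ := hcon δ hδ hδY
      refine Or.inr (mem_iUnion₂.2 ⟨i, ?_, ?_⟩)
      · rw [Finset.mem_Icc]; exact abs_le.1 hi
      · simpa [← sub_eq_add_neg] using hiX
  have h1 : volume (Icc (-1 : ℝ) 0) = 1 := by rw [Real.volume_Icc]; norm_num
  have h2 : volume (⋃ i ∈ Finset.Icc (-(J : ℤ)) J, (fun δ : ℝ => δ + (-(i * κ))) ⁻¹' X)
      ≤ ENNReal.ofReal (1 / 2) := by
    refine (measure_biUnion_finset_le _ _).trans ?_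
    have : ∀ i ∈ Finset.Icc (-(J : ℤ)) J, volume ((fun δ : ℝ => δ + (-(i * κ))) ⁻¹' X)
        ≤ ENNReal.ofReal (3 * υ) := by
      intro i _
      rw [measure_preimage_add_right]; exact hX
    refine (Finset.sum_le_card_nsmul _ _ _ this).trans ?_
    rw [Int.card_Icc, ← ENNReal.ofReal_nsmul]
    apply ENNReal.ofReal_le_ofReal
    rw [nsmul_eq_mul]
    have : (((J : ℤ) + 1 - -(J : ℤ)).toNat : ℝ) = 2 * J + 1 := by
      rw [show ((J : ℤ) + 1 - -(J : ℤ)).toNat = 2 * J + 1 by omega]; push_cast; ring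
    rw [this]; exact hJ
  have h3 : (1 : ENNReal) ≤ ENNReal.ofReal (1 / 4) + ENNReal.ofReal (1 / 2) := by
    rw [← h1]
    exact (measure_mono hsub).trans ((measure_union_le _ _).trans (add_le_add hY h2))
  rw [← ENNReal.ofReal_add (by norm_num) (by norm_num), ENNReal.one_le_ofReal] at h3
  norm_num at h3

lemma shift_contradiction {f g e β : ℝ → ℝ} {R κ K c c₁ υ : ℝ} {J : ℕ} (hυ : 0 ≤ υ) (hc : 0 < c)
    (hR : 1 + J * K ≤ R) (hκ : |κ| ≤ K) (hJυ : (2 * J + 1) * (3 * υ) ≤ 1 / 2)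
    (hJc : J * (3 * c₁) ≤ c / 2) (hc₁ : 0 ≤ c₁)
    (hshift : ∀ δ, |δ| ≤ R → |g δ - f (δ - κ)| ≤ c₁)
    (hg : volume {δ | δ ∈ Icc (-R) R ∧ c₁ ≤ |g δ - e δ|} ≤ ENNReal.ofReal υ)
    (hf : volume {δ | δ ∈ Icc (-R) R ∧ c₁ ≤ |f δ - e δ|} ≤ ENNReal.ofReal υ)
    (hβ : volume {δ | δ ∈ Icc (-R) R ∧ c ^ 2 / 4 ≤ f δ ^ 2 * β δ} ≤ ENNReal.ofReal υ)
    (hsmall : volume {δ | δ ∈ Icc (-1 : ℝ) 0 ∧ |f δ| ≤ c} ≤ ENNReal.ofReal (1 / 4))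
    (hblock : ∀ δ ∈ Icc (-1 : ℝ) 0, ∃ i : ℤ, |(i : ℝ)| ≤ J ∧ 1 ≤ β (δ - i * κ)) : False := by
  set X : Set ℝ := {δ | δ ∈ Icc (-R) R ∧ c₁ ≤ |g δ - e δ|} ∪ {δ | δ ∈ Icc (-R) R ∧ c₁ ≤ |f δ - e δ|} ∪
    {δ | δ ∈ Icc (-R) R ∧ c ^ 2 / 4 ≤ f δ ^ 2 * β δ} with hX
  have hXv : volume X ≤ ENNReal.ofReal (3 * υ) := by
    refine (measure_union_le _ _).trans ((add_le_add ((measure_union_le _ _).trans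
      (add_le_add hg hf)) hβ).trans ?_)
    rw [← ENNReal.ofReal_add hυ hυ, ← ENNReal.ofReal_add (by positivity) hυ]
    apply ENNReal.ofReal_le_ofReal; linarith
  obtain ⟨δ, hδ, hδY, hgood⟩ := exists_good_start (κ := κ) hυ hXv hsmall hJυ
  have hK : 0 ≤ K := (abs_nonneg _).trans hκ
  have hrange : ∀ i : ℤ, |i| ≤ J → |δ - i * κ| ≤ R := by
    intro i hi
    have hi' : |(i : ℝ)| ≤ J := by exact_mod_cast hi
    have hδ1 : |δ| ≤ 1 := abs_le.2 ⟨hδ.1, hδ.2.trans zero_le_one⟩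
    refine (abs_sub _ _).trans ?_
    rw [abs_mul]
    have : |(i : ℝ)| * |κ| ≤ J * K := mul_le_mul hi' hκ (abs_nonneg _) (by positivity)
    linarith
  have hgood' : ∀ i : ℤ, |i| ≤ J → |g (δ - i * κ) - e (δ - i * κ)| < c₁ ∧
      |f (δ - i * κ) - e (δ - i * κ)| < c₁ ∧ f (δ - i * κ) ^ 2 * β (δ - i * κ) < c ^ 2 / 4 := by
    intro i hi
    have h1 := hgood i hi
    have h2 := abs_le.1 (hrange i hi)
    simp only [hX, mem_union, mem_ofPred_eq, mem_Icc, not_or, not_and, not_le] at h1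
    exact ⟨h1.1.1 h2, h1.1.2 h2, h1.2 h2⟩
  have hstep : ∀ i : ℤ, |i| ≤ J → |f (δ - i * κ - κ) - f (δ - i * κ)| ≤ 3 * c₁ := by
    intro i hi
    obtain ⟨a1, a2, -⟩ := hgood' i hi
    have a3 := hshift _ (hrange i hi)
    rw [abs_lt] at a1 a2
    rw [abs_le] at a3 ⊢
    constructor <;> linarith [a1.1, a1.2, a2.1, a2.2, a3.1, a3.2]
  have h0 : c < |f δ| := by
    simp only [mem_ofPred_eq, not_and, not_le] at hδY
    exact hδY hδ
  have hpos : ∀ i : ℕ, i ≤ J → c - i * (3 * c₁) ≤ |f (δ - ((i : ℤ) : ℝ) * κ)| := by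
    intro i
    induction i with
    | zero => intro _; simpa using h0.le
    | succ i ih =>
      intro hi
      have h1 := ih (by omega)
      have h2 := hstep i (by rw [abs_of_nonneg (by positivity)]; omega)
      rw [show δ - ((i : ℤ) : ℝ) * κ - κ = δ - (((i + 1 : ℕ) : ℤ) : ℝ) * κ by push_cast; ring] at h2
      have h3 := abs_sub_abs_le_abs_sub (f (δ - ((i : ℤ) : ℝ) * κ))
        (f (δ - (((i + 1 : ℕ) : ℤ) : ℝ) * κ))
      rw [abs_sub_comm] at h3
      push_cast at h1 h2 h3 ⊢
      linarith
  have hneg : ∀ i : ℕ, i ≤ J → c - i * (3 * c₁) ≤ |f (δ - ((-(i : ℤ) : ℤ) : ℝ) * κ)| := by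
    intro i
    induction i with
    | zero => intro _; simpa using h0.le
    | succ i ih =>
      intro hi
      have h1 := ih (by omega)
      have h2 := hstep (-((i + 1 : ℕ) : ℤ)) (by
        rw [abs_neg, abs_of_nonneg (by positivity)]; omega)
      rw [show δ - ((-((i + 1 : ℕ) : ℤ) : ℤ) : ℝ) * κ - κ = δ - ((-(i : ℤ) : ℤ) : ℝ) * κ by
        push_cast; ring] at h2
      have h3 := abs_sub_abs_le_abs_sub (f (δ - ((-(i : ℤ) : ℤ) : ℝ) * κ))
        (f (δ - ((-((i + 1 : ℕ) : ℤ) : ℤ) : ℝ) * κ))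
      push_cast at h1 h2 h3 ⊢
      linarith
  obtain ⟨i, hi, hiβ⟩ := hblock δ hδ
  have hiJ : |i| ≤ J := by exact_mod_cast hi
  have hnat : i.natAbs ≤ J := by rw [Int.abs_eq_natAbs] at hiJ; omega
  have hlow : c / 2 ≤ |f (δ - i * κ)| := by
    have hcase : c - (i.natAbs : ℝ) * (3 * c₁) ≤ |f (δ - i * κ)| := by
      rcases Int.natAbs_eq i with h | h
      · have := hpos i.natAbs hnat
        rwa [← h] at this
      · have := hneg i.natAbs hnat
        rwa [← h] at this
    have : (i.natAbs : ℝ) * (3 * c₁) ≤ J * (3 * c₁) := by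
      gcongr
    linarith
  have h3 := (hgood' i hiJ).2.2
  have h4 : (c / 2) ^ 2 ≤ f (δ - i * κ) ^ 2 := by
    rw [← sq_abs (f (δ - i * κ))]; gcongr
  nlinarith [sq_nonneg (f (δ - i * κ))]

/-- The quadratic functional `∫_{-R}^R (1_{[-1,0]} - f)² - 1`. -/
noncomputable def quad (R : ℝ) (f : ℝ → ℝ) : ℝ :=
  (∫ x in (-R)..R, f x ^ 2) - 2 * ∫ x in (-1 : ℝ)..0, f x

section quad

variable {R : ℝ} {f g : ℝ → ℝ}

lemma quad_add (hf : Continuous f) (hg : Continuous g) (R : ℝ) :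
    quad R (fun x => f x + g x) = quad R f +
      2 * ((∫ x in (-R)..R, f x * g x) - ∫ x in (-1 : ℝ)..0, g x) +
      ∫ x in (-R)..R, g x ^ 2 := by
  have h1 : (∫ x in (-R)..R, (f x + g x) ^ 2) = (∫ x in (-R)..R, f x ^ 2) +
      2 * (∫ x in (-R)..R, f x * g x) + ∫ x in (-R)..R, g x ^ 2 := by
    rw [← intervalIntegral.integral_const_mul, ← intervalIntegral.integral_add,
      ← intervalIntegral.integral_add]
    · congr 1; ext x; ring
    all_goals apply Continuous.intervalIntegrable; fun_prop
  have h2 : (∫ x in (-1 : ℝ)..0, (f x + g x)) = (∫ x in (-1 : ℝ)..0, f x) +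
      ∫ x in (-1 : ℝ)..0, g x := by
    rw [← intervalIntegral.integral_add]
    all_goals apply Continuous.intervalIntegrable; fun_prop
  unfold quad
  rw [h1, h2]; ring

lemma quad_midpoint (hf : Continuous f) (hg : Continuous g) (R : ℝ) :
    (∫ x in (-R)..R, (g x - f x) ^ 2) =
      2 * quad R f + 2 * quad R g - 4 * quad R (fun x => f x + (1 / 2) * (g x - f x)) := by
  have e1 := quad_add (g := fun x => (1 / 2) * (g x - f x)) hf (by fun_prop) R
  have e2 := quad_add (g := fun x => (g x - f x)) hf (by fun_prop) R
  have e3 : quad R (fun x => f x + (g x - f x)) = quad R g := by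
    congr 1; ext x; ring
  rw [e3] at e2
  have h1 : (∫ x in (-R)..R, f x * ((1 / 2) * (g x - f x))) =
      (1 / 2) * ∫ x in (-R)..R, f x * (g x - f x) := by
    rw [← intervalIntegral.integral_const_mul]; congr 1; ext x; ring
  have h2 : (∫ x in (-R)..R, ((1 / 2) * (g x - f x)) ^ 2) =
      (1 / 4) * ∫ x in (-R)..R, (g x - f x) ^ 2 := by
    rw [← intervalIntegral.integral_const_mul]; congr 1; ext x; ring
  rw [intervalIntegral.integral_const_mul, h1, h2] at e1
  rw [e1, e2]; ring

lemma integral_unit_le (hR : 1 ≤ R) (hf : Continuous f) (h0 : ∀ x, 0 ≤ f x) :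
    (∫ x in (-1 : ℝ)..0, f x) ≤ ∫ x in (-R)..R, f x := by
  apply intervalIntegral.integral_mono_interval (by linarith) (by norm_num) (by linarith)
  · exact Eventually.of_forall h0
  · exact hf.intervalIntegrable _ _

lemma half_integral_sq_le_quad (hR : 1 ≤ R) (hf : Continuous f) :
    (1 / 2) * (∫ x in (-R)..R, f x ^ 2) - 2 ≤ quad R f := by
  have h1 := integral_unit_le (f := fun x => f x ^ 2) hR (by fun_prop) (fun x => sq_nonneg _)
  have h2 : 2 * (∫ x in (-1 : ℝ)..0, f x) ≤ ∫ x in (-1 : ℝ)..0, ((1 / 2) * f x ^ 2 + 2) := by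
    rw [← intervalIntegral.integral_const_mul]
    apply intervalIntegral.integral_mono_on (by norm_num)
    · apply Continuous.intervalIntegrable; fun_prop
    · apply Continuous.intervalIntegrable; fun_prop
    · intro x _; nlinarith [sq_nonneg (f x - 2)]
  rw [intervalIntegral.integral_add, intervalIntegral.integral_const_mul,
    intervalIntegral.integral_const] at h2
  · simp only [smul_eq_mul] at h2
    unfold quad
    linarith
  · apply Continuous.intervalIntegrable; fun_prop
  · simp

end quad

/-- The average over `A ×ˢ range (j + 1)`. -/
noncomputable def avg {α : Type*} (A : Finset α) (j : ℕ) (F : α → ℕ → ℝ) : ℝ :=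
  (∑ a ∈ A, ∑ n ∈ Finset.range (j + 1), F a n) / ((A.card : ℝ) * (j + 1))

section avg

variable {α : Type*} {A : Finset α} {j : ℕ} {F G : α → ℕ → ℝ}

lemma avg_add : avg A j (fun a n => F a n + G a n) = avg A j F + avg A j G := by
  simp only [avg, Finset.sum_add_distrib, add_div]

lemma avg_sub : avg A j (fun a n => F a n - G a n) = avg A j F - avg A j G := by
  simp only [avg, Finset.sum_sub_distrib, sub_div]

lemma avg_const_mul (c : ℝ) : avg A j (fun a n => c * F a n) = c * avg A j F := by
  simp only [avg, ← Finset.mul_sum, mul_div_assoc]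

lemma avg_mono (h : ∀ a ∈ A, ∀ n ≤ j, F a n ≤ G a n) : avg A j F ≤ avg A j G := by
  unfold avg
  gcongr with a ha n hn
  exact h a ha n (Nat.lt_succ_iff.1 (Finset.mem_range.1 hn))

lemma avg_const (hA : A.Nonempty) (c : ℝ) : avg A j (fun _ _ => c) = c := by
  have : (A.card : ℝ) ≠ 0 := by exact_mod_cast hA.card_pos.ne'
  have h2 : (j : ℝ) + 1 ≠ 0 := by positivity
  simp only [avg, Finset.sum_const, Finset.card_range, nsmul_eq_mul]
  push_cast
  field_simp

lemma avg_shift_le (hA : A.Nonempty) {M : ℝ} (hM : ∀ a n, |F a n| ≤ M) :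
    avg A j (fun a n => F a (n + 1)) ≤ avg A j F + 2 * M / (j + 1) := by
  have hc : (0 : ℝ) < A.card := by exact_mod_cast hA.card_pos
  have key : (∑ a ∈ A, ∑ n ∈ Finset.range (j + 1), F a (n + 1)) ≤
      (∑ a ∈ A, ∑ n ∈ Finset.range (j + 1), F a n) + A.card * (2 * M) := by
    rw [← sub_le_iff_le_add', ← Finset.sum_sub_distrib, ← nsmul_eq_mul]
    apply Finset.sum_le_card_nsmul
    intro a _
    rw [← Finset.sum_sub_distrib, Finset.sum_range_sub (fun n => F a n)]
    have h1 := abs_le.1 (hM a (j + 1))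
    have h2 := abs_le.1 (hM a 0)
    linarith
  unfold avg
  calc _ ≤ ((∑ a ∈ A, ∑ n ∈ Finset.range (j + 1), F a n) + A.card * (2 * M)) /
        ((A.card : ℝ) * (j + 1)) := by gcongr
    _ = _ := by field_simp

end avg

/-- Evaluation of `φ` along the scaled segment through the base point `a`. -/
noncomputable def ev (B : ℕ) (φ : ℝ → ℕ → ℕ → ℝ) (a : ℝ × ℕ) (n : ℕ) (δ : ℝ) : ℝ :=
  φ (a.1 + δ / (B : ℝ) ^ (2 * a.2)) a.2 n

/-- A Lipschitz cutoff equal to `1` on `[-c, c]` and to `0` outside `[-2c, 2c]`. -/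
noncomputable def cutoff (c x : ℝ) : ℝ := max 0 (min 1 (2 - |x| / c))

section cutoff

variable {c : ℝ}

lemma cutoff_nonneg (x : ℝ) : 0 ≤ cutoff c x := le_max_left _ _

lemma cutoff_le_one (x : ℝ) : cutoff c x ≤ 1 := max_le zero_le_one (min_le_left _ _)

lemma abs_cutoff_le_one (x : ℝ) : |cutoff c x| ≤ 1 := by
  rw [abs_of_nonneg (cutoff_nonneg x)]; exact cutoff_le_one x

lemma cutoff_eq_one (hc : 0 < c) {x : ℝ} (hx : |x| ≤ c) : cutoff c x = 1 := by
  have : |x| / c ≤ 1 := by rwa [div_le_one hc]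
  unfold cutoff
  rw [min_eq_left (by linarith), max_eq_right zero_le_one]

lemma mul_cutoff_le (hc : 0 < c) (x : ℝ) : x * cutoff c x ≤ 2 * c := by
  rcases le_or_gt (|x|) (2 * c) with h | h
  · calc x * cutoff c x ≤ |x| * 1 := by
          apply mul_le_mul (le_abs_self x) (cutoff_le_one x) (cutoff_nonneg x) (abs_nonneg x)
      _ ≤ 2 * c := by linarith
  · have : 2 < |x| / c := by rwa [lt_div_iff₀ hc]
    have h0 : cutoff c x = 0 := by
      unfold cutoff
      rw [max_eq_left]
      exact (min_le_right _ _).trans (by linarith)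
    rw [h0]; linarith

lemma cutoff_lipschitz (hc : 0 < c) (x y : ℝ) : |cutoff c x - cutoff c y| ≤ (1 / c) * |x - y| := by
  unfold cutoff
  refine (abs_max_sub_max_le_max _ _ _ _).trans ?_
  rw [sub_self, abs_zero]
  have hn : 0 ≤ (1 / c) * |x - y| := by positivity
  refine max_le hn ((abs_min_sub_min_le_max _ _ _ _).trans ?_)
  rw [sub_self, abs_zero]
  refine max_le hn ?_
  have : 2 - |x| / c - (2 - |y| / c) = (1 / c) * (|y| - |x|) := by ring
  rw [this, abs_mul, abs_of_pos (by positivity : 0 < 1 / c), abs_sub_comm x y]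
  exact mul_le_mul_of_nonneg_left (abs_abs_sub_abs_le y x) (by positivity)

lemma continuous_cutoff : Continuous (cutoff c) := by unfold cutoff; fun_prop

end cutoff

lemma avg_shift_iterate_le {α : Type*} {A : Finset α} (hA : A.Nonempty) {j : ℕ} {M : ℝ} (k : ℕ)
    (F : α → ℕ → ℝ) (hM : ∀ a n, |F a n| ≤ M) :
    avg A j (fun a n => F a (n + k)) ≤ avg A j F + k * (2 * M / (j + 1)) := by
  induction k with
  | zero => simp
  | succ k ih =>
    have h := avg_shift_le (j := j) hA (F := fun a n => F a (n + k)) (fun a n => hM a (n + k))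
    have e : (fun a n => F a (n + (k + 1))) = (fun a n => F a (n + 1 + k)) := by
      ext a n; congr 1; ring
    rw [e]
    push_cast
    linarith

lemma abs_quad_le {R M : ℝ} (hR : 0 ≤ R) {f : ℝ → ℝ} (hf : ∀ x, |f x| ≤ M) :
    |quad R f| ≤ M ^ 2 * (2 * R) + 2 * M := by
  have h1 : |∫ x in (-R)..R, f x ^ 2| ≤ M ^ 2 * |R - -R| := by
    rw [← Real.norm_eq_abs]
    apply intervalIntegral.norm_integral_le_of_norm_le_const
    intro x _
    rw [Real.norm_eq_abs, abs_pow]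
    exact pow_le_pow_left₀ (abs_nonneg _) (hf x) 2
  have h2 : |∫ x in (-1 : ℝ)..0, f x| ≤ M * |0 - (-1 : ℝ)| := by
    rw [← Real.norm_eq_abs]
    apply intervalIntegral.norm_integral_le_of_norm_le_const
    intro x _
    exact hf x
  rw [show R - -R = 2 * R by ring, abs_of_nonneg (by positivity : 0 ≤ 2 * R)] at h1
  norm_num at h2
  unfold quad
  refine (abs_sub _ _).trans ?_
  rw [abs_mul, abs_two]
  linarith

section variational

variable {p B : ℕ} {vn : ℕ → ℤ}

lemma IsU.continuous_ev (hp : 2 ≤ p) (hB : 2 ≤ B) {φ : ℝ → ℕ → ℕ → ℝ} (hφ : IsU p B vn φ)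
    (a : ℝ × ℕ) (n : ℕ) : Continuous (ev B φ a n) :=
  (hφ.continuous hp hB a.2 n).comp (by fun_prop)

/-- Nearly optimal approximations of the indicator of `[-1, 0]` are almost invariant, almost
disjoint from every function vanishing on `[-1, 0]`, and rarely small on `[-1, 0]`. -/
theorem exists_almost_invariant (hp : 2 ≤ p) (hB : 2 ≤ B) (𝒢 : Ultrafilter ℕ)
    (h𝒢 : (𝒢 : Filter ℕ) ≤ atTop) (A : ℕ → Finset (ℝ × ℕ)) (hA : ∀ j, (A j).Nonempty) {R : ℝ}
    (hR : 1 ≤ R) {β : ℝ → ℕ → ℕ → ℝ} (hβ : IsU p B vn β) (hβ0 : ∀ c t n, 0 ≤ β c t n)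
    (hβ1 : ∀ c t n, β c t n ≤ 1)
    (hβz : ∀ K, ∀ᶠ j in (𝒢 : Filter ℕ), ∀ a ∈ A j, ∀ n ≤ j + K, ∀ δ ∈ Icc (-1 : ℝ) 0,
      ev B β a n δ = 0)
    {ζ c : ℝ} (hζ : 0 < ζ) (hc : 0 < c) :
    ∃ φ, IsU p B vn φ ∧ ∀ N : ℕ, ∀ᶠ j in (𝒢 : Filter ℕ), ∀ k < N,
      avg (A j) j (fun a n => ∫ x in (-R)..R, (ev B φ a (n + k) x - ev B φ a n x) ^ 2) ≤ ζ ∧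
      avg (A j) j (fun a n => ∫ x in (-R)..R, ev B φ a (n + k) x ^ 2 * ev B β a (n + k) x) ≤ ζ ∧
      avg (A j) j (fun a n => ∫ x in (-1 : ℝ)..0, cutoff c (ev B φ a (n + k) x)) ≤
        4 * c * R + ζ := by
  set Q : (ℝ → ℕ → ℕ → ℝ) → ℕ → ℝ := fun φ j => avg (A j) j (fun a n => quad R (ev B φ a n))
    with hQ
  have hQ2 : ∀ φ, IsU p B vn φ → ∀ j,
      (1 / 2) * avg (A j) j (fun a n => ∫ x in (-R)..R, ev B φ a n x ^ 2) - 2 ≤ Q φ j := by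
    intro φ hφ j
    have h := avg_mono (A := A j) (j := j)
      fun a _ n _ => half_integral_sq_le_quad hR (hφ.continuous_ev hp hB a n)
    rwa [avg_sub, avg_const_mul, avg_const (hA j)] at h
  have hsqnn : ∀ φ : ℝ → ℕ → ℕ → ℝ, ∀ j,
      0 ≤ avg (A j) j (fun a n => ∫ x in (-R)..R, ev B φ a n x ^ 2) := by
    intro φ j
    rw [← avg_const (j := j) (hA j) 0]
    refine avg_mono fun a _ n _ => ?_
    exact intervalIntegral.integral_nonneg (by linarith) fun x _ => sq_nonneg _
  set X : Set ℝ := {x | ∃ φ, IsU p B vn φ ∧ ∀ᶠ j in (𝒢 : Filter ℕ), Q φ j ≤ x} with hX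
  have hX0 : (0 : ℝ) ∈ X := by
    refine ⟨fun _ _ _ => 0, isU_const 0, Eventually.of_forall fun j => ?_⟩
    simp [hQ, ev, quad, avg]
  have hXb : BddBelow X := by
    refine ⟨-2, ?_⟩
    rintro x ⟨φ, hφ, h⟩
    obtain ⟨j, hj⟩ := h.exists
    linarith [hQ2 φ hφ j, hsqnn φ j]
  set d := sInf X with hd
  have hd0 : d ≤ 0 := csInf_le hXb hX0
  set θ := min 1 (ζ / (12 * (1 + R))) with hθ
  have hθ0 : 0 < θ := lt_min one_pos (by positivity)
  have hθ1 : θ ≤ 1 := min_le_left _ _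
  have hθζ : θ * (12 * (1 + R)) ≤ ζ := by
    rw [← le_div_iff₀ (by positivity)]; exact min_le_right _ _
  have hη0 : 0 < θ ^ 2 := by positivity
  have hη1 : θ ^ 2 ≤ 1 := by nlinarith
  obtain ⟨x, ⟨φ, hφ, hφx⟩, hxd⟩ := exists_lt_of_csInf_lt ⟨0, hX0⟩
    (show sInf X < d + θ ^ 2 by linarith)
  have hφQ : ∀ᶠ j in (𝒢 : Filter ℕ), Q φ j ≤ d + θ ^ 2 := hφx.mono fun j hj => hj.trans hxd.le
  have hlow : ∀ ψ, IsU p B vn ψ → ∀ᶠ j in (𝒢 : Filter ℕ), d - θ ^ 2 ≤ Q ψ j := by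
    intro ψ hψ
    by_contra hcon
    rw [← Ultrafilter.eventually_not] at hcon
    have : d - θ ^ 2 ∈ X := ⟨ψ, hψ, hcon.mono fun j hj => (not_le.1 hj).le⟩
    linarith [csInf_le hXb this]
  refine ⟨φ, hφ, fun N => ?_⟩
  have hfin : ∀ᶠ j in (𝒢 : Filter ℕ), ∀ k ∈ Finset.range N,
      avg (A j) j (fun a n => ∫ x in (-R)..R, (ev B φ a (n + k) x - ev B φ a n x) ^ 2) ≤ ζ ∧
      avg (A j) j (fun a n => ∫ x in (-R)..R, ev B φ a (n + k) x ^ 2 * ev B β a (n + k) x) ≤ ζ ∧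
      avg (A j) j (fun a n => ∫ x in (-1 : ℝ)..0, cutoff c (ev B φ a (n + k) x)) ≤
        4 * c * R + ζ := by
    rw [Filter.eventually_all_finset]
    intro k hk
    set φk : ℝ → ℕ → ℕ → ℝ := fun c t n => φ c t (n + k) with hφk_def
    set βk : ℝ → ℕ → ℕ → ℝ := fun c t n => β c t (n + k) with hβk_def
    have hφk : IsU p B vn φk := hφ.shift k
    have hβk : IsU p B vn βk := hβ.shift k
    have hQk : ∀ᶠ j in (𝒢 : Filter ℕ), Q φk j ≤ d + 2 * θ ^ 2 := by
      obtain ⟨M, hM⟩ := hφ.1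
      set M' := M ^ 2 * (2 * R) + 2 * M
      have hsmall : ∀ᶠ j : ℕ in (𝒢 : Filter ℕ), k * (2 * M' / ((j : ℝ) + 1)) ≤ θ ^ 2 := by
        apply h𝒢
        have ht : Tendsto (fun j : ℕ => k * (2 * M' / ((j : ℝ) + 1))) atTop (𝓝 (k * 0)) :=
          (tendsto_const_div_atTop_nhds_zero_nat (2 * M') |>.comp (tendsto_add_atTop_nat 1)
            |>.congr fun j => by simp).const_mul _
        rw [mul_zero] at ht
        exact (ht.eventually (gt_mem_nhds hη0)).mono fun j hj => hj.le
      filter_upwards [hφQ, hsmall] with j h1 h2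
      have := avg_shift_iterate_le (hA j) (j := j) k (fun a n => quad R (ev B φ a n))
        (M := M') (fun a n => abs_quad_le (by linarith) fun x => hM _ _ _)
      have e : Q φk j = avg (A j) j (fun a n => quad R (ev B φ a (n + k))) := rfl
      rw [e]
      simp only [hQ] at h1
      linarith
    have hcφ : ∀ a n, Continuous (ev B φ a n) := hφ.continuous_ev hp hB
    have hcφk : ∀ a n, Continuous (ev B φk a n) := hφk.continuous_ev hp hB
    have hcβk : ∀ a n, Continuous (ev B βk a n) := hβk.continuous_ev hp hB
    have hdis : ∀ᶠ j in (𝒢 : Filter ℕ), d - θ ^ 2 ≤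
        Q (fun c t n => φk c t n + (-θ) * (βk c t n * φk c t n)) j :=
      hlow _ (hφk.add ((hβk.mul hφk).const_mul _))
    have hmid := hlow _ (hφ.add ((hφk.add (hφ.const_mul (-1))).const_mul (1 / 2)))
    have hcut := hlow _ (hφk.add ((hφk.comp (χ := cutoff c) (L := 1 / c) (by positivity)
      (cutoff_lipschitz hc) abs_cutoff_le_one).const_mul θ))
    filter_upwards [hφQ, hQk, hdis, hmid, hcut, hβz N] with j j1 j2 j3 j4 j5 j6
    refine ⟨?_, ?_, ?_⟩
    · have e : avg (A j) j (fun a n => ∫ x in (-R)..R, (ev B φ a (n + k) x - ev B φ a n x) ^ 2) =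
          2 * Q φ j + 2 * Q φk j - 4 * Q (fun c t n => φ c t n + 1 / 2 *
            (φk c t n + -1 * φ c t n)) j := by
        simp only [hQ]
        rw [← avg_const_mul, ← avg_const_mul, ← avg_const_mul, ← avg_add, ← avg_sub]
        congr 1
        ext a n
        have := quad_midpoint (hcφ a n) (hcφk a n) R
        have e' : ev B (fun c t n => φ c t n + 1 / 2 * (φk c t n + -1 * φ c t n)) a n =
            fun x => ev B φ a n x + 1 / 2 * (ev B φk a n x - ev B φ a n x) := by
          ext x
          simp only [ev]
          ring
        rw [e']
        exact this
      rw [e]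
      nlinarith
    · have e : Q (fun c t n => φk c t n + (-θ) * (βk c t n * φk c t n)) j ≤
          Q φk j - 2 * θ * avg (A j) j (fun a n => ∫ x in (-R)..R, ev B φ a (n + k) x ^ 2 *
            ev B β a (n + k) x) +
          θ ^ 2 * avg (A j) j (fun a n => ∫ x in (-R)..R, ev B φk a n x ^ 2) := by
        simp only [hQ]
        rw [← avg_const_mul, ← avg_const_mul, ← avg_sub, ← avg_add]
        refine avg_mono fun a ha n hn => ?_
        have h1 := quad_add (hcφk a n) (g := fun x => (-θ) * (ev B βk a n x * ev B φk a n x))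
          (((hcβk a n).mul (hcφk a n)).const_mul _) R
        have h2 : (∫ x in (-1 : ℝ)..0, (-θ) * (ev B βk a n x * ev B φk a n x)) = 0 := by
          rw [intervalIntegral.integral_congr (g := fun _ => 0)]
          · simp
          · intro x hx
            rw [uIcc_of_le (by norm_num)] at hx
            have : ev B βk a n x = 0 := j6 a ha (n + k)
              (by have := Finset.mem_range.1 hk; omega) x hx
            simp [this]
        have h3 : (∫ x in (-R)..R, ev B φk a n x * ((-θ) * (ev B βk a n x * ev B φk a n x))) =
            (-θ) * ∫ x in (-R)..R, ev B φ a (n + k) x ^ 2 * ev B β a (n + k) x := by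
          rw [← intervalIntegral.integral_const_mul]
          congr 1; ext x
          simp only [ev, hφk_def, hβk_def]
          ring
        have h4 : (∫ x in (-R)..R, ((-θ) * (ev B βk a n x * ev B φk a n x)) ^ 2) ≤
            θ ^ 2 * ∫ x in (-R)..R, ev B φk a n x ^ 2 := by
          rw [← intervalIntegral.integral_const_mul]
          have := hcφk a n
          have := hcβk a n
          apply intervalIntegral.integral_mono_on (by linarith)
          · apply Continuous.intervalIntegrable; fun_prop
          · apply Continuous.intervalIntegrable; fun_prop
          · intro x _
            have b0 : 0 ≤ ev B βk a n x := hβ0 _ _ _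
            have b1 : ev B βk a n x ≤ 1 := hβ1 _ _ _
            have b2 : ev B βk a n x ^ 2 ≤ 1 := by nlinarith
            have : (-θ * (ev B βk a n x * ev B φk a n x)) ^ 2 =
              θ ^ 2 * (ev B βk a n x ^ 2 * ev B φk a n x ^ 2) := by ring
            rw [this]
            gcongr
            nlinarith [sq_nonneg (ev B φk a n x)]
        rw [h2, h3] at h1
        have e2 : ev B (fun c t n => φk c t n + (-θ) * (βk c t n * φk c t n)) a n =
          fun x => ev B φk a n x + (-θ) * (ev B βk a n x * ev B φk a n x) := rfl
        rw [e2, h1]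
        linarith
      have e3 := hQ2 φk hφk j
      set Y := avg (A j) j (fun a n => ∫ x in (-R)..R, ev B φ a (n + k) x ^ 2 *
            ev B β a (n + k) x)
      have e4 : avg (A j) j (fun a n => ∫ x in (-R)..R, ev B φk a n x ^ 2) ≤ 8 := by linarith
      have e5 : 2 * θ * Y ≤ 2 * θ * (6 * θ) := by nlinarith
      have e6 := le_of_mul_le_mul_left e5 (by positivity)
      nlinarith
    · have e : Q (fun c' t n => φk c' t n + θ * cutoff c (φk c' t n)) j ≤
          Q φk j + (2 * θ * (4 * c * R) - 2 * θ * avg (A j) j (fun a n => ∫ x in (-1 : ℝ)..0,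
            cutoff c (ev B φ a (n + k) x)) + θ ^ 2 * (2 * R)) := by
        simp only [hQ]
        rw [← avg_const_mul, ← avg_const (j := j) (hA j) (2 * θ * (4 * c * R)),
          ← avg_const (j := j) (hA j) (θ ^ 2 * (2 * R)), ← avg_sub, ← avg_add, ← avg_add]
        refine avg_mono fun a ha n hn => ?_
        have hcc : Continuous (fun x => cutoff c (ev B φk a n x)) :=
          continuous_cutoff.comp (hcφk a n)
        have hcf := hcφk a n
        have h1 := quad_add (hcφk a n) (g := fun x => θ * cutoff c (ev B φk a n x))
          (hcc.const_mul _) R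
        have h3 : (∫ x in (-R)..R, ev B φk a n x * (θ * cutoff c (ev B φk a n x))) ≤
            ∫ x in (-R)..R, θ * (2 * c) := by
          apply intervalIntegral.integral_mono_on (by linarith)
          · apply Continuous.intervalIntegrable; fun_prop
          · apply Continuous.intervalIntegrable; fun_prop
          · intro x _
            have := mul_cutoff_le hc (ev B φk a n x)
            nlinarith
        have h4 : (∫ x in (-R)..R, (θ * cutoff c (ev B φk a n x)) ^ 2) ≤
            ∫ x in (-R)..R, θ ^ 2 := by
          apply intervalIntegral.integral_mono_on (by linarith)
          · apply Continuous.intervalIntegrable; fun_prop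
          · apply Continuous.intervalIntegrable; fun_prop
          · intro x _
            rw [mul_pow]
            have := cutoff_nonneg (c := c) (ev B φk a n x)
            have := cutoff_le_one (c := c) (ev B φk a n x)
            have : cutoff c (ev B φk a n x) ^ 2 ≤ 1 := by nlinarith
            nlinarith
        rw [intervalIntegral.integral_const, smul_eq_mul] at h3 h4
        rw [intervalIntegral.integral_const_mul] at h1
        have e2 : ev B (fun c' t n => φk c' t n + θ * cutoff c (φk c' t n)) a n =
          fun x => ev B φk a n x + θ * cutoff c (ev B φk a n x) := rfl
        have e3 : (∫ x in (-1 : ℝ)..0, cutoff c (ev B φ a (n + k) x)) =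
          ∫ x in (-1 : ℝ)..0, cutoff c (ev B φk a n x) := rfl
        rw [e2, h1, e3]
        linarith
      set Y := avg (A j) j (fun a n => ∫ x in (-1 : ℝ)..0, cutoff c (ev B φ a (n + k) x))
      have e5 : 2 * θ * Y ≤ 2 * θ * (4 * c * R + θ * (3 / 2 + R)) := by nlinarith
      have e6 := le_of_mul_le_mul_left e5 (by positivity)
      nlinarith
  exact hfin.mono fun j hj k hk => hj k (Finset.mem_range.2 hk)

end variational

section blocks

open scoped Classical

variable {α : Type*}

/-- The number of elements of `s` satisfying `P`. -/
noncomputable def num (s : Finset α) (P : α → Prop) : ℕ := (s.filter P).card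

lemma num_eq (s : Finset α) (P : α → Prop) [DecidablePred P] : num s P = (s.filter P).card := by
  unfold num; congr

lemma num_le_num {s s' : Finset α} {P Q : α → Prop} (h : ∀ x ∈ s, P x → x ∈ s' ∧ Q x) :
    num s P ≤ num s' Q := by
  refine Finset.card_le_card fun x hx => ?_
  rw [Finset.mem_filter] at hx ⊢
  exact h x hx.1 hx.2

lemma num_or_le (s : Finset α) (P Q : α → Prop) :
    num s (fun x => P x ∨ Q x) ≤ num s P + num s Q := by
  simp only [num_eq, Finset.filter_or]
  exact Finset.card_union_le _ _

/-- The points of `S` in the same cell of level `L` as `s`. -/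
noncomputable def block (cell : ℕ → α → ℤ) (S : Finset α) (L : ℕ) (s : α) : Finset α :=
  S.filter fun s' => cell L s' = cell L s

/-- The block of `s` at level `L` has three separated children of proportion at least `c`. -/
def Spread (cell : ℕ → α → ℤ) (S : Finset α) (c : ℝ) (s : α) (L : ℕ) : Prop :=
  ∃ x y z : ℤ, x + 2 ≤ y ∧ y + 2 ≤ z ∧ ∀ w, w = x ∨ w = y ∨ w = z →
    c * (block cell S L s).card ≤ ((block cell S L s).filter fun s' => cell (L + 1) s' = w).card

variable {cell : ℕ → α → ℤ} {S : Finset α} {b : ℕ}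

lemma mem_block {L : ℕ} {s s' : α} : s' ∈ block cell S L s ↔ s' ∈ S ∧ cell L s' = cell L s := by
  simp [block]

lemma block_eq {L : ℕ} {s s' : α} (h : cell L s' = cell L s) :
    block cell S L s' = block cell S L s := by
  unfold block; rw [h]

lemma cell_nested (hb : 0 < b)
    (hch : ∀ L x, b * cell L x ≤ cell (L + 1) x ∧ cell (L + 1) x < b * cell L x + b)
    {L L' : ℕ} (hL : L ≤ L') {x y : α} (h : cell L' x = cell L' y) : cell L x = cell L y := by
  induction L', hL using Nat.le_induction with
  | base => exact h
  | succ L' _ ih =>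
    apply ih
    have h1 := hch L' x
    have h2 := hch L' y
    rw [h] at h1
    have hb' : (0 : ℤ) < b := by exact_mod_cast hb
    have e1 : cell L' x < cell L' y + 1 := by
      by_contra hc; push Not at hc; nlinarith
    have e2 : cell L' y < cell L' x + 1 := by
      by_contra hc; push Not at hc; nlinarith
    omega

/-- The weak-type maximal inequality along the tree of cells. -/
lemma tree_maximal (hb : 0 < b)
    (hch : ∀ L x, b * cell L x ≤ cell (L + 1) x ∧ cell (L + 1) x < b * cell L x + b)
    (P : α → Prop) (ζ : ℝ) :
    ζ * num S (fun s => ∃ L, ζ * (block cell S L s).card < num (block cell S L s) P) ≤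
      num S P := by
  unfold num
  set bad : α → Prop := fun s => ∃ L, ζ * (block cell S L s).card <
      ((block cell S L s).filter P).card with hbad
  rcases lt_or_ge ζ 0 with hζ | hζ
  · exact (mul_nonpos_of_nonpos_of_nonneg hζ.le (Nat.cast_nonneg _)).trans (Nat.cast_nonneg _)
  set lev : α → ℕ := fun s => if h : bad s then Nat.find h else 0 with hlev
  have hlev1 : ∀ s, bad s → ζ * (block cell S (lev s) s).card <
      ((block cell S (lev s) s).filter P).card := by
    intro s hs
    simp only [hlev, hs, dite_true]
    exact Nat.find_spec hs
  have hlev2 : ∀ s, bad s → ∀ L, ζ * (block cell S L s).card <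
      ((block cell S L s).filter P).card → lev s ≤ L := by
    intro s hs L hL
    simp only [hlev, hs, dite_true]
    exact Nat.find_min' hs hL
  set 𝒞 : Finset (Finset α) := (S.filter bad).image fun s => block cell S (lev s) s with h𝒞
  have hdisj : ∀ s, bad s → ∀ s', bad s' → lev s ≤ lev s' → ∀ x,
      x ∈ block cell S (lev s) s → x ∈ block cell S (lev s') s' →
      block cell S (lev s) s = block cell S (lev s') s' := by
    intro s hs s' hs' hle x hx hx'
    rw [mem_block] at hx hx'
    have e : cell (lev s) s' = cell (lev s) s :=
      (cell_nested hb hch hle hx'.2).symm.trans hx.2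
    have e2 := hlev1 s hs
    rw [← block_eq e] at e2
    have e3 := hlev2 s' hs' _ e2
    rw [← block_eq e, le_antisymm hle e3]
  have hpd : (𝒞 : Set (Finset α)).PairwiseDisjoint (fun C => C.filter P) := by
    intro C hC C' hC' hne
    simp only [h𝒞, Finset.coe_image, Set.mem_image, Finset.mem_coe, Finset.mem_filter] at hC hC'
    obtain ⟨s, ⟨-, hs⟩, rfl⟩ := hC
    obtain ⟨s', ⟨-, hs'⟩, rfl⟩ := hC'
    rw [Function.onFun, Finset.disjoint_left]
    intro x hx hx'
    rw [Finset.mem_filter] at hx hx'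
    apply hne
    rcases le_total (lev s) (lev s') with h | h
    · exact hdisj s hs s' hs' h x hx.1 hx'.1
    · exact (hdisj s' hs' s hs h x hx'.1 hx.1).symm
  have h1 : ((S.filter bad).card : ℝ) ≤ ∑ C ∈ 𝒞, (C.card : ℝ) := by
    have : S.filter bad ⊆ 𝒞.biUnion id := by
      intro s hs
      rw [Finset.mem_biUnion]
      refine ⟨block cell S (lev s) s, Finset.mem_image_of_mem _ hs, ?_⟩
      exact mem_block.2 ⟨(Finset.mem_filter.1 hs).1, rfl⟩
    exact_mod_cast (Finset.card_le_card this).trans Finset.card_biUnion_le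
  have h2 : (∑ C ∈ 𝒞, ((C.filter P).card : ℝ)) ≤ (S.filter P).card := by
    rw [← Nat.cast_sum, ← Finset.card_biUnion hpd]
    refine Nat.cast_le.2 (Finset.card_le_card ?_)
    intro x hx
    rw [Finset.mem_biUnion] at hx
    obtain ⟨C, hC, hx⟩ := hx
    rw [Finset.mem_filter] at hx ⊢
    obtain ⟨s, -, rfl⟩ := Finset.mem_image.1 hC
    exact ⟨(mem_block.1 hx.1).1, hx.2⟩
  calc ζ * (S.filter bad).card ≤ ζ * ∑ C ∈ 𝒞, (C.card : ℝ) := by gcongr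
    _ = ∑ C ∈ 𝒞, ζ * C.card := Finset.mul_sum _ _ _
    _ ≤ ∑ C ∈ 𝒞, ((C.filter P).card : ℝ) := by
      apply Finset.sum_le_sum
      intro C hC
      obtain ⟨s, hs, rfl⟩ := Finset.mem_image.1 hC
      exact (hlev1 s (Finset.mem_filter.1 hs).2).le
    _ ≤ _ := h2

/-- The one-sided weak-type maximal inequality on `ℕ`. -/
lemma time_maximal (P M : ℕ → Prop) {ζ : ℝ} (hζ : 0 ≤ ζ)
    (hM : ∀ t, M t → ∃ u ≤ t, ζ * ((t : ℝ) + 1 - u) < num (Finset.Icc u t) P) (T : ℕ) :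
    ζ * num (Finset.range T) M ≤ num (Finset.range T) P := by
  induction T using Nat.strong_induction_on with
  | _ T ih =>
    rcases T with _ | T
    · simp [num]
    by_cases hT : M T
    · obtain ⟨u, hu, h⟩ := hM T hT
      have h1 : (num (Finset.range (T + 1)) M : ℝ) ≤ num (Finset.range u) M + (T + 1 - u) := by
        have hsub : (Finset.range (T + 1)).filter M ⊆
            (Finset.range u).filter M ∪ Finset.Icc u T := by
          intro x hx
          simp only [Finset.mem_filter, Finset.mem_range, Finset.mem_union, Finset.mem_Icc] at hx ⊢
          rcases lt_or_ge x u with h | h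
          · exact Or.inl ⟨h, hx.2⟩
          · exact Or.inr ⟨h, by omega⟩
        have h3 := (Finset.card_le_card hsub).trans (Finset.card_union_le _ _)
        rw [Nat.card_Icc] at h3
        have h4 : (num (Finset.range (T + 1)) M : ℝ) ≤
          (num (Finset.range u) M + (T + 1 - u) : ℕ) := by exact_mod_cast h3
        rw [Nat.cast_add, Nat.cast_sub (by omega)] at h4
        push_cast at h4
        exact h4
      have h2 : (num (Finset.range u) P : ℝ) + num (Finset.Icc u T) P ≤
          num (Finset.range (T + 1)) P := by
        unfold num
        rw [← Nat.cast_add, ← Finset.card_union_of_disjoint]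
        · refine Nat.cast_le.2 (Finset.card_le_card ?_)
          intro x hx
          simp only [Finset.mem_filter, Finset.mem_range, Finset.mem_union, Finset.mem_Icc] at hx ⊢
          rcases hx with hx | hx
          · exact ⟨by omega, hx.2⟩
          · exact ⟨by omega, hx.2⟩
        · rw [Finset.disjoint_left]
          intro x hx hx'
          simp only [Finset.mem_filter, Finset.mem_range, Finset.mem_Icc] at hx hx'
          omega
      have h3 := ih u (by omega)
      have h4 := mul_le_mul_of_nonneg_left h1 hζ
      linarith
    · have h1 : num (Finset.range (T + 1)) M = num (Finset.range T) M := by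
        unfold num
        rw [Finset.range_add_one, Finset.filter_insert, if_neg hT]
      have h2 : num (Finset.range T) P ≤ num (Finset.range (T + 1)) P :=
        num_le_num fun x hx hP => ⟨by rw [Finset.mem_range] at hx ⊢; omega, hP⟩
      rw [h1]
      exact (ih T (by omega)).trans (by exact_mod_cast h2)

end blocks

section entropy

open scoped Classical

variable {α : Type*} {cell : ℕ → α → ℤ} {S : Finset α} {b : ℕ}

lemma mul_log_div_le {n m : ℝ} (hn : 0 ≤ n) (hm : 0 ≤ m) : m * Real.log (n / m) ≤ n := by
  rcases hm.eq_or_lt with rfl | hm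
  · simpa using hn
  have h1 : Real.log (n / m) ≤ n / m := by
    rcases hn.eq_or_lt with rfl | hn
    · simp
    linarith [Real.log_le_sub_one_of_pos (div_pos hn hm)]
  calc m * Real.log (n / m) ≤ m * (n / m) := by gcongr
    _ = n := by field_simp

lemma mul_log_div_le_of_le {n m x : ℝ} (hn : 0 ≤ n) (hm : 0 ≤ m) (hx : 0 < x)
    (h : m ≤ 1 / (4 * x ^ 2) * n) : m * Real.log (n / m) ≤ n / x := by
  rcases hm.eq_or_lt with rfl | hm
  · simp; positivity
  rcases hn.eq_or_lt with rfl | hn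
  · simp
  set y := √(n / m) with hy
  have hy2 : y ^ 2 = n / m := Real.sq_sqrt (by positivity)
  have hy0 : 0 < y := Real.sqrt_pos.2 (by positivity)
  have h1 : Real.log (n / m) = 2 * Real.log y := by rw [← hy2, Real.log_pow]; norm_num
  have h2 : Real.log y ≤ y := by linarith [Real.log_le_sub_one_of_pos hy0]
  have hmy : m * y ^ 2 = n := by rw [hy2]; field_simp
  have h3 : (2 * x) ^ 2 ≤ y ^ 2 := by
    rw [hy2, le_div_iff₀ hm]
    have : 1 / (4 * x ^ 2) * n * (4 * x ^ 2) = n := by field_simp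
    nlinarith [mul_le_mul_of_nonneg_right h (by positivity : 0 ≤ 4 * x ^ 2)]
  have h4 : 2 * x ≤ y := (pow_le_pow_iff_left₀ (by positivity) hy0.le two_ne_zero).1 h3
  rw [h1, le_div_iff₀ hx, ← hmy]
  have : m * (2 * Real.log y) * x ≤ m * (2 * y) * x := by gcongr
  have : m * y * (2 * x) ≤ m * y * y := by gcongr
  nlinarith

lemma card_le_four_of_not_separated {H : Finset ℤ}
    (h : ∀ x ∈ H, ∀ y ∈ H, ∀ z ∈ H, x + 2 ≤ y → y + 2 ≤ z → False) : H.card ≤ 4 := by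
  by_contra hc
  push Not at hc
  have hne : H.Nonempty := Finset.card_pos.1 (by omega)
  set x := H.min' hne
  set z := H.max' hne
  have : ∃ y ∈ H, y ∉ ({x, x + 1, z, z - 1} : Finset ℤ) := by
    by_contra hcon
    push Not at hcon
    have h1 := Finset.card_le_card (show H ⊆ ({x, x + 1, z, z - 1} : Finset ℤ) from hcon)
    have h2 : ({x, x + 1, z, z - 1} : Finset ℤ).card ≤ 4 := Finset.card_le_four
    omega
  obtain ⟨y, hy, hy'⟩ := this
  have e1 : x ≤ y := H.min'_le y hy
  have e2 : y ≤ z := H.le_max' y hy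
  simp only [Finset.mem_insert, Finset.mem_singleton, not_or] at hy'
  exact h x (H.min'_mem hne) y hy z (H.max'_mem hne) (by omega) (by omega)

/-- The entropy of a partition of `C` into at most `b` pieces. -/
lemma sum_log_le (hb : 0 < b) (C : Finset α) (g : α → ℤ) (X : ℤ)
    (hg : ∀ s ∈ C, X ≤ g s ∧ g s < X + b) :
    ∑ s ∈ C, Real.log (C.card / (C.filter fun s' => g s' = g s).card) ≤ C.card *
      (5 + b * if (∃ x y z : ℤ, x + 2 ≤ y ∧ y + 2 ≤ z ∧ ∀ w, w = x ∨ w = y ∨ w = z →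
        1 / (4 * (b : ℝ) ^ 2) * C.card ≤ (C.filter fun s' => g s' = w).card) then 1 else 0) := by
  set I := Finset.Ico X (X + b) with hI
  set n : ℝ := (C.card : ℝ) with hn
  set m : ℤ → ℝ := fun w => ((C.filter fun s' => g s' = w).card : ℝ) with hm
  have hb' : (0 : ℝ) < b := by exact_mod_cast hb
  have hn0 : 0 ≤ n := Nat.cast_nonneg _
  have hm0 : ∀ w, 0 ≤ m w := fun w => Nat.cast_nonneg _
  have hIc : (I.card : ℝ) = b := by simp [hI]
  have hsum : ∑ s ∈ C, Real.log (n / (C.filter fun s' => g s' = g s).card) =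
      ∑ w ∈ I, m w * Real.log (n / m w) := by
    rw [← Finset.sum_fiberwise_of_maps_to (t := I) (g := g)
      (fun s hs => Finset.mem_Ico.2 (hg s hs))]
    refine Finset.sum_congr rfl fun w _ => ?_
    rw [Finset.sum_congr rfl (g := fun _ => Real.log (n / m w))]
    · simp [hm]
    · intro s hs
      rw [(Finset.mem_filter.1 hs).2]
  rw [hsum]
  split_ifs with hsp
  · calc ∑ w ∈ I, m w * Real.log (n / m w) ≤ ∑ w ∈ I, n :=
        Finset.sum_le_sum fun w _ => mul_log_div_le hn0 (hm0 w)
      _ = b * n := by rw [Finset.sum_const, nsmul_eq_mul, hIc]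
      _ ≤ n * (5 + b * 1) := by nlinarith
  · set Hv := I.filter fun w => 1 / (4 * (b : ℝ) ^ 2) * n ≤ m w with hHv
    have h4 : (Hv.card : ℝ) ≤ 4 := by
      have : Hv.card ≤ 4 := by
        apply card_le_four_of_not_separated
        intro x hx y hy z hz hxy hyz
        apply hsp
        refine ⟨x, y, z, hxy, hyz, ?_⟩
        rintro w (rfl | rfl | rfl)
        · exact (Finset.mem_filter.1 hx).2
        · exact (Finset.mem_filter.1 hy).2
        · exact (Finset.mem_filter.1 hz).2
      exact_mod_cast this
    have h1 : ∑ w ∈ Hv, m w * Real.log (n / m w) ≤ 4 * n := by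
      calc ∑ w ∈ Hv, m w * Real.log (n / m w) ≤ ∑ w ∈ Hv, n :=
          Finset.sum_le_sum fun w _ => mul_log_div_le hn0 (hm0 w)
        _ = Hv.card * n := by rw [Finset.sum_const, nsmul_eq_mul]
        _ ≤ 4 * n := by gcongr
    have h2 : ∑ w ∈ I.filter (fun w => ¬ 1 / (4 * (b : ℝ) ^ 2) * n ≤ m w),
        m w * Real.log (n / m w) ≤ n := by
      calc _ ≤ ∑ w ∈ I.filter (fun w => ¬ 1 / (4 * (b : ℝ) ^ 2) * n ≤ m w), n / b :=
          Finset.sum_le_sum fun w hw => mul_log_div_le_of_le hn0 (hm0 w) hb'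
            (not_le.1 (Finset.mem_filter.1 hw).2).le
        _ ≤ ∑ w ∈ I, n / b := Finset.sum_le_sum_of_subset_of_nonneg (Finset.filter_subset _ _)
            (fun _ _ _ => by positivity)
        _ = n := by rw [Finset.sum_const, nsmul_eq_mul, hIc]; field_simp
    rw [← Finset.sum_filter_add_sum_filter_not I fun w => 1 / (4 * (b : ℝ) ^ 2) * n ≤ m w]
    linarith

lemma sum_log_block_le (hb : 0 < b)
    (hch : ∀ L x, b * cell L x ≤ cell (L + 1) x ∧ cell (L + 1) x < b * cell L x + b) (L : ℕ) :
    ∑ s ∈ S, (Real.log (block cell S L s).card - Real.log (block cell S (L + 1) s).card) ≤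
      ∑ s ∈ S, (5 + b * if Spread cell S (1 / (4 * (b : ℝ) ^ 2)) s L then (1 : ℝ) else 0) := by
  rw [← Finset.sum_fiberwise_of_maps_to (t := S.image (cell L)) (g := cell L)
      (fun s hs => Finset.mem_image_of_mem _ hs),
    ← Finset.sum_fiberwise_of_maps_to (t := S.image (cell L)) (g := cell L) (s := S)
      (fun s hs => Finset.mem_image_of_mem _ hs)]
  refine Finset.sum_le_sum fun w hw => ?_
  obtain ⟨s₀, hs₀, rfl⟩ := Finset.mem_image.1 hw
  set C := S.filter (fun i => cell L i = cell L s₀) with hC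
  have hCb : ∀ s ∈ C, block cell S L s = C := fun s hs => block_eq (Finset.mem_filter.1 hs).2
  have hCb' : ∀ s ∈ C, block cell S (L + 1) s =
      C.filter fun s' => cell (L + 1) s' = cell (L + 1) s := by
    intro s hs
    ext x
    simp only [mem_block, hC, Finset.mem_filter]
    constructor
    · rintro ⟨h1, h2⟩
      exact ⟨⟨h1, (cell_nested hb hch (Nat.le_succ L) h2).trans (Finset.mem_filter.1 hs).2⟩, h2⟩
    · rintro ⟨⟨h1, -⟩, h2⟩
      exact ⟨h1, h2⟩
  have key := sum_log_le hb C (cell (L + 1)) (b * cell L s₀) (fun s hs => by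
    have := hch L s
    rwa [(Finset.mem_filter.1 hs).2] at this)
  refine le_trans (le_of_eq ?_) (key.trans (le_of_eq ?_))
  · refine Finset.sum_congr rfl fun s hs => ?_
    have hpos : (0 : ℝ) < C.card := by exact_mod_cast Finset.card_pos.2 ⟨s, hs⟩
    have hpos' : (0 : ℝ) < (C.filter fun s' => cell (L + 1) s' = cell (L + 1) s).card := by
      have hmem : s ∈ C.filter fun s' => cell (L + 1) s' = cell (L + 1) s :=
        Finset.mem_filter.2 ⟨hs, rfl⟩
      exact_mod_cast Finset.card_pos.2 ⟨s, hmem⟩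
    rw [hCb s hs, hCb' s hs, Real.log_div hpos.ne' hpos'.ne']
  · rw [← nsmul_eq_mul, ← Finset.sum_const]
    refine Finset.sum_congr rfl fun s hs => ?_
    unfold Spread
    rw [hCb s hs]

/-- Many blocks are spread when the number of cells is large. -/
lemma sum_spread_ge (hb : 0 < b)
    (hch : ∀ L x, b * cell L x ≤ cell (L + 1) x ∧ cell (L + 1) x < b * cell L x + b) {T₀ T : ℕ}
    (hT : T₀ ≤ T) (h0 : ∀ s ∈ S, ∀ s' ∈ S, cell 0 s = cell 0 s')
    (hinj : ∀ s ∈ S, ∀ s' ∈ S, cell T s = cell T s' → s = s')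
    (hlog : 10 * (T : ℝ) ≤ Real.log S.card) (hT₀ : (5 + b) * T₀ ≤ T) :
    4 * (T : ℝ) * S.card ≤ b * ∑ s ∈ S, (num (Finset.Ico T₀ T)
      (Spread cell S (1 / (4 * (b : ℝ) ^ 2)) s) : ℝ) := by
  have h1 : ∑ s ∈ S, Real.log S.card = ∑ L ∈ Finset.range T, ∑ s ∈ S,
      (Real.log (block cell S L s).card - Real.log (block cell S (L + 1) s).card) := by
    rw [Finset.sum_comm]
    refine Finset.sum_congr rfl fun s hs => ?_
    rw [Finset.sum_range_sub' (fun L => Real.log (block cell S L s).card)]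
    have e0 : block cell S 0 s = S := by
      ext x; simp only [mem_block, and_iff_left_iff_imp]; exact fun hx => h0 x hx s hs
    have e1 : block cell S T s = {s} := by
      ext x; simp only [mem_block, Finset.mem_singleton]
      exact ⟨fun h => hinj x h.1 s hs h.2, by rintro rfl; exact ⟨hs, rfl⟩⟩
    rw [e0, e1]; simp
  rw [Finset.sum_const, nsmul_eq_mul] at h1
  have hsplit := Finset.sum_range_add_sum_Ico (fun L => ∑ s ∈ S,
      (Real.log (block cell S L s).card - Real.log (block cell S (L + 1) s).card)) hT
  have h2 : ∑ L ∈ Finset.range T₀, ∑ s ∈ S,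
      (Real.log (block cell S L s).card - Real.log (block cell S (L + 1) s).card) ≤
      T₀ * (S.card * (5 + b)) := by
    calc _ ≤ ∑ L ∈ Finset.range T₀, ∑ s ∈ S, ((5 : ℝ) + b) := by
          refine Finset.sum_le_sum fun L _ => (sum_log_block_le hb hch L).trans ?_
          refine Finset.sum_le_sum fun s _ => ?_
          have : (0 : ℝ) ≤ b := Nat.cast_nonneg _
          split_ifs <;> linarith
      _ = _ := by simp only [Finset.sum_const, nsmul_eq_mul, Finset.card_range]
  have h3 : ∑ L ∈ Finset.Ico T₀ T, ∑ s ∈ S,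
      (Real.log (block cell S L s).card - Real.log (block cell S (L + 1) s).card) ≤
      (T - T₀) * (S.card * 5) + b * ∑ s ∈ S, (num (Finset.Ico T₀ T)
      (Spread cell S (1 / (4 * (b : ℝ) ^ 2)) s) : ℝ) := by
    refine (Finset.sum_le_sum fun L _ => sum_log_block_le hb hch L).trans (le_of_eq ?_)
    rw [Finset.sum_comm]
    simp only [Finset.sum_add_distrib, ← Finset.mul_sum, Finset.sum_const, nsmul_eq_mul,
      Nat.card_Ico, Finset.sum_boole, num_eq]
    rw [Nat.cast_sub hT]
  rw [← hsplit] at h1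
  have hT₀' : ((5 : ℝ) + b) * T₀ ≤ T := by exact_mod_cast hT₀
  have hS : (0 : ℝ) ≤ S.card := Nat.cast_nonneg _
  have hlog' := mul_le_mul_of_nonneg_left hlog hS
  have hT' := mul_le_mul_of_nonneg_left hT₀' hS
  have : (0 : ℝ) ≤ T₀ * S.card := by positivity
  nlinarith

end entropy

section selection

open scoped Classical

variable {α : Type*} {cell : ℕ → α → ℤ} {S : Finset α} {b T₀ T : ℕ} {P Q : α → ℕ → Prop}

/-- The number of pairs `(s, t)` in `S ×ˢ Ico T₀ T` satisfying `P`. -/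
noncomputable def cnt (S : Finset α) (T₀ T : ℕ) (P : α → ℕ → Prop) : ℝ :=
  ∑ s ∈ S, (num (Finset.Ico T₀ T) (P s) : ℝ)

/-- No level among `t, t - 1, …, t - Β + 1` satisfies `P s`. -/
def Idle (P : α → ℕ → Prop) (Β : ℕ) (s : α) (t : ℕ) : Prop := ∀ i < Β, i ≤ t → ¬ P s (t - i)

lemma Idle.anti {Β Β' : ℕ} (h : Β ≤ Β') {s : α} {t : ℕ} (hi : Idle P Β' s t) : Idle P Β s t :=
  fun i hi' => hi i (hi'.trans_le h)

lemma cnt_nonneg : 0 ≤ cnt S T₀ T P := Finset.sum_nonneg fun _ _ => Nat.cast_nonneg _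

lemma cnt_mono (h : ∀ s ∈ S, ∀ t, T₀ ≤ t → t < T → P s t → Q s t) :
    cnt S T₀ T P ≤ cnt S T₀ T Q := by
  refine Finset.sum_le_sum fun s hs => Nat.cast_le.2 (num_le_num fun t ht hP =>
    ⟨ht, h s hs t (Finset.mem_Ico.1 ht).1 (Finset.mem_Ico.1 ht).2 hP⟩)

lemma cnt_or_le : cnt S T₀ T (fun s t => P s t ∨ Q s t) ≤ cnt S T₀ T P + cnt S T₀ T Q := by
  unfold cnt
  rw [← Finset.sum_add_distrib]
  refine Finset.sum_le_sum fun s hs => ?_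
  exact_mod_cast num_or_le _ _ _

lemma cnt_and_not (h : ∀ s t, Q s t → P s t) :
    cnt S T₀ T (fun s t => P s t ∧ ¬ Q s t) = cnt S T₀ T P - cnt S T₀ T Q := by
  unfold cnt
  rw [← Finset.sum_sub_distrib]
  refine Finset.sum_congr rfl fun s _ => ?_
  have : (Finset.Ico T₀ T).filter (Q s) ⊆ (Finset.Ico T₀ T).filter (P s) := by
    intro t ht
    rw [Finset.mem_filter] at ht ⊢
    exact ⟨ht.1, h s t ht.2⟩
  simp only [num_eq]
  rw [← Nat.cast_sub (Finset.card_le_card this), ← Finset.card_sdiff_of_subset this]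
  congr 2
  ext t
  simp only [Finset.mem_filter, Finset.mem_sdiff]
  tauto

lemma cnt_true (hT : T₀ ≤ T) : cnt S T₀ T (fun _ _ => True) = S.card * ((T : ℝ) - T₀) := by
  simp [cnt, num_eq, Nat.cast_sub hT, mul_sub]

lemma cnt_not (hT : T₀ ≤ T) :
    cnt S T₀ T (fun s t => ¬ P s t) = S.card * ((T : ℝ) - T₀) - cnt S T₀ T P := by
  rw [← cnt_true hT, ← cnt_and_not (fun _ _ _ => trivial)]
  simp

lemma exists_not_of_cnt_lt (hT : T₀ ≤ T) (h : cnt S T₀ T P < S.card * ((T : ℝ) - T₀)) :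
    ∃ s ∈ S, ∃ t, T₀ ≤ t ∧ t < T ∧ ¬ P s t := by
  by_contra hcon
  push Not at hcon
  rw [← cnt_true hT] at h
  exact absurd (cnt_mono fun s hs t h1 h2 _ => hcon s hs t h1 h2) (not_le.2 h)

lemma cnt_time_maximal (P E : α → ℕ → Prop) {ζ : ℝ} (hζ : 0 ≤ ζ)
    (hE : ∀ s t, E s t → ∃ u ≤ t, ζ * ((t : ℝ) + 1 - u) <
      num (Finset.Icc u t) fun i => T₀ ≤ i ∧ P s i) :
    ζ * cnt S T₀ T E ≤ cnt S T₀ T P := by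
  unfold cnt
  rw [Finset.mul_sum]
  refine Finset.sum_le_sum fun s _ => ?_
  refine le_trans ?_ ((time_maximal (fun i => T₀ ≤ i ∧ P s i) (E s) hζ (hE s) T).trans
    (Nat.cast_le.2 (num_le_num fun t ht hP =>
      ⟨Finset.mem_Ico.2 ⟨hP.1, Finset.mem_range.1 ht⟩, hP.2⟩)))
  refine mul_le_mul_of_nonneg_left (Nat.cast_le.2 (num_le_num fun t ht hP => ⟨?_, hP⟩)) hζ
  exact Finset.mem_range.2 (Finset.mem_Ico.1 ht).2

lemma cnt_eq_sum : cnt S T₀ T P = ∑ t ∈ Finset.Ico T₀ T, (num S (fun s => P s t) : ℝ) := by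
  simp only [cnt, num, ← Finset.sum_boole]
  exact Finset.sum_comm

lemma cnt_tree_maximal (hb : 0 < b)
    (hch : ∀ L x, b * cell L x ≤ cell (L + 1) x ∧ cell (L + 1) x < b * cell L x + b)
    (P : α → ℕ → Prop) (ζ : ℝ) :
    ζ * cnt S T₀ T (fun s t => ∃ L, ζ * (block cell S L s).card <
      num (block cell S L s) fun s' => P s' t) ≤ cnt S T₀ T P := by
  rw [cnt_eq_sum, cnt_eq_sum, Finset.mul_sum]
  exact Finset.sum_le_sum fun t _ => tree_maximal hb hch (fun s => P s t) ζ

lemma cnt_many_le {N : ℕ} (P : ℕ → α → ℕ → Prop) :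
    N * cnt S T₀ T (fun s t => N < 2 * num (Finset.range N) fun k => P k s t) ≤
      2 * ∑ k ∈ Finset.range N, cnt S T₀ T (P k) := by
  have e : ∑ k ∈ Finset.range N, cnt S T₀ T (P k) =
      ∑ s ∈ S, ∑ t ∈ Finset.Ico T₀ T, (num (Finset.range N) (fun k => P k s t) : ℝ) := by
    simp only [cnt, num, ← Finset.sum_boole]
    rw [Finset.sum_comm]
    exact Finset.sum_congr rfl fun s _ => Finset.sum_comm
  rw [e, cnt, Finset.mul_sum, Finset.mul_sum]
  refine Finset.sum_le_sum fun s _ => ?_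
  rw [num, ← Finset.sum_boole, Finset.mul_sum, Finset.mul_sum]
  refine Finset.sum_le_sum fun t _ => ?_
  split_ifs with h
  · rw [mul_one]; exact_mod_cast h.le
  · rw [mul_zero]; positivity

lemma cnt_shift_le (M : ℕ) :
    cnt S T₀ T (fun s t => T₀ + M ≤ t ∧ P s (t - M)) ≤ cnt S T₀ T P := by
  refine Finset.sum_le_sum fun s _ => Nat.cast_le.2 ?_
  refine Finset.card_le_card_of_injOn (fun t => t - M) ?_ ?_
  · intro t ht
    simp only [Finset.coe_filter, Finset.mem_Ico, Set.mem_ofPred_eq] at ht ⊢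
    exact ⟨by omega, ht.2.2⟩
  · intro t ht t' ht' h
    simp only [Finset.coe_filter, Finset.mem_Ico, Set.mem_ofPred_eq] at ht ht' h
    omega

/-- Selection of a scale at which, along most windows, nothing bad happens. -/
theorem exists_good_scale (hb : 0 < b)
    (hch : ∀ L x, b * cell L x ≤ cell (L + 1) x ∧ cell (L + 1) x < b * cell L x + b)
    (hS : S.Nonempty) (hT : T₀ < T) {p₀ : ℝ} (hp₀ : 0 < p₀) {NC : α → ℕ → Prop}
    (hNC : p₀ * (S.card * ((T : ℝ) - T₀)) ≤ cnt S T₀ T NC) {M Β : ℕ} (hΒ : 1 ≤ Β)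
    (hidle : cnt S T₀ T (Idle NC Β) - cnt S T₀ T (Idle NC (M + Β)) ≤
      p₀ / 50 * (S.card * ((T : ℝ) - T₀)))
    (hM : 40 * (M : ℝ) ≤ p₀ * ((T : ℝ) - T₀)) {ζ ζ₁ ζ₂ : ℝ} (hζ₁ : 0 < ζ₁)
    (hζ₂ : 0 < ζ₂) (hζ : 8 * ζ < p₀ * (ζ₁ * ζ₂)) {N : ℕ} (hN : 0 < N) (P : ℕ → α → ℕ → Prop)
    (hP : ∑ k ∈ Finset.range N, cnt S T₀ T (P k) ≤ ζ * (N * (S.card * ((T : ℝ) - T₀)))) :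
    ∃ s ∈ S, ∃ t₀, T₀ + 10 * M ≤ t₀ ∧ t₀ < T ∧ ∃ K ⊆ Finset.range N, N ≤ 2 * K.card ∧
      (∀ k ∈ K, ∀ u ≤ t₀, (num (Finset.Icc u t₀) (fun i => T₀ ≤ i ∧ ∃ L,
        ζ₁ * (block cell S L s).card < num (block cell S L s) fun s' => P k s' i) : ℝ)
          ≤ ζ₂ * ((t₀ : ℝ) + 1 - u)) ∧
      (∀ u ≤ t₀, t₀ + 1 ≤ u + M → (num (Finset.Icc u t₀) (Idle NC Β s) : ℝ) ≤
        1 / 12 * ((t₀ : ℝ) + 1 - u)) := by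
  set X := M + Β with hX
  set Tot : ℝ := S.card * ((T : ℝ) - T₀) with hTot
  have hS' : (0 : ℝ) < S.card := by exact_mod_cast hS.card_pos
  have hT' : (0 : ℝ) < (T : ℝ) - T₀ := sub_pos.2 (by exact_mod_cast hT)
  have hTot0 : 0 < Tot := by positivity
  have hN' : (0 : ℝ) < N := by exact_mod_cast hN
  set bad1 : ℕ → α → ℕ → Prop := fun k s i => ∃ L,
    ζ₁ * (block cell S L s).card < num (block cell S L s) fun s' => P k s' i with hbad1
  set bad2 : ℕ → α → ℕ → Prop := fun k s t => ∃ u ≤ t, ζ₂ * ((t : ℝ) + 1 - u) <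
    num (Finset.Icc u t) fun i => T₀ ≤ i ∧ bad1 k s i with hbad2
  set E1 : α → ℕ → Prop := fun s t => ∃ u ≤ t, 1 / 12 * ((t : ℝ) + 1 - u) <
    num (Finset.Icc u t) fun i => T₀ ≤ i ∧ (Idle NC Β s i ∧ ¬ Idle NC X s i) with hE1
  set E2 : α → ℕ → Prop := fun s t => T₀ + M ≤ t ∧ Idle NC Β s (t - M) with hE2
  set E3 : α → ℕ → Prop := fun s t => t < T₀ + 10 * M with hE3
  set E4 : α → ℕ → Prop := fun s t => N < 2 * num (Finset.range N) fun k => bad2 k s t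
    with hE4
  have h1 : cnt S T₀ T E1 ≤ 12 / 50 * p₀ * Tot := by
    have e1 := cnt_time_maximal (S := S) (T₀ := T₀) (T := T)
      (fun s i => Idle NC Β s i ∧ ¬ Idle NC X s i) E1 (ζ := 1 / 12) (by norm_num) (fun _ _ h => h)
    rw [cnt_and_not (fun s t h => h.anti (by omega))] at e1
    linarith
  have h2 : cnt S T₀ T E2 ≤ (1 - p₀) * Tot := by
    refine (cnt_shift_le M).trans ?_
    have : cnt S T₀ T (Idle NC Β) ≤ cnt S T₀ T (fun s t => ¬ NC s t) :=
      cnt_mono fun s _ t _ _ h => by simpa using h 0 (by omega) (by omega)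
    rw [cnt_not hT.le] at this
    linarith
  have h3 : cnt S T₀ T E3 ≤ p₀ / 4 * Tot := by
    have : cnt S T₀ T E3 ≤ ∑ s ∈ S, (10 * (M : ℝ)) := by
      refine Finset.sum_le_sum fun s _ => ?_
      have h : num (Finset.Ico T₀ T) (E3 s) ≤
          num (Finset.Ico T₀ (T₀ + 10 * M)) (fun _ => True) :=
        num_le_num fun t ht hP => ⟨Finset.mem_Ico.2 ⟨(Finset.mem_Ico.1 ht).1, hP⟩, trivial⟩
      rw [num_eq _ fun _ => True, Finset.filter_true] at h
      rw [Nat.card_Ico, Nat.add_sub_cancel_left] at h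
      exact_mod_cast h
    rw [Finset.sum_const, nsmul_eq_mul] at this
    nlinarith
  have h4 : cnt S T₀ T E4 < p₀ / 4 * Tot := by
    have e1 := cnt_many_le (S := S) (T₀ := T₀) (T := T) (N := N) bad2
    have e2 : ζ₁ * ζ₂ * ∑ k ∈ Finset.range N, cnt S T₀ T (bad2 k) ≤
        ∑ k ∈ Finset.range N, cnt S T₀ T (P k) := by
      rw [Finset.mul_sum]
      refine Finset.sum_le_sum fun k _ => ?_
      have f1 := cnt_time_maximal (S := S) (T₀ := T₀) (T := T) (bad1 k) (bad2 k) hζ₂.le (fun _ _ h => h)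
      have f2 := cnt_tree_maximal (S := S) (T₀ := T₀) (T := T) hb hch (P k) ζ₁
      rw [mul_assoc]
      exact (mul_le_mul_of_nonneg_left f1 hζ₁.le).trans f2
    have e3 : ζ₁ * ζ₂ * (N * cnt S T₀ T E4) ≤ 2 * (ζ * (N * Tot)) := by
      have := mul_le_mul_of_nonneg_left e1 (by positivity : 0 ≤ ζ₁ * ζ₂)
      simp only [hE4]
      linarith
    have e4 : 2 * (ζ * (N * Tot)) < ζ₁ * ζ₂ * (N * (p₀ / 4 * Tot)) := by
      have := mul_lt_mul_of_pos_right hζ (by positivity : 0 < N * Tot)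
      linarith
    have e5 := lt_of_mul_lt_mul_left (e3.trans_lt e4) (by positivity)
    exact lt_of_mul_lt_mul_left e5 hN'.le
  have hlt : cnt S T₀ T (fun s t => ((E1 s t ∨ E2 s t) ∨ E3 s t) ∨ E4 s t) < Tot := by
    have f1 := cnt_or_le (S := S) (T₀ := T₀) (T := T)
      (P := fun s t => (E1 s t ∨ E2 s t) ∨ E3 s t) (Q := E4)
    have f2 := cnt_or_le (S := S) (T₀ := T₀) (T := T) (P := fun s t => E1 s t ∨ E2 s t) (Q := E3)
    have f3 := cnt_or_le (S := S) (T₀ := T₀) (T := T) (P := E1) (Q := E2)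
    nlinarith
  obtain ⟨s, hs, t₀, ht0, htT, hno⟩ := exists_not_of_cnt_lt hT.le hlt
  simp only [not_or] at hno
  obtain ⟨⟨⟨n1, n2⟩, n3⟩, n4⟩ := hno
  simp only [hE3, not_lt] at n3
  refine ⟨s, hs, t₀, n3, htT, (Finset.range N).filter (fun k => ¬ bad2 k s t₀),
    Finset.filter_subset _ _, ?_, ?_, ?_⟩
  · have := Finset.card_filter_add_card_filter_not (s := Finset.range N) (fun k => bad2 k s t₀)
    rw [Finset.card_range] at this
    have e := num_eq (Finset.range N) (fun k => bad2 k s t₀)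
    simp only [hE4] at n4
    omega
  · intro k hk u hu
    have := (Finset.mem_filter.1 hk).2
    simp only [hbad2] at this
    push Not at this
    exact this u hu
  · intro u hu huM
    simp only [hE1] at n1
    push Not at n1
    refine le_trans (Nat.cast_le.2 (num_le_num fun i hi hid => ?_)) (n1 u hu)
    rw [Finset.mem_Icc] at hi
    refine ⟨Finset.mem_Icc.2 hi, by omega, hid, fun hX' => n2 ⟨by omega, fun l hl hl' => ?_⟩⟩
    have := hX' (i - (t₀ - M) + l) (by omega) (by omega)
    rwa [show i - (i - (t₀ - M) + l) = t₀ - M - l by omega] at this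

end selection

section

open scoped Classical

/-- Among the levels slightly above `D₀` below `t₀` there is one that satisfies `NC` and whose
companion level is not bad. -/
lemma exists_level {NC bad bad' : ℕ → Prop} {t₀ T₀ M D₀ Β : ℕ} (hΒ : 1 ≤ Β) (ht : T₀ + 10 * M ≤ t₀)
    (hM : D₀ + D₀ / 4 + Β + 1 ≤ M) {α : Type*} {NC' : α → ℕ → Prop} {s : α} (hNC : NC' s = NC)
    (hidle : ∀ u ≤ t₀, t₀ + 1 ≤ u + M → (num (Finset.Icc u t₀) (Idle NC' Β s) : ℝ) ≤
        1 / 12 * ((t₀ : ℝ) + 1 - u))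
    (hbad : ∀ u ≤ t₀, (num (Finset.Icc u t₀) (fun i => T₀ ≤ i ∧ bad i) : ℝ) ≤
      1 / (100 * Β) * ((t₀ : ℝ) + 1 - u))
    (hbad' : ∀ u ≤ t₀, (num (Finset.Icc u t₀) (fun i => T₀ ≤ i ∧ bad' i) : ℝ) ≤
      1 / (100 * Β) * ((t₀ : ℝ) + 1 - u))
    {β : ℕ → ℕ} (hβi : ∀ D D', D₀ ≤ D → D < D' → D' ≤ D₀ + D₀ / 4 + Β → β D ≠ β D')
    (hβ : ∀ D, D₀ ≤ D → D ≤ D₀ + D₀ / 4 + Β → β D ≤ D₀) :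
    ∃ D, D₀ ≤ D ∧ D ≤ D₀ + D₀ / 4 + Β ∧ NC (t₀ - D) ∧ ¬ bad (t₀ - β D) ∧ ¬ bad' (t₀ - β D) := by
  by_contra hcon
  push Not at hcon
  subst hNC
  set 𝒟 := (Finset.Icc D₀ (D₀ + D₀ / 4 + Β)).filter fun D => NC' s (t₀ - D) with h𝒟
  set 𝓔 := (Finset.Icc D₀ (D₀ + D₀ / 4)).filter fun D => ¬ Idle NC' Β s (t₀ - D) with h𝓔
  have h1 : (𝒟.card : ℝ) ≤ 2 * (1 / (100 * Β) * (D₀ + 1)) := by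
    have e1 : 𝒟.card ≤ num (Finset.Icc (t₀ - D₀) t₀)
        (fun i => (T₀ ≤ i ∧ bad i) ∨ (T₀ ≤ i ∧ bad' i)) := by
      rw [num_eq]
      refine Finset.card_le_card_of_injOn (fun D => t₀ - β D) ?_ ?_
      · intro D hD
        rw [Finset.mem_coe, h𝒟, Finset.mem_filter, Finset.mem_Icc] at hD
        have h2 := hβ D hD.1.1 hD.1.2
        rw [Finset.mem_coe, Finset.mem_filter, Finset.mem_Icc]
        beta_reduce
        refine ⟨⟨by omega, by omega⟩, ?_⟩
        by_cases hb : bad (t₀ - β D)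
        · exact Or.inl ⟨by omega, hb⟩
        · exact Or.inr ⟨by omega, hcon D hD.1.1 hD.1.2 hD.2 hb⟩
      · intro D hD D' hD' h
        rw [Finset.mem_coe, h𝒟, Finset.mem_filter, Finset.mem_Icc] at hD hD'
        have h2 := hβ D hD.1.1 hD.1.2
        have h3 := hβ D' hD'.1.1 hD'.1.2
        have h4 : β D = β D' := by simp only at h; omega
        rcases lt_trichotomy D D' with h | h | h
        · exact absurd h4 (hβi D D' hD.1.1 h hD'.1.2)
        · exact h
        · exact absurd h4.symm (hβi D' D hD'.1.1 h hD.1.2)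
    have e2 := e1.trans (num_or_le _ _ _)
    have e3 := hbad (t₀ - D₀) (by omega)
    have e4 := hbad' (t₀ - D₀) (by omega)
    have e5 : ((t₀ : ℝ) + 1 - ((t₀ - D₀ : ℕ) : ℝ)) = D₀ + 1 := by
      rw [Nat.cast_sub (by omega)]; ring
    rw [e5] at e3 e4
    have e6 : (𝒟.card : ℝ) ≤ num (Finset.Icc (t₀ - D₀) t₀) (fun i => (T₀ ≤ i ∧ bad i)) +
      num (Finset.Icc (t₀ - D₀) t₀) (fun i => (T₀ ≤ i ∧ bad' i)) := by exact_mod_cast e2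
    linarith
  have h2 : 𝓔.card ≤ Β * 𝒟.card := by
    have hex : ∀ D, ∃ i, D ∈ 𝓔 → i < Β ∧ i ≤ t₀ - D ∧ NC' s (t₀ - D - i) := by
      intro D
      by_cases hD : D ∈ 𝓔
      · have := (Finset.mem_filter.1 hD).2
        unfold Idle at this
        push Not at this
        obtain ⟨i, h⟩ := this
        exact ⟨i, fun _ => h⟩
      · exact ⟨0, fun h => absurd h hD⟩
    choose f hf using hex
    refine Finset.card_le_mul_card_image_of_maps_to (f := fun D => D + f D) ?_ Β ?_
    · intro D hD
      obtain ⟨a1, a2, a3⟩ := hf D hD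
      have hD' := Finset.mem_Icc.1 (Finset.mem_filter.1 hD).1
      rw [h𝒟, Finset.mem_filter, Finset.mem_Icc, ← Nat.sub_sub]
      exact ⟨⟨by omega, by omega⟩, a3⟩
    · intro x hx
      have : 𝓔.filter (fun D => D + f D = x) ⊆ Finset.Ico (x + 1 - Β) (x + 1) := by
        intro D hD
        rw [Finset.mem_filter] at hD
        obtain ⟨a1, -, -⟩ := hf D hD.1
        rw [Finset.mem_Ico]
        omega
      refine (Finset.card_le_card this).trans ?_
      rw [Nat.card_Ico]; omega
  have h3 : ((D₀ / 4 : ℕ) : ℝ) + 1 ≤ 𝓔.card + 1 / 12 * ((D₀ : ℝ) + (D₀ / 4 : ℕ) + 1) := by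
    have e1 : ((Finset.Icc D₀ (D₀ + D₀ / 4)).filter fun D => Idle NC' Β s (t₀ - D)).card + 𝓔.card =
        D₀ + D₀ / 4 + 1 - D₀ := by
      rw [h𝓔, ← Nat.card_Icc, ← Finset.card_filter_add_card_filter_not
        (s := Finset.Icc D₀ (D₀ + D₀ / 4)) (fun D => Idle NC' Β s (t₀ - D))]
    have e2 : ((Finset.Icc D₀ (D₀ + D₀ / 4)).filter fun D => Idle NC' Β s (t₀ - D)).card ≤
        num (Finset.Icc (t₀ - (D₀ + D₀ / 4)) t₀) (Idle NC' Β s) := by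
      rw [num_eq]
      refine Finset.card_le_card_of_injOn (fun D => t₀ - D) ?_ ?_
      · intro D hD
        rw [Finset.mem_coe, Finset.mem_filter, Finset.mem_Icc] at hD ⊢
        beta_reduce
        exact ⟨⟨by omega, by omega⟩, hD.2⟩
      · intro D hD D' hD' h
        rw [Finset.mem_coe, Finset.mem_filter, Finset.mem_Icc] at hD hD'
        simp only at h
        omega
    have e3 := hidle (t₀ - (D₀ + D₀ / 4)) (by omega) (by omega)
    rw [Nat.cast_sub (by omega)] at e3
    have e4 : D₀ / 4 + 1 ≤ 𝓔.card + num (Finset.Icc (t₀ - (D₀ + D₀ / 4)) t₀) (Idle NC' Β s) := by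
      omega
    have e5 : ((D₀ / 4 : ℕ) : ℝ) + 1 ≤
      𝓔.card + num (Finset.Icc (t₀ - (D₀ + D₀ / 4)) t₀) (Idle NC' Β s) := by exact_mod_cast e4
    push_cast at e3
    linarith
  have h4 : (𝓔.card : ℝ) ≤ Β * 𝒟.card := by exact_mod_cast h2
  have hΒ' : (0 : ℝ) < Β := by exact_mod_cast hΒ
  have h5 : (Β : ℝ) * 𝒟.card ≤ (D₀ + 1) / 50 := by
    calc (Β : ℝ) * 𝒟.card ≤ Β * (2 * (1 / (100 * Β) * (D₀ + 1))) := by gcongr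
      _ = _ := by field_simp; norm_num
  have h6 : (D₀ : ℝ) ≤ 4 * (D₀ / 4 : ℕ) + 3 := by
    have : D₀ ≤ 4 * (D₀ / 4) + 3 := by omega
    exact_mod_cast this
  have h7 : (0 : ℝ) ≤ (D₀ / 4 : ℕ) := Nat.cast_nonneg _
  linarith

/-- Along an ultrafilter, a nonincreasing sequence of nonnegative quantities stabilises. -/
lemma exists_stable (𝒢 : Ultrafilter ℕ) (D : ℕ → ℕ → ℝ) (h0 : ∀ x j, 0 ≤ D x j)
    (h1 : ∀ x j, D x j ≤ 1) (hanti : ∀ x y j, x ≤ y → D y j ≤ D x j) {υ : ℝ} (hυ : 0 < υ) :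
    ∃ Β ≥ 1, ∀ X, ∀ᶠ j in (𝒢 : Filter ℕ), D Β j - D X j ≤ υ := by
  set Z : Set ℝ := {z | ∃ x, ∀ᶠ j in (𝒢 : Filter ℕ), D x j ≤ z} with hZ
  have hZ1 : (1 : ℝ) ∈ Z := ⟨0, Eventually.of_forall (h1 0)⟩
  have hZb : BddBelow Z := by
    refine ⟨0, ?_⟩
    rintro z ⟨x, hx⟩
    obtain ⟨j, hj⟩ := hx.exists
    exact (h0 x j).trans hj
  obtain ⟨z, ⟨x, hx⟩, hz⟩ := exists_lt_of_csInf_lt ⟨1, hZ1⟩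
    (show sInf Z < sInf Z + υ / 2 by linarith)
  refine ⟨x + 1, by omega, fun X => ?_⟩
  have hX : ∀ᶠ j in (𝒢 : Filter ℕ), sInf Z - υ / 2 ≤ D X j := by
    by_contra hcon
    rw [← Ultrafilter.eventually_not] at hcon
    have : sInf Z - υ / 2 ∈ Z := ⟨X, hcon.mono fun j hj => (not_le.1 hj).le⟩
    linarith [csInf_le hZb this]
  filter_upwards [hx, hX] with j j1 j2
  linarith [hanti x (x + 1) j (by omega)]

end

/-- Two lattices at the same base point that differ by a matrix `h` near the identity become,
after moving to a nearby base point and an earlier time, translates of each other by the lower-left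
entry `κ` of the conjugated matrix. -/
lemma closeLat_shear {p B : ℕ} {vn : ℕ → ℤ} (hp : 2 ≤ p) (hB : 2 ≤ B) {h : SL2R} {s s' : ℝ}
    {t β n m kk : ℕ}
    (hmap : ∀ j ≤ kk, latt p B vn s (t + β) (m + j) = act h '' latt p B vn s (t + β) (n + j))
    {v κ r R K δ : ℝ} (hv : v = (s' - s) * (B : ℝ) ^ (2 * (t + β))) (hr : 0 ≤ r)
    (h00 : |h 0 0 + h 0 1 * v - 1| ≤ r) (h01 : |h 0 1| * (B : ℝ) ^ (2 * β) ≤ r)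
    (h11 : |h 1 1 - h 0 1 * v - 1| ≤ r)
    (hκ : κ = (h 1 0 + (h 1 1 - h 0 0) * v - h 0 1 * v ^ 2) / (B : ℝ) ^ (2 * β))
    (hδ : |δ| ≤ R) (hK : |κ| ≤ K) :
    CloseLat p B vn (r * ((1 + K) * (1 + R) ^ 2)) kk (s' + (δ - κ) / (B : ℝ) ^ (2 * t)) t n
      (s' + δ / (B : ℝ) ^ (2 * t)) t m := by
  have hBt : (B : ℝ) ^ (2 * t) ≠ 0 := by positivity
  have hBβ : (B : ℝ) ^ β ≠ 0 := by positivity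
  have hBβ' : (0 : ℝ) < (B : ℝ) ^ (2 * β) := by positivity
  have e2 : (B : ℝ) ^ (2 * β) = (B : ℝ) ^ β * (B : ℝ) ^ β := by rw [two_mul, pow_add]
  set g : SL2R := diagB B hB β * lowU v with hg
  have hgl : ∀ i, latt p B vn s' t i = act g '' latt p B vn s (t + β) i := by
    intro i
    rw [latt_time hp hB s' t β i, latt_move hp hB s s' (t + β) i, hg, image_act_mul, hv]
  refine ⟨lowU δ * (g * h * g⁻¹) * lowU (κ - δ), ?_, fun j hj => ?_⟩
  · apply nearOne_conj hr hδ ((abs_nonneg _).trans hK) hK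
    · have : (g * h * g⁻¹) 0 0 - 1 = h 0 0 + h 0 1 * v - 1 := by
        simp only [hg, SL2R_mul_00, SL2R_mul_01, SL2R_mul_10, SL2R_mul_11, SL2R_inv_00,
          SL2R_inv_10, lowU, diagB, mkSL_00, mkSL_01, mkSL_10, mkSL_11]
        field_simp
        ring
      rwa [this]
    · have : (g * h * g⁻¹) 0 1 = h 0 1 * (B : ℝ) ^ (2 * β) := by
        simp only [hg, SL2R_mul_00, SL2R_mul_01, SL2R_inv_01,
          SL2R_inv_11, lowU, diagB, mkSL_00, mkSL_01, mkSL_10, mkSL_11]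
        rw [e2]
        ring
      rwa [this, abs_mul, abs_of_pos hBβ']
    · rw [hκ]
      simp only [hg, SL2R_mul_10, SL2R_mul_11, SL2R_inv_00,
        SL2R_inv_10, lowU, diagB, mkSL_00, mkSL_01, mkSL_10, mkSL_11]
      rw [e2]
      field_simp
      ring
    · have : (g * h * g⁻¹) 1 1 - 1 = h 1 1 - h 0 1 * v - 1 := by
        simp only [hg, SL2R_mul_00, SL2R_mul_01, SL2R_mul_10, SL2R_mul_11, SL2R_inv_01,
          SL2R_inv_11, lowU, diagB, mkSL_00, mkSL_01, mkSL_10, mkSL_11]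
        field_simp
        ring
      rwa [this]
  · have e3 : (s' + δ / (B : ℝ) ^ (2 * t) - s') * (B : ℝ) ^ (2 * t) = δ := by field_simp; ring
    have e4 : (s' - (s' + (δ - κ) / (B : ℝ) ^ (2 * t))) * (B : ℝ) ^ (2 * t) = κ - δ := by
      field_simp; ring
    rw [image_act_mul, image_act_mul, ← e4, ← latt_move hp hB, image_act_mul, hgl (n + j),
      ← image_act_mul g⁻¹ g, inv_mul_cancel, image_act_one, image_act_mul, ← hmap j hj, ← hgl]
    conv_rhs => rw [← e3]
    rw [← latt_move hp hB]

/-- A quadratic polynomial is not small at three separated points. -/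
lemma exists_quadratic_ge {A e c γ S : ℝ} {w : Fin 3 → ℝ} (hγ : 0 < γ) (hγ1 : γ ≤ 1) (hS : 0 < S)
    (h1 : γ ≤ w 1 - w 0) (h2 : γ ≤ w 2 - w 1) (hw : ∀ i, |w i| ≤ 1) (hAe : S ≤ max |A| |e|) :
    ∃ i, S * γ ^ 2 / 8 ≤ |c + A * w i + e * w i ^ 2| := by
  by_contra hcon
  push Not at hcon
  set η := S * γ ^ 2 / 8 with hη
  have hη0 : 0 < η := by positivity
  set q : Fin 3 → ℝ := fun i => c + A * w i + e * w i ^ 2 with hq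
  have hq' : ∀ i, |q i| < η := hcon
  have dd : ∀ i j, γ ≤ w j - w i → |A + e * (w i + w j)| ≤ 2 * η / γ := by
    intro i j hij
    rw [le_div_iff₀ hγ]
    have : q j - q i = (A + e * (w i + w j)) * (w j - w i) := by simp only [hq]; ring
    calc |A + e * (w i + w j)| * γ ≤ |A + e * (w i + w j)| * (w j - w i) := by gcongr
      _ = |q j - q i| := by rw [this, abs_mul, abs_of_pos (a := w j - w i) (by linarith)]
      _ ≤ |q j| + |q i| := abs_sub _ _
      _ ≤ 2 * η := by linarith [hq' i, hq' j]
  have d1 := dd 0 1 h1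
  have d2 := dd 1 2 h2
  have he : |e| ≤ 2 * η / γ ^ 2 := by
    rw [le_div_iff₀ (by positivity)]
    have : (A + e * (w 1 + w 2)) - (A + e * (w 0 + w 1)) = e * (w 2 - w 0) := by ring
    have h3 : |e| * (2 * γ) ≤ 4 * η / γ :=
      calc |e| * (2 * γ) ≤ |e| * (w 2 - w 0) := by gcongr; linarith
        _ = |(A + e * (w 1 + w 2)) - (A + e * (w 0 + w 1))| := by
          rw [this, abs_mul, abs_of_pos (a := w 2 - w 0) (by linarith)]
        _ ≤ _ := abs_sub _ _
        _ ≤ 2 * η / γ + 2 * η / γ := add_le_add d2 d1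
        _ = 4 * η / γ := by ring
    rw [le_div_iff₀ hγ] at h3
    linarith
  have hA : |A| ≤ 6 * η / γ ^ 2 := by
    have h3 : |e * (w 0 + w 1)| ≤ 2 * η / γ ^ 2 * 2 := by
      rw [abs_mul]
      refine mul_le_mul he ((abs_add_le _ _).trans ?_) (abs_nonneg _) (by positivity)
      linarith [hw 0, hw 1]
    have h4 : 2 * η / γ ≤ 2 * η / γ ^ 2 := by
      apply div_le_div_of_nonneg_left (by positivity) (by positivity)
      nlinarith
    calc |A| = |(A + e * (w 0 + w 1)) - e * (w 0 + w 1)| := by congr 1; ring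
      _ ≤ _ := abs_sub _ _
      _ ≤ 2 * η / γ ^ 2 + 2 * η / γ ^ 2 * 2 := add_le_add (d1.trans h4) h3
      _ = _ := by ring
  have h6 : 6 * η / γ ^ 2 = 6 / 8 * S := by rw [hη]; field_simp
  have h7 : 2 * η / γ ^ 2 = 2 / 8 * S := by rw [hη]; field_simp
  rw [h6] at hA
  rw [h7] at he
  rcases le_max_iff.1 hAe with h | h <;> linarith

/-- The scales at which a matrix near the identity with a prescribed size becomes visible. -/
lemma exists_scales {b x y : ℝ} (hb : 4 ≤ b) (hx : 0 ≤ x) (hy : 0 ≤ y) {Β l₀ Tm : ℕ}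
    (hsmall : max x y * b ^ (2 * l₀) < 1) (hbig : 1 ≤ max x y * b ^ Tm) (hl : 4 * Β + 6 ≤ l₀) :
    ∃ (D₀ : ℕ) (β : ℕ → ℕ), D₀ ≤ Tm ∧ 1 ≤ D₀ ∧
      (∀ D D', D₀ ≤ D → D < D' → D' ≤ D₀ + D₀ / 4 + Β → β D ≠ β D') ∧
      ∀ D, D₀ ≤ D → D ≤ D₀ + D₀ / 4 + Β → β D ≤ D₀ ∧
        b ^ β D ≤ max (x * b ^ D) (y * b ^ (2 * D)) ∧
        max (x * b ^ D) (y * b ^ (2 * D)) < b ^ (β D + 1) ∧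
        y * b ^ D * b ^ (l₀ / 2) ≤ b ^ (4 + 2 * Β) ∧
        y * b ^ β D * b ^ (l₀ / 2) ≤ b ^ (4 + 2 * Β) := by
  have hb1 : 1 ≤ b := by linarith
  have hb0 : 0 < b := by linarith
  set S : ℕ → ℝ := fun D => max (x * b ^ D) (y * b ^ (2 * D)) with hS
  have hstep : ∀ D D', D < D' → b * S D ≤ S D' := by
    intro D D' h
    simp only [hS]
    rw [mul_max_of_nonneg _ _ hb0.le]
    refine max_le_max ?_ ?_
    · calc b * (x * b ^ D) = x * b ^ (D + 1) := by ring
        _ ≤ _ := by gcongr; exact h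
    · calc b * (y * b ^ (2 * D)) = y * b ^ (2 * D + 1) := by ring
        _ ≤ _ := by gcongr; omega
  have hS0 : ∀ D, 0 ≤ S D := fun D => le_max_of_le_left (by positivity)
  have hmono : ∀ D D', D ≤ D' → S D ≤ S D' := by
    intro D D' h
    rcases h.eq_or_lt with rfl | h
    · exact le_rfl
    · nlinarith [hstep D D' h, hS0 D]
  have hex : ∃ D, 1 ≤ S D := by
    refine ⟨Tm, hbig.trans ?_⟩
    rw [max_mul_of_nonneg _ _ (by positivity)]
    refine max_le_max le_rfl ?_
    gcongr
    omega
  classical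
  set D₀ := Nat.find hex with hD₀
  have hD₀1 : 1 ≤ S D₀ := Nat.find_spec hex
  have hle : D₀ ≤ Tm := by
    refine Nat.find_min' hex (hbig.trans ?_)
    rw [max_mul_of_nonneg _ _ (by positivity)]
    refine max_le_max le_rfl ?_
    gcongr
    omega
  have hlow : l₀ < D₀ := by
    by_contra hcon
    push Not at hcon
    have : S D₀ ≤ S l₀ := hmono _ _ hcon
    have h2 : S l₀ ≤ max x y * b ^ (2 * l₀) := by
      rw [max_mul_of_nonneg _ _ (by positivity)]
      refine max_le_max ?_ le_rfl
      gcongr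
      omega
    linarith
  have hprev : S (D₀ - 1) < 1 := by
    have := Nat.find_min hex (show D₀ - 1 < D₀ by omega)
    exact not_le.1 this
  have hxp : x * b ^ (D₀ - 1) < 1 := (le_max_left _ _).trans_lt hprev
  have hyp : y * b ^ (2 * (D₀ - 1)) < 1 := (le_max_right _ _).trans_lt hprev
  have hSle : ∀ D, D₀ ≤ D → D ≤ D₀ + D₀ / 4 + Β → S D < b ^ (D₀ / 2 + 2 * Β + 2) := by
    intro D h1 h2
    refine max_lt ?_ ?_
    · calc x * b ^ D = x * b ^ (D₀ - 1) * b ^ (D - (D₀ - 1)) := by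
            rw [mul_assoc, ← pow_add]; congr 2; omega
        _ < 1 * b ^ (D - (D₀ - 1)) := by gcongr
        _ ≤ 1 * b ^ (D₀ / 2 + 2 * Β + 2) := by
            gcongr
            omega
        _ = _ := one_mul _
    · calc y * b ^ (2 * D) = y * b ^ (2 * (D₀ - 1)) * b ^ (2 * D - 2 * (D₀ - 1)) := by
            rw [mul_assoc, ← pow_add]; congr 2; omega
        _ < 1 * b ^ (2 * D - 2 * (D₀ - 1)) := by gcongr
        _ ≤ 1 * b ^ (D₀ / 2 + 2 * Β + 2) := by
            gcongr
            omega
        _ = _ := one_mul _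
  have hβ : ∀ D, ∃ k, D₀ ≤ D → b ^ k ≤ S D ∧ S D < b ^ (k + 1) := by
    intro D
    by_cases h : D₀ ≤ D
    · obtain ⟨k, hk⟩ := exists_nat_pow_near (hD₀1.trans (hmono _ _ h)) (by linarith : 1 < b)
      exact ⟨k, fun _ => hk⟩
    · exact ⟨0, fun h' => absurd h' h⟩
  choose β hβ using hβ
  have hβle : ∀ D, D₀ ≤ D → D ≤ D₀ + D₀ / 4 + Β → β D ≤ D₀ / 2 + 2 * Β + 1 := by
    intro D h1 h2
    have := (hβ D h1).1.trans_lt (hSle D h1 h2)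
    rw [pow_lt_pow_iff_right₀ (by linarith)] at this
    omega
  have hyk : ∀ k, k + l₀ / 2 ≤ 2 * (D₀ - 1) + (4 + 2 * Β) →
      y * b ^ k * b ^ (l₀ / 2) ≤ b ^ (4 + 2 * Β) := by
    intro k hk
    calc y * b ^ k * b ^ (l₀ / 2) = y * b ^ (k + l₀ / 2) := by rw [mul_assoc, ← pow_add]
      _ ≤ y * b ^ (2 * (D₀ - 1) + (4 + 2 * Β)) := by gcongr
      _ = y * b ^ (2 * (D₀ - 1)) * b ^ (4 + 2 * Β) := by rw [pow_add]; ring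
      _ ≤ 1 * b ^ (4 + 2 * Β) := by gcongr
      _ = _ := one_mul _
  refine ⟨D₀, β, hle, by omega, ?_, ?_⟩
  · intro D D' h1 h2 h3 heq
    have e1 := (hβ D h1).1
    have e2 := (hβ D' (by omega)).2
    have e3 := hstep D D' h2
    rw [← heq, pow_succ] at e2
    nlinarith
  · intro D h1 h2
    have e := hβle D h1 h2
    refine ⟨by omega, (hβ D h1).1, (hβ D h1).2, hyk _ (by omega), hyk _ (by omega)⟩

lemma volume_le_of_integral_le {F : ℝ → ℝ} (hF : Continuous F) {a b η υ : ℝ} (hab : a ≤ b)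
    (h0 : ∀ x, 0 ≤ F x) (hη : 0 < η) (hυ : 0 ≤ υ) (h : ∫ x in a..b, F x ≤ η * υ) :
    volume {x | x ∈ Icc a b ∧ η ≤ F x} ≤ ENNReal.ofReal υ := by
  have hFint : IntegrableOn F (Icc a b) := hF.continuousOn.integrableOn_Icc
  have h1 := mul_meas_ge_le_integral_of_nonneg (μ := volume.restrict (Icc a b))
    (Eventually.of_forall h0) hFint η
  rw [integral_Icc_eq_integral_Ioc, ← intervalIntegral.integral_of_le hab] at h1
  have h2 : (volume.restrict (Icc a b)).real {x | η ≤ F x} ≤ υ :=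
    le_of_mul_le_mul_left (h1.trans h) hη
  have h3 : volume {x | x ∈ Icc a b ∧ η ≤ F x} =
      (volume.restrict (Icc a b)) {x | η ≤ F x} := by
    rw [Measure.restrict_apply (measurableSet_le measurable_const hF.measurable)]
    congr 1
    ext x
    exact and_comm
  rw [h3, ← ofReal_measureReal]
  exact ENNReal.ofReal_le_ofReal h2

/-- The defect of `φ` at the base point `a`, between `n` and `n + k`. -/
noncomputable def defect (B : ℕ) (φ β : ℝ → ℕ → ℕ → ℝ) (R c c₁ υ : ℝ) (a : ℝ × ℕ) (n k : ℕ) : ℝ :=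
  (∫ x in (-R)..R, (ev B φ a (n + k) x - ev B φ a n x) ^ 2) / (c₁ ^ 2 * υ) +
  (∫ x in (-R)..R, ev B φ a (n + k) x ^ 2 * ev B β a (n + k) x) / (c ^ 2 / 4 * υ) +
  4 * ∫ x in (-1 : ℝ)..0, cutoff c (ev B φ a (n + k) x)

section

variable {p B : ℕ} {vn : ℕ → ℤ} {φ β : ℝ → ℕ → ℕ → ℝ} {R c c₁ υ : ℝ}

lemma defect_terms_nonneg (hR : 0 ≤ R) (hβ0 : ∀ c t n, 0 ≤ β c t n) (a : ℝ × ℕ) (n k : ℕ) :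
    0 ≤ (∫ x in (-R)..R, (ev B φ a (n + k) x - ev B φ a n x) ^ 2) ∧
    0 ≤ (∫ x in (-R)..R, ev B φ a (n + k) x ^ 2 * ev B β a (n + k) x) ∧
    0 ≤ ∫ x in (-1 : ℝ)..0, cutoff c (ev B φ a (n + k) x) :=
  ⟨intervalIntegral.integral_nonneg (by linarith) fun x _ => sq_nonneg _,
    intervalIntegral.integral_nonneg (by linarith) fun x _ => mul_nonneg (sq_nonneg _) (hβ0 _ _ _),
    intervalIntegral.integral_nonneg (by linarith) fun x _ => cutoff_nonneg _⟩

lemma defect_nonneg (hR : 0 ≤ R) (hβ0 : ∀ c t n, 0 ≤ β c t n) (hυ : 0 < υ) (a : ℝ × ℕ)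
    (n k : ℕ) : 0 ≤ defect B φ β R c c₁ υ a n k := by
  obtain ⟨h1, h2, h3⟩ := defect_terms_nonneg (B := B) (φ := φ) (c := c) hR hβ0 a n k
  unfold defect
  positivity

lemma volume_of_defect_lt_one (hp : 2 ≤ p) (hB : 2 ≤ B) (hφ : IsU p B vn φ) (hβ : IsU p B vn β)
    (hβ0 : ∀ c t n, 0 ≤ β c t n) (hR : 0 ≤ R) (hc : 0 < c) (hc₁ : 0 < c₁) (hυ : 0 < υ)
    {a : ℝ × ℕ} {n k : ℕ} (h : defect B φ β R c c₁ υ a n k < 1) :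
    volume {δ | δ ∈ Icc (-R) R ∧ c₁ ≤ |ev B φ a (n + k) δ - ev B φ a n δ|} ≤ ENNReal.ofReal υ ∧
    volume {δ | δ ∈ Icc (-R) R ∧ c ^ 2 / 4 ≤ ev B φ a (n + k) δ ^ 2 * ev B β a (n + k) δ} ≤
      ENNReal.ofReal υ ∧
    volume {δ | δ ∈ Icc (-1 : ℝ) 0 ∧ |ev B φ a (n + k) δ| ≤ c} ≤ ENNReal.ofReal (1 / 4) := by
  obtain ⟨h1, h2, h3⟩ := defect_terms_nonneg (B := B) (φ := φ) (c := c) hR hβ0 a n k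
  have p1 : 0 < c₁ ^ 2 * υ := by positivity
  have p2 : 0 < c ^ 2 / 4 * υ := by positivity
  have q1 := div_nonneg h1 p1.le
  have q2 := div_nonneg h2 p2.le
  have cφ := hφ.continuous_ev hp hB a
  have cβ := hβ.continuous_ev hp hB a
  unfold defect at h
  refine ⟨?_, ?_, ?_⟩
  · have e := volume_le_of_integral_le
      (F := fun x => (ev B φ a (n + k) x - ev B φ a n x) ^ 2)
      (((cφ (n + k)).sub (cφ n)).pow 2) (by linarith : -R ≤ R)
      (fun x => sq_nonneg _) (by positivity : 0 < c₁ ^ 2) hυ.le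
      (by rw [← div_le_one p1]; linarith)
    refine (measure_mono ?_).trans e
    rintro x ⟨hx1, hx2⟩
    refine ⟨hx1, ?_⟩
    rw [← sq_abs (ev B φ a (n + k) x - ev B φ a n x)]
    exact pow_le_pow_left₀ hc₁.le hx2 2
  · exact volume_le_of_integral_le
      (F := fun x => ev B φ a (n + k) x ^ 2 * ev B β a (n + k) x)
      (((cφ (n + k)).pow 2).mul (cβ (n + k))) (by linarith : -R ≤ R)
      (fun x => mul_nonneg (sq_nonneg _) (hβ0 _ _ _)) (by positivity : 0 < c ^ 2 / 4) hυ.le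
      (by rw [← div_le_one p2]; linarith)
  · have e := volume_le_of_integral_le ((continuous_cutoff (c := c)).comp (cφ (n + k)))
      (by linarith : (-1 : ℝ) ≤ 0) (fun x => cutoff_nonneg _) one_pos (υ := 1 / 4) (by norm_num)
      (by simp only [Function.comp]; linarith)
    refine (measure_mono ?_).trans e
    rintro x ⟨hx1, hx2⟩
    exact ⟨hx1, (cutoff_eq_one hc hx2).ge⟩

end

/-- A small shift cannot nearly preserve a function with small defect. -/
lemma no_shift {p B : ℕ} {vn : ℕ → ℤ} {φ : ℝ → ℕ → ℕ → ℝ} (hp : 2 ≤ p) (hB : 2 ≤ B)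
    (hφ : IsU p B vn φ) {ε l K κ₀ Θ R c c₁ υ : ℝ} {J : ℕ}
    (hε : 0 < ε) (hl : 0 < l) (hK : 0 < K) (hκ₀ : 0 < κ₀)
    (hJ : (1 / l + l) / (κ₀ * (ε * l)) + 1 ≤ J) (hR : 1 + J * K ≤ R) (hc : 0 < c) (hc₁ : 0 < c₁)
    (hυ : 0 < υ) (hJυ : (2 * J + 1) * (3 * υ) ≤ 1 / 2) (hJc : J * (3 * c₁) ≤ c / 2)
    {s : ℝ} {t n k k' : ℕ} (hlt : 1 ≤ l * ((B : ℝ) ^ t * (p : ℝ) ^ (n + k))) (hΘ : 1 / l < Θ)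
    (hF : Fat ε Θ (latt p B vn s t (n + k))) {κ : ℝ} (hκ : κ₀ ≤ |κ|) (hκK : |κ| ≤ K)
    (hshift : ∀ δ, |δ| ≤ R → |φ (s + δ / (B : ℝ) ^ (2 * t)) t (n + k') -
      φ (s + (δ - κ) / (B : ℝ) ^ (2 * t)) t (n + k)| ≤ c₁)
    (hk : defect B φ (supLat p B vn (plateau ε l K)) R c c₁ υ (s, t) n k < 1)
    (hk' : defect B φ (supLat p B vn (plateau ε l K)) R c c₁ υ (s, t) n k' < 1) : False := by
  have hR0 : 0 ≤ R := by
    have : (0 : ℝ) ≤ J * K := by positivity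
    linarith
  have hβ0 : ∀ c t n, 0 ≤ supLat p B vn (plateau ε l K) c t n :=
    supLat_nonneg plateau_nonneg plateau_le_one
  obtain ⟨a1, a2, a3⟩ := volume_of_defect_lt_one hp hB hφ (isU_plateau hl hK) hβ0 hR0 hc hc₁ hυ hk
  obtain ⟨b1, -, -⟩ := volume_of_defect_lt_one hp hB hφ (isU_plateau hl hK) hβ0 hR0 hc hc₁ hυ hk'
  refine shift_contradiction (f := ev B φ (s, t) (n + k)) (g := ev B φ (s, t) (n + k'))
    (e := ev B φ (s, t) n) (β := ev B (supLat p B vn (plateau ε l K)) (s, t) (n + k))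
    hυ.le hc hR hκK hJυ hJc hc₁.le hshift b1 a1 a2 a3 fun δ hδ => ?_
  exact exists_shift_supLat_ge_one hp hB hε hl hK hκ₀ hJ hlt hΘ hF hδ hκ hκK

/-- The `b`-adic cell of level `L` containing `s`. -/
noncomputable def floorCell (b : ℕ) (L : ℕ) (s : ℝ) : ℤ := ⌊(b : ℝ) ^ L * s⌋

lemma floorCell_succ {b : ℕ} (hb : 0 < b) (L : ℕ) (s : ℝ) :
    b * floorCell b L s ≤ floorCell b (L + 1) s ∧
      floorCell b (L + 1) s < b * floorCell b L s + b := by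
  have hb' : (0 : ℝ) < b := by exact_mod_cast hb
  unfold floorCell
  have h1 := Int.floor_le ((b : ℝ) ^ L * s)
  have h2 := Int.lt_floor_add_one ((b : ℝ) ^ L * s)
  have e : (b : ℝ) ^ (L + 1) * s = b * ((b : ℝ) ^ L * s) := by ring
  rw [e]
  constructor
  · rw [Int.le_floor]
    push_cast
    gcongr
  · rw [Int.floor_lt]
    push_cast
    nlinarith

lemma abs_sub_mul_le_one_of_floorCell_eq {b L : ℕ} {s s' : ℝ}
    (h : floorCell b L s' = floorCell b L s) : |(s' - s) * (b : ℝ) ^ L| ≤ 1 := by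
  have := Int.abs_sub_lt_one_of_floor_eq_floor h
  rw [← mul_sub, mul_comm] at this
  exact this.le

lemma one_le_of_floorCell_add_two_le {b L : ℕ} {s s' : ℝ}
    (h : floorCell b L s + 2 ≤ floorCell b L s') : 1 ≤ (s' - s) * (b : ℝ) ^ L := by
  unfold floorCell at h
  have h1 := Int.floor_le ((b : ℝ) ^ L * s')
  have h2 := Int.lt_floor_add_one ((b : ℝ) ^ L * s)
  have h3 : (⌊(b : ℝ) ^ L * s⌋ : ℝ) + 2 ≤ ⌊(b : ℝ) ^ L * s'⌋ := by exact_mod_cast h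
  nlinarith

section

open scoped Classical

/-- In a spread block, each of three separated children contains a point avoiding two rare
properties. -/
lemma Spread.exists_avoiding {α : Type*} {cell : ℕ → α → ℤ} {S : Finset α} {c ζ : ℝ} {s : α}
    {L : ℕ} (hs : s ∈ S) (hζ : 2 * ζ < c) (h : Spread cell S c s L) {P Q : α → Prop}
    (hP : num (block cell S L s) P ≤ ζ * (block cell S L s).card)
    (hQ : num (block cell S L s) Q ≤ ζ * (block cell S L s).card) :
    ∃ z : Fin 3 → α, (∀ i, z i ∈ S ∧ cell L (z i) = cell L s ∧ ¬ P (z i) ∧ ¬ Q (z i)) ∧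
      cell (L + 1) (z 0) + 2 ≤ cell (L + 1) (z 1) ∧
      cell (L + 1) (z 1) + 2 ≤ cell (L + 1) (z 2) := by
  obtain ⟨x, y, z, hxy, hyz, hw⟩ := h
  have hpos : (0 : ℝ) < (block cell S L s).card := by
    exact_mod_cast Finset.card_pos.2 ⟨s, mem_block.2 ⟨hs, rfl⟩⟩
  have key : ∀ w, w = x ∨ w = y ∨ w = z → ∃ s', s' ∈ S ∧ cell L s' = cell L s ∧ ¬ P s' ∧ ¬ Q s' ∧
      cell (L + 1) s' = w := by
    intro w hw'
    by_contra hcon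
    push Not at hcon
    have h1 : ((block cell S L s).filter fun s' => cell (L + 1) s' = w).card ≤
        num (block cell S L s) fun s' => P s' ∨ Q s' := by
      rw [← num_eq]
      refine num_le_num fun s' hs' hw'' => ⟨hs', ?_⟩
      rw [mem_block] at hs'
      by_contra hPQ
      push Not at hPQ
      exact hcon s' hs'.1 hs'.2 hPQ.1 hPQ.2 hw''
    have h2 : (((block cell S L s).filter fun s' => cell (L + 1) s' = w).card : ℝ) ≤
        num (block cell S L s) P + num (block cell S L s) Q := by
      exact_mod_cast h1.trans (num_or_le _ _ _)
    have h3 := hw w hw'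
    nlinarith
  obtain ⟨a, a1, a2, a3, a4, a5⟩ := key x (by simp)
  obtain ⟨a', b1, b2, b3, b4, b5⟩ := key y (by simp)
  obtain ⟨a'', c1, c2, c3, c4, c5⟩ := key z (by simp)
  refine ⟨![a, a', a''], ?_, ?_, ?_⟩
  · intro i
    fin_cases i
    · exact ⟨a1, a2, a3, a4⟩
    · exact ⟨b1, b2, b3, b4⟩
    · exact ⟨c1, c2, c3, c4⟩
  · simpa [a5, b5] using hxy
  · simpa [b5, c5] using hyz

/-- In a spread block there is a point avoiding two rare properties at which a given quadratic
polynomial is not small. -/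
lemma Spread.exists_quadratic_ge {b : ℕ} {S : Finset ℝ} {c ζ : ℝ} {s : ℝ} (hb : 1 ≤ b)
    {L D : ℕ} (hs : s ∈ S) (hζ : 2 * ζ < c) (h : Spread (floorCell b) S c s L) {P Q : ℝ → Prop}
    (hP : num (block (floorCell b) S L s) P ≤ ζ * (block (floorCell b) S L s).card)
    (hQ : num (block (floorCell b) S L s) Q ≤ ζ * (block (floorCell b) S L s).card)
    {x A e : ℝ} (hpos : 0 < max (|A| * (b : ℝ) ^ D) (|e| * (b : ℝ) ^ (2 * D))) :
    ∃ s' ∈ S, ¬ P s' ∧ ¬ Q s' ∧ |(s' - s) * (b : ℝ) ^ (L + D)| ≤ (b : ℝ) ^ D ∧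
      max (|A| * (b : ℝ) ^ D) (|e| * (b : ℝ) ^ (2 * D)) / (8 * (b : ℝ) ^ 2) ≤
        |x + A * ((s' - s) * (b : ℝ) ^ (L + D)) - e * ((s' - s) * (b : ℝ) ^ (L + D)) ^ 2| := by
  have hb0 : (0 : ℝ) < b := by exact_mod_cast hb
  have hb1 : (1 : ℝ) ≤ b := by exact_mod_cast hb
  obtain ⟨z, hz, h01, h12⟩ := h.exists_avoiding hs hζ hP hQ
  have hw : ∀ i, |(z i - s) * (b : ℝ) ^ L| ≤ 1 := fun i =>
    abs_sub_mul_le_one_of_floorCell_eq (hz i).2.1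
  have gap : ∀ i j, floorCell b (L + 1) (z i) + 2 ≤ floorCell b (L + 1) (z j) →
      1 / (b : ℝ) ≤ (z j - s) * (b : ℝ) ^ L - (z i - s) * (b : ℝ) ^ L := by
    intro i j hij
    have := one_le_of_floorCell_add_two_le hij
    rw [div_le_iff₀ hb0]
    rw [pow_succ] at this
    linarith
  obtain ⟨i, hi⟩ := _root_.exists_quadratic_ge (A := A * (b : ℝ) ^ D) (e := -e * (b : ℝ) ^ (2 * D))
    (c := x) (γ := 1 / b) (w := fun i => (z i - s) * (b : ℝ) ^ L) (by positivity)
    (by rw [div_le_one hb0]; exact hb1) hpos (gap 0 1 h01) (gap 1 2 h12) hw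
    (by rw [abs_mul, abs_mul, abs_neg, abs_of_pos (a := (b : ℝ) ^ D) (by positivity),
          abs_of_pos (a := (b : ℝ) ^ (2 * D)) (by positivity)])
  refine ⟨z i, (hz i).1, (hz i).2.2.1, (hz i).2.2.2, ?_, ?_⟩
  · rw [pow_add, ← mul_assoc, abs_mul, abs_of_pos (a := (b : ℝ) ^ D) (by positivity)]
    exact mul_le_of_le_one_left (by positivity) (hw i)
  · convert hi using 1
    · field_simp
    · congr 1
      rw [pow_add, two_mul, pow_add]
      ring

end

/-- Size of the lower-left entry of the conjugated matrix. -/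
lemma shear_bounds {b x A e v Sz : ℝ} {D β : ℕ} (hb : 4 ≤ b) (hx : |x| ≤ 1)
    (hSz : Sz = max (|A| * b ^ D) (|e| * b ^ (2 * D))) (h1 : b ^ β ≤ Sz) (h2 : Sz < b ^ (β + 1))
    (hv : |v| ≤ b ^ D) (hq : Sz / (8 * b ^ 2) ≤ |x + A * v - e * v ^ 2|) :
    1 / (8 * b ^ 2) ≤ |(x + A * v - e * v ^ 2) / b ^ β| ∧
    |(x + A * v - e * v ^ 2) / b ^ β| ≤ 3 * b := by
  have hb0 : 0 < b := by linarith
  have hβ : 0 < b ^ β := by positivity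
  have hβ1 : 1 ≤ b ^ β := one_le_pow₀ (by linarith)
  refine ⟨?_, ?_⟩
  · rw [abs_div, abs_of_pos hβ, le_div_iff₀ hβ]
    refine le_trans ?_ hq
    rw [one_div, inv_mul_eq_div]
    gcongr
  · rw [abs_div, abs_of_pos hβ, div_le_iff₀ hβ]
    have e1 : |A * v| ≤ Sz := by
      rw [abs_mul, hSz]
      exact le_max_of_le_left (by gcongr)
    have e2 : |e * v ^ 2| ≤ Sz := by
      rw [abs_mul, hSz, abs_pow, mul_comm 2 D, pow_mul]
      exact le_max_of_le_right (by gcongr)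
    have e3 : |x + A * v - e * v ^ 2| ≤ |x| + |A * v| + |e * v ^ 2| :=
      (abs_sub _ _).trans (by gcongr; exact abs_add_le _ _)
    rw [pow_succ] at h2
    nlinarith

section

open scoped Classical

set_option maxHeartbeats 1000000 in
/-- A finite sample of base points on which some function has small defect on average, and whose
tree of cells branches often, cannot exist. -/
theorem no_sample {p B b : ℕ} {vn : ℕ → ℤ} (hp : 2 ≤ p) (hB : 2 ≤ B) (hb : b = B ^ 2)
    (hv : ∀ n, ((p : ℤ) ^ (2 * n)) ∣ vn (n + 1) - vn n) {φ : ℝ → ℕ → ℕ → ℝ} (hφ : IsU p B vn φ)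
    {ε l Θ R c c₁ υ : ℝ} {J : ℕ} (hε : 0 < ε) (hl : 0 < l)
    (hJ : (1 / l + l) / (1 / (8 * (b : ℝ) ^ 2) * (ε * l)) + 1 ≤ J)
    (hR : 1 + J * (3 * (b : ℝ)) ≤ R) (hc : 0 < c) (hc₁ : 0 < c₁)
    (hυ : 0 < υ) (hJυ : (2 * J + 1) * (3 * υ) ≤ 1 / 2) (hJc : J * (3 * c₁) ≤ c / 2)
    {r r₁ ρ : ℝ} {kk : ℕ}
    (hmod : ∀ c t n c' t' n', CloseLat p B vn r kk c t n c' t' n' → |φ c' t' n' - φ c t n| ≤ c₁)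
    (hρ : 0 < ρ) (hr₁ : 0 < r₁) (hr : (r₁ + ρ) * ((1 + 3 * b) * (1 + R) ^ 2) ≤ r)
    {Β l₀ Tm N₀ N M T₀ T : ℕ} (hΒ : 1 ≤ Β) (hl₀ : 4 * Β + 6 ≤ l₀)
    (hl₀ρ : (b : ℝ) ^ (4 + 2 * Β) ≤ ρ * (b : ℝ) ^ (l₀ / 2))
    (hr₁l : 2 * r₁ * (b : ℝ) ^ (2 * l₀) < 1)
    (hN₀ : ∀ Λ : ℕ → Set (ℝ × ℝ), LatSeq p Λ → ∀ K : Finset ℕ, N₀ < K.card →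
      (∀ n ∈ K, ∃ g : SL2R, Λ n = act g '' Z2 ∧ EntriesLE (1 + 1 / ε) g) →
      ∃ n ∈ K, ∃ m ∈ K, n < m ∧ ∃ h : SL2R, NearOne r₁ h ∧
        ∀ j ≤ kk, Λ (m + j) = act h '' Λ (n + j))
    (hN : 2 * N₀ < N) (hΘl : 1 / l < Θ) (hΘ : 2 * (1 + 1 / ε) * (p : ℝ) ^ N < Θ)
    (hTm : 2 ≤ ε / (4 * (1 + 1 / ε) ^ 2 * (p : ℝ) ^ (2 * N)) * (b : ℝ) ^ Tm)
    (hM : Tm + Tm / 4 + Β + 1 ≤ M) {S : Finset ℝ} (hS : S.Nonempty) (hT : T₀ < T)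
    (hlT : 1 ≤ l * (B : ℝ) ^ T₀) {n₀ : ℕ}
    (hF : ∀ s ∈ S, ∀ t, T₀ ≤ t → ∀ k < N, Fat ε Θ (latt p B vn s t (n₀ + k)))
    {p₀ : ℝ} (hp₀ : 0 < p₀)
    (hNC : p₀ * (S.card * ((T : ℝ) - T₀)) ≤
      cnt S T₀ T (Spread (floorCell b) S (1 / (4 * (b : ℝ) ^ 2))))
    (hidle : cnt S T₀ T (Idle (Spread (floorCell b) S (1 / (4 * (b : ℝ) ^ 2))) Β) -
      cnt S T₀ T (Idle (Spread (floorCell b) S (1 / (4 * (b : ℝ) ^ 2))) (M + Β)) ≤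
        p₀ / 50 * (S.card * ((T : ℝ) - T₀)))
    (hMT : 40 * (M : ℝ) ≤ p₀ * ((T : ℝ) - T₀)) {ζ : ℝ}
    (hζ : 8 * ζ < p₀ * (1 / (12 * (b : ℝ) ^ 2) * (1 / (100 * Β))))
    (hdef : ∑ k ∈ Finset.range N, ∑ s ∈ S, ∑ t ∈ Finset.Ico T₀ T,
      defect B φ (supLat p B vn (plateau ε l (3 * b))) R c c₁ υ (s, t) n₀ k ≤
        ζ * (N * (S.card * ((T : ℝ) - T₀)))) : False := by
  have hb4 : 4 ≤ b := by rw [hb]; nlinarith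
  have hb4' : (4 : ℝ) ≤ b := by exact_mod_cast hb4
  have hb0 : (0 : ℝ) < b := by linarith
  have hb1 : (1 : ℝ) ≤ b := by linarith
  have hΒ' : (0 : ℝ) < Β := by exact_mod_cast hΒ
  have hbB : ∀ i, (B : ℝ) ^ (2 * i) = (b : ℝ) ^ i := fun i => by rw [hb, pow_mul]; push_cast; rfl
  have hR0 : 0 ≤ R := by
    have : (0 : ℝ) ≤ J * (3 * b) := by positivity
    linarith
  have hK : (0 : ℝ) < 3 * b := by positivity
  have hβ0 : ∀ c t n, 0 ≤ supLat p B vn (plateau ε l (3 * b)) c t n :=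
    supLat_nonneg plateau_nonneg plateau_le_one
  set NC := Spread (floorCell b) S (1 / (4 * (b : ℝ) ^ 2)) with hNCdef
  set df : ℝ → ℕ → ℕ → ℝ := fun s t k =>
    defect B φ (supLat p B vn (plateau ε l (3 * b))) R c c₁ υ (s, t) n₀ k with hdf
  have hP : ∑ k ∈ Finset.range N, cnt S T₀ T (fun s t => 1 ≤ df s t k) ≤
      ζ * (N * (S.card * ((T : ℝ) - T₀))) := by
    refine (Finset.sum_le_sum fun k _ => Finset.sum_le_sum fun s _ => ?_).trans hdef
    rw [num, ← Finset.sum_boole]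
    refine Finset.sum_le_sum fun t _ => ?_
    have h0 : 0 ≤ df s t k := defect_nonneg hR0 hβ0 hυ _ _ _
    split_ifs with h
    · exact h
    · exact h0
  obtain ⟨s, hs, t₀, ht₀, ht₀T, K, hKN, hKcard, hKbad, hKidle⟩ :=
    exists_good_scale (by omega : 0 < b) (floorCell_succ (by omega)) hS hT hp₀ hNC hΒ hidle hMT
      (by positivity) (by positivity) hζ (by omega : 0 < N) (fun k s t => 1 ≤ df s t k) hP
  have hr₁1 : r₁ ≤ 1 := by
    have : (1 : ℝ) ≤ (b : ℝ) ^ (2 * l₀) := one_le_pow₀ hb1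
    nlinarith
  obtain ⟨n, hn, m, hm, hnm, h, hh, hmap⟩ := hN₀ (latt p B vn s t₀) (latt_latSeq hp hB hv s t₀)
    (K.image (fun k => n₀ + k)) (by
      rw [Finset.card_image_of_injective _ (add_right_injective n₀)]; omega) (by
      intro n hn
      obtain ⟨k, hk, rfl⟩ := Finset.mem_image.1 hn
      have hkN := Finset.mem_range.1 (hKN hk)
      refine latt_basis hp hB s t₀ _ hε ?_ (hF s hs t₀ (by omega) k hkN)
      refine lt_trans ?_ hΘ
      have h1 : (1 : ℝ) ≤ (p : ℝ) ^ N := one_le_pow₀ (by exact_mod_cast (by omega : 1 ≤ p))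
      have h2 : 0 < 1 / ε := by positivity
      nlinarith)
  obtain ⟨k, hk, rfl⟩ := Finset.mem_image.1 hn
  obtain ⟨k', hk', rfl⟩ := Finset.mem_image.1 hm
  have hkN := Finset.mem_range.1 (hKN hk)
  have hkN' := Finset.mem_range.1 (hKN hk')
  have hΘ1 : 1 < Θ := by
    refine lt_trans ?_ hΘ
    have h1 : (1 : ℝ) ≤ (p : ℝ) ^ N := one_le_pow₀ (by exact_mod_cast (by omega : 1 ≤ p))
    have h2 : 0 < 1 / ε := by positivity
    nlinarith
  obtain ⟨g, hg, hgC⟩ := latt_basis hp hB s t₀ (n₀ + k) hε hΘ1 (hF s hs t₀ (by omega) k hkN)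
  have hnd := latt_nondeg hp hB hv s t₀ hnm (by omega : n₀ + k' ≤ n₀ + k + N) hε
    (by positivity : 0 < 1 + 1 / ε) hΘ (hF s hs t₀ (by omega) k hkN) hg hgC (hh.mono hr₁1)
    (hmap 0 (Nat.zero_le _))
  obtain ⟨h00, h01, h10, h11⟩ := hh
  have hA : |h 1 1 - h 0 0| ≤ 2 * r₁ := by
    have : h 1 1 - h 0 0 = (h 1 1 - 1) - (h 0 0 - 1) := by ring
    rw [this]
    exact (abs_sub _ _).trans (by linarith)
  obtain ⟨D₀, β, hD₀, hD₀1, hβi, hβ⟩ := exists_scales (b := b) (x := |h 1 1 - h 0 0|)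
    (y := |h 0 1|) (Β := Β) (l₀ := l₀) (Tm := Tm) hb4' (abs_nonneg _) (abs_nonneg _) (by
      refine lt_of_le_of_lt ?_ hr₁l
      gcongr
      exact max_le hA (by linarith)) (by
      have h1 : ε / (4 * (1 + 1 / ε) ^ 2 * (p : ℝ) ^ (2 * N)) ≤
          2 * max |h 1 1 - h 0 0| |h 0 1| := by
        linarith [le_max_left |h 1 1 - h 0 0| |h 0 1|, le_max_right |h 1 1 - h 0 0| |h 0 1|]
      have h2 := hTm.trans (mul_le_mul_of_nonneg_right h1 (by positivity : (0 : ℝ) ≤ (b : ℝ) ^ Tm))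
      linarith) hl₀
  obtain ⟨D, hD1, hD2, hDNC, hbad, hbad'⟩ := exists_level (NC := NC s) hΒ ht₀ (D₀ := D₀)
    (by omega) rfl hKidle (hKbad k hk) (hKbad k' hk') hβi (fun D h1 h2 => (hβ D h1 h2).1)
  push Not at hbad hbad'
  obtain ⟨hβD, hS1, hS2, hyD, hyβ⟩ := hβ D hD1 hD2
  set t := t₀ - β D with ht
  have htβ : t + β D = t₀ := by omega
  have hLD : t₀ - D + D = t₀ := by omega
  obtain ⟨s', hs', hPk, hPk', hvD, hq⟩ := Spread.exists_quadratic_ge (D := D)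
    (A := h 1 1 - h 0 0) (e := h 0 1) (x := h 1 0) (by omega : 1 ≤ b) hs
    (by field_simp; norm_num : 2 * (1 / (12 * (b : ℝ) ^ 2)) < 1 / (4 * (b : ℝ) ^ 2)) hDNC
    (hbad (t₀ - D)) (hbad' (t₀ - D)) (lt_of_lt_of_le (by positivity) hS1)
  rw [hLD] at hvD hq
  push Not at hPk hPk'
  obtain ⟨hκ1, hκ2⟩ := shear_bounds hb4' (h10.trans hr₁1) rfl hS1 hS2 hvD hq
  have hbl : (0 : ℝ) < (b : ℝ) ^ (l₀ / 2) := by positivity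
  have hyD' : |h 0 1| * (b : ℝ) ^ D ≤ ρ := le_of_mul_le_mul_right (hyD.trans hl₀ρ) hbl
  have hyβ' : |h 0 1| * (b : ℝ) ^ β D ≤ ρ := le_of_mul_le_mul_right (hyβ.trans hl₀ρ) hbl
  have hev : |h 0 1 * ((s' - s) * (b : ℝ) ^ t₀)| ≤ ρ := by
    rw [abs_mul]
    exact (mul_le_mul_of_nonneg_left hvD (abs_nonneg _)).trans hyD'
  refine no_shift (k := k) (k' := k') hp hB hφ hε hl hK (by positivity) hJ hR hc hc₁ hυ hJυ hJc
    (s := s') (t := t) ?_ hΘl (hF s' hs' t (by omega) k hkN) hκ1 hκ2 ?_ hPk hPk'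
  · have h1 : (1 : ℝ) ≤ (p : ℝ) ^ (n₀ + k) := one_le_pow₀ (by exact_mod_cast (by omega : 1 ≤ p))
    have h2 : (B : ℝ) ^ T₀ ≤ (B : ℝ) ^ t :=
      pow_le_pow_right₀ (by exact_mod_cast (by omega : 1 ≤ B)) (by omega)
    calc 1 ≤ l * (B : ℝ) ^ T₀ := hlT
      _ ≤ l * ((B : ℝ) ^ t * 1) := by rw [mul_one]; gcongr
      _ ≤ _ := by gcongr
  · intro δ hδ
    refine hmod _ _ _ _ _ _ ((closeLat_shear hp hB (h := h) (s := s) (s' := s') (β := β D)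
      (v := (s' - s) * (b : ℝ) ^ t₀) (r := r₁ + ρ) (by rw [htβ]; exact hmap) ?_ (by positivity)
      ?_ ?_ ?_ ?_ hδ hκ2).mono hr le_rfl)
    · rw [hbB, htβ]
    · rw [show h 0 0 + h 0 1 * ((s' - s) * (b : ℝ) ^ t₀) - 1 =
        (h 0 0 - 1) + h 0 1 * ((s' - s) * (b : ℝ) ^ t₀) by ring]
      exact (abs_add_le _ _).trans (by linarith)
    · rw [hbB]; linarith
    · rw [show h 1 1 - h 0 1 * ((s' - s) * (b : ℝ) ^ t₀) - 1 =
        (h 1 1 - 1) - h 0 1 * ((s' - s) * (b : ℝ) ^ t₀) by ring]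
      exact (abs_sub _ _).trans (by linarith)
    · rw [hbB]

end

lemma avg_defect_le {B : ℕ} {φ β : ℝ → ℕ → ℕ → ℝ} {R c c₁ υ ζ : ℝ} (hc : 0 < c)
    (hc₁ : 0 < c₁) (hυ : 0 < υ) {A : Finset (ℝ × ℕ)} {j k : ℕ}
    (h1 : avg A j (fun a n => ∫ x in (-R)..R, (ev B φ a (n + k) x - ev B φ a n x) ^ 2) ≤ ζ)
    (h2 : avg A j (fun a n => ∫ x in (-R)..R, ev B φ a (n + k) x ^ 2 * ev B β a (n + k) x) ≤ ζ)
    (h3 : avg A j (fun a n => ∫ x in (-1 : ℝ)..0, cutoff c (ev B φ a (n + k) x)) ≤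
      4 * c * R + ζ) :
    avg A j (fun a n => defect B φ β R c c₁ υ a n k) ≤
      ζ * (1 / (c₁ ^ 2 * υ) + 1 / (c ^ 2 / 4 * υ) + 4) + 16 * c * R := by
  simp only [defect, div_eq_inv_mul _ (c₁ ^ 2 * υ), div_eq_inv_mul _ (c ^ 2 / 4 * υ)]
  rw [avg_add, avg_add, avg_const_mul, avg_const_mul, avg_const_mul]
  have p1 : 0 < (c₁ ^ 2 * υ)⁻¹ := by positivity
  have p2 : 0 < (c ^ 2 / 4 * υ)⁻¹ := by positivity
  have e1 := mul_le_mul_of_nonneg_left h1 p1.le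
  have e2 := mul_le_mul_of_nonneg_left h2 p2.le
  rw [mul_one, mul_one]
  linarith

lemma exists_le_of_avg_le {α : Type*} {A : Finset α} (hA : A.Nonempty) {j N : ℕ}
    {F : α → ℕ → ℕ → ℝ} {ζ : ℝ} (h : ∀ k < N, avg A j (fun a n => F a n k) ≤ ζ) :
    ∃ n ≤ j, ∑ k ∈ Finset.range N, ∑ a ∈ A, F a n k ≤ ζ * (N * A.card) := by
  have hc : (0 : ℝ) < A.card := by exact_mod_cast hA.card_pos
  have h1 : ∑ n ∈ Finset.range (j + 1), ∑ k ∈ Finset.range N, ∑ a ∈ A, F a n k ≤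
      ∑ _n ∈ Finset.range (j + 1), ζ * (N * A.card) := by
    calc ∑ n ∈ Finset.range (j + 1), ∑ k ∈ Finset.range N, ∑ a ∈ A, F a n k
        = ∑ k ∈ Finset.range N, avg A j (fun a n => F a n k) * (A.card * (j + 1)) := by
          rw [Finset.sum_comm]
          refine Finset.sum_congr rfl fun k _ => ?_
          rw [Finset.sum_comm, avg, div_mul_cancel₀ _ (by positivity)]
      _ ≤ ∑ k ∈ Finset.range N, ζ * (A.card * (j + 1)) := by
          gcongr with k hk
          exact h k (Finset.mem_range.1 hk)
      _ = _ := by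
          simp only [Finset.sum_const, Finset.card_range, nsmul_eq_mul]
          push_cast
          ring
  obtain ⟨n, hn, hle⟩ := Finset.exists_le_of_sum_le ⟨0, by simp⟩ h1
  exact ⟨n, Nat.lt_succ_iff.1 (Finset.mem_range.1 hn), hle⟩

lemma exists_pow_ge {b : ℝ} (hb : 4 ≤ b) {x : ℝ} (hx : 0 < x) (y : ℝ) : ∃ n : ℕ, y ≤ x * b ^ n := by
  obtain ⟨n, hn⟩ := pow_unbounded_of_one_lt (y / x) (by linarith : 1 < b)
  refine ⟨n, ?_⟩
  rw [div_lt_iff₀ hx] at hn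
  linarith

set_option maxHeartbeats 1000000 in
/-- There is no sequence of finite samples of fat base points whose trees of cells branch with
positive frequency. -/
theorem no_samples {p B b : ℕ} {vn : ℕ → ℤ} (hp : 2 ≤ p) (hB : 2 ≤ B) (hb : b = B ^ 2)
    (hv : ∀ n, ((p : ℤ) ^ (2 * n)) ∣ vn (n + 1) - vn n) {ε p₀ : ℝ} (hε : 0 < ε) (hp₀ : 0 < p₀)
    (S : ℕ → Finset ℝ) (T₀ T : ℕ → ℕ) (hS : ∀ j, (S j).Nonempty) (hT₀ : ∀ j, j ≤ T₀ j)
    (hT : ∀ j, T₀ j + j < T j)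
    (hF : ∀ Θ : ℝ, ∀ᶠ j in atTop, ∀ s ∈ S j, ∀ t, T₀ j ≤ t → ∀ n ≤ 2 * j,
      Fat ε Θ (latt p B vn s t n))
    (hNC : ∀ j, p₀ * ((S j).card * ((T j : ℝ) - T₀ j)) ≤
      cnt (S j) (T₀ j) (T j) (Spread (floorCell b) (S j) (1 / (4 * (b : ℝ) ^ 2)))) : False := by
  have hb4 : 4 ≤ b := by rw [hb]; nlinarith
  have hb4' : (4 : ℝ) ≤ b := by exact_mod_cast hb4
  have hb0 : (0 : ℝ) < b := by linarith
  have h𝒢 : ((hyperfilter ℕ : Ultrafilter ℕ) : Filter ℕ) ≤ atTop := Nat.hyperfilter_le_atTop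
  have hTT : ∀ j, (0 : ℝ) < (T j : ℝ) - T₀ j := fun j =>
    sub_pos.2 (by exact_mod_cast (by have := hT j; omega : T₀ j < T j))
  have hTot : ∀ j, 0 < ((S j).card : ℝ) * ((T j : ℝ) - T₀ j) := fun j =>
    mul_pos (by exact_mod_cast (hS j).card_pos) (hTT j)
  obtain ⟨Β, hΒ, hstab⟩ := exists_stable (hyperfilter ℕ)
    (fun x j => cnt (S j) (T₀ j) (T j)
      (Idle (Spread (floorCell b) (S j) (1 / (4 * (b : ℝ) ^ 2))) x) /
        ((S j).card * ((T j : ℝ) - T₀ j)))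
    (fun x j => div_nonneg cnt_nonneg (hTot j).le)
    (fun x j => by
      rw [div_le_one (hTot j), ← cnt_true (by have := hT j; omega)]
      exact cnt_mono fun _ _ _ _ _ _ => trivial)
    (fun x y j hxy => div_le_div_of_nonneg_right
      (cnt_mono fun _ _ _ _ _ h => h.anti hxy) (hTot j).le)
    (by positivity : 0 < p₀ / 50)
  have hΒ' : (0 : ℝ) < Β := by exact_mod_cast hΒ
  obtain ⟨l, hl, hlε⟩ : ∃ l : ℝ, 0 < l ∧ 2 * l * (2 * (3 * b * l) + 2 * l) ≤ ε := by
    refine ⟨min 1 (ε / (12 * b + 4)), by positivity, ?_⟩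
    set l := min 1 (ε / (12 * (b : ℝ) + 4))
    have l0 : 0 < l := by positivity
    have l1 : l ≤ 1 := min_le_left _ _
    have l2 : l * (12 * b + 4) ≤ ε := by
      rw [← le_div_iff₀ (by positivity)]; exact min_le_right _ _
    nlinarith
  obtain ⟨J, hJ⟩ := exists_nat_ge ((1 / l + l) / (1 / (8 * (b : ℝ) ^ 2) * (ε * l)) + 1)
  set R : ℝ := 1 + J * (3 * (b : ℝ)) with hR
  have hR1 : 1 ≤ R := by
    have : (0 : ℝ) ≤ J * (3 * b) := by positivity
    linarith
  have hR0 : 0 < R := by linarith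
  obtain ⟨ζ, hζ0, hζ⟩ : ∃ ζ : ℝ, 0 < ζ ∧
      8 * ζ < p₀ * (1 / (12 * (b : ℝ) ^ 2) * (1 / (100 * Β))) := by
    refine ⟨p₀ * (1 / (12 * (b : ℝ) ^ 2) * (1 / (100 * Β))) / 16, by positivity, ?_⟩
    have : 0 < p₀ * (1 / (12 * (b : ℝ) ^ 2) * (1 / (100 * Β))) := by positivity
    linarith
  obtain ⟨c, hc, hcζ⟩ : ∃ c : ℝ, 0 < c ∧ 16 * c * R ≤ ζ / 2 :=
    ⟨ζ / (32 * R), by positivity, le_of_eq (by field_simp; norm_num)⟩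
  obtain ⟨c₁, hc₁, hJc⟩ : ∃ c₁ : ℝ, 0 < c₁ ∧ J * (3 * c₁) ≤ c / 2 := by
    refine ⟨c / (6 * (J + 1)), by positivity, ?_⟩
    rw [show (J : ℝ) * (3 * (c / (6 * (J + 1)))) = J / (J + 1) * (c / 2) by field_simp; ring]
    refine mul_le_of_le_one_left (by positivity) ?_
    rw [div_le_one (by positivity)]
    linarith
  obtain ⟨υ, hυ, hJυ⟩ : ∃ υ : ℝ, 0 < υ ∧ (2 * J + 1) * (3 * υ) ≤ 1 / 2 :=
    ⟨1 / (6 * (2 * J + 1)), by positivity, le_of_eq (by field_simp; norm_num)⟩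
  obtain ⟨ζ₀, hζ₀, hζ₀'⟩ : ∃ ζ₀ : ℝ, 0 < ζ₀ ∧
      ζ₀ * (1 / (c₁ ^ 2 * υ) + 1 / (c ^ 2 / 4 * υ) + 4) ≤ ζ / 2 := by
    have : 0 < 1 / (c₁ ^ 2 * υ) + 1 / (c ^ 2 / 4 * υ) + 4 := by positivity
    exact ⟨ζ / 2 / (1 / (c₁ ^ 2 * υ) + 1 / (c ^ 2 / 4 * υ) + 4), by positivity,
      le_of_eq (div_mul_cancel₀ _ this.ne')⟩
  have hA : ∀ j, (S j ×ˢ Finset.Ico (T₀ j) (T j)).Nonempty := fun j =>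
    (hS j).product ⟨T₀ j, Finset.mem_Ico.2 ⟨le_rfl, by have := hT j; omega⟩⟩
  obtain ⟨φ, hφ, hφavg⟩ := exists_almost_invariant (vn := vn) hp hB (hyperfilter ℕ) h𝒢
    (fun j => S j ×ˢ Finset.Ico (T₀ j) (T j)) hA hR1
    (isU_plateau (ε := ε) hl (by positivity : (0 : ℝ) < 3 * b))
    (supLat_nonneg plateau_nonneg plateau_le_one) (fun c t n => supLat_le fun x _ => plateau_le_one x)
    (by
      intro K
      filter_upwards [h𝒢 (hF (2 * (3 * b * l) + 2 * l)), h𝒢 (eventually_ge_atTop K)]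
        with j hj hjK a ha n hn δ hδ
      rw [Finset.mem_product, Finset.mem_Ico] at ha
      exact supLat_plateau_eq_zero hp hB hl (by positivity) hlε le_rfl
        (hj a.1 ha.1 a.2 ha.2.1 n (by omega)) hδ)
    hζ₀ hc
  obtain ⟨r, hr0, kk, hmod⟩ := hφ.2 c₁ hc₁
  obtain ⟨ρ, hρ, hρr⟩ : ∃ ρ : ℝ, 0 < ρ ∧ 2 * ρ * ((1 + 3 * b) * (1 + R) ^ 2) ≤ r :=
    ⟨r / (2 * ((1 + 3 * b) * (1 + R) ^ 2)), by positivity, le_of_eq (by field_simp)⟩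
  obtain ⟨l₁, hl₁⟩ := exists_pow_ge hb4' hρ ((b : ℝ) ^ (4 + 2 * Β))
  set l₀ := 2 * l₁ + (4 * Β + 6) with hl₀
  have hl₀ρ : (b : ℝ) ^ (4 + 2 * Β) ≤ ρ * (b : ℝ) ^ (l₀ / 2) := by
    refine hl₁.trans ?_
    gcongr
    · linarith
    · omega
  obtain ⟨r₁, hr₁, hr₁ρ, hr₁l⟩ : ∃ r₁ : ℝ, 0 < r₁ ∧ r₁ ≤ ρ ∧ 2 * r₁ * (b : ℝ) ^ (2 * l₀) < 1 := by
    refine ⟨min ρ (1 / (4 * (b : ℝ) ^ (2 * l₀))), by positivity, min_le_left _ _, ?_⟩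
    have hpos : 0 < (b : ℝ) ^ (2 * l₀) := by positivity
    calc 2 * min ρ (1 / (4 * (b : ℝ) ^ (2 * l₀))) * (b : ℝ) ^ (2 * l₀)
        ≤ 2 * (1 / (4 * (b : ℝ) ^ (2 * l₀))) * (b : ℝ) ^ (2 * l₀) := by
          gcongr; exact min_le_right _ _
      _ = 1 / 2 := by field_simp; norm_num
      _ < 1 := by norm_num
  have hr : (r₁ + ρ) * ((1 + 3 * b) * (1 + R) ^ 2) ≤ r := by
    refine le_trans ?_ hρr
    gcongr
    linarith
  obtain ⟨N₀, hN₀⟩ := exists_near_return p hp (1 + 1 / ε) r₁ (by positivity) hr₁ kk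
  set N := 2 * N₀ + 1 with hN
  set Θ : ℝ := 1 / l + 2 * (1 + 1 / ε) * (p : ℝ) ^ N + 1 with hΘ
  have hpos1 : 0 < 1 / l := by positivity
  have hpos2 : 0 < 2 * (1 + 1 / ε) * (p : ℝ) ^ N := by positivity
  obtain ⟨Tm, hTm⟩ := exists_pow_ge hb4'
    (by positivity : 0 < ε / (4 * (1 + 1 / ε) ^ 2 * (p : ℝ) ^ (2 * N))) 2
  set M := Tm + Tm / 4 + Β + 1 with hM
  obtain ⟨j₁, hj₁⟩ := exists_nat_ge (40 * (M : ℝ) / p₀)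
  obtain ⟨j₂, hj₂⟩ := exists_nat_ge (1 / l)
  have hev : ∀ᶠ j in ((hyperfilter ℕ : Ultrafilter ℕ) : Filter ℕ), False := by
    filter_upwards [hφavg N, hstab (M + Β), h𝒢 (hF Θ), h𝒢 (eventually_ge_atTop j₁),
      h𝒢 (eventually_ge_atTop j₂), h𝒢 (eventually_ge_atTop N)] with j ha hs hf h1 h2 h3
    obtain ⟨n₀, hn₀, hsum⟩ := exists_le_of_avg_le (hA j) (N := N) (ζ := ζ)
      (F := fun a n k => defect B φ (supLat p B vn (plateau ε l (3 * b))) R c c₁ υ a n k)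
      fun k hk => by
        obtain ⟨a1, a2, a3⟩ := ha k hk
        exact (avg_defect_le hc hc₁ hυ a1 a2 a3).trans (by linarith)
    have hcard : (((S j ×ˢ Finset.Ico (T₀ j) (T j)).card : ℕ) : ℝ) =
        (S j).card * ((T j : ℝ) - T₀ j) := by
      rw [Finset.card_product, Nat.card_Ico, Nat.cast_mul,
        Nat.cast_sub (by have := hT j; omega)]
    rw [hcard] at hsum
    simp only [Finset.sum_product] at hsum
    refine no_sample hp hB hb hv hφ hε hl hJ le_rfl hc hc₁ hυ hJυ hJc hmod hρ hr₁ hr hΒ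
      (by omega : 4 * Β + 6 ≤ l₀) hl₀ρ hr₁l hN₀ (by omega : 2 * N₀ < N)
      (by linarith : 1 / l < Θ) (by linarith) hTm hM.ge (hS j)
      (by have := hT j; omega : T₀ j < T j) ?_ (n₀ := n₀)
      (fun s hs t ht k hk => hf s hs t ht _ (by omega)) hp₀ (hNC j) ?_ ?_ hζ hsum
    · have e1 : (j₂ : ℝ) ≤ (B : ℝ) ^ T₀ j := by
        have : j₂ ≤ B ^ T₀ j :=
          (h2.trans (hT₀ j)).trans (Nat.lt_pow_self (by omega : 1 < B)).le
        exact_mod_cast this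
      have e2 := hj₂.trans e1
      rw [div_le_iff₀ hl] at e2
      linarith
    · rw [← sub_div, div_le_iff₀ (hTot j)] at hs
      exact hs
    · rw [div_le_iff₀ hp₀] at hj₁
      have e1 : (j₁ : ℝ) ≤ (T j : ℝ) - T₀ j := by
        have : j₁ + T₀ j ≤ T j := by have := hT j; omega
        have : (j₁ : ℝ) + T₀ j ≤ T j := by exact_mod_cast this
        linarith
      have e2 : (j₁ : ℝ) * p₀ ≤ ((T j : ℝ) - T₀ j) * p₀ := by gcongr
      have e3 := hj₁.trans e2
      linarith
  exact hev.exists.elim fun _ h => h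

/-- The pair consisting of the real number `s` and the `p`-adic limit of `vn` is badly approximable
in the sense of the mixed product, with constant `ε`. -/
def BadMixed (p : ℕ) (vn : ℕ → ℤ) (ε s : ℝ) : Prop :=
  ∀ (n : ℕ) (q q₀ : ℤ), (q ≠ 0 ∨ q₀ ≠ 0) → ((p : ℤ) ^ (2 * n)) ∣ q * vn n - q₀ →
    ε ≤ |(q : ℝ)| * |q * s - q₀| / (p : ℝ) ^ (2 * n) ∨ ε ≤ |q * s - q₀|

lemma BadMixed.fat {p B : ℕ} {vn : ℕ → ℤ} {ε s : ℝ} (h : BadMixed p vn ε s) (hp : 2 ≤ p)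
    (hB : 2 ≤ B) {Θ : ℝ} {t n : ℕ} (hΘ : Θ * (p : ℝ) ^ n ≤ ε * (B : ℝ) ^ t) :
    Fat ε Θ (latt p B vn s t n) := by
  rintro x ⟨q, d, rfl⟩ hx
  have hp0 : (0 : ℝ) < (p : ℝ) ^ n := by positivity
  have hB0 : (0 : ℝ) < (B : ℝ) ^ t := by positivity
  have e2 : (B : ℝ) ^ t * (p : ℝ) ^ n * d + (B : ℝ) ^ t / (p : ℝ) ^ n * (vn n - s) * q =
      -((B : ℝ) ^ t / (p : ℝ) ^ n * (q * s - ((p : ℤ) ^ (2 * n) * d + vn n * q : ℤ))) := by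
    push_cast
    field_simp
    ring
  have hne : q ≠ 0 ∨ (p : ℤ) ^ (2 * n) * d + vn n * q ≠ 0 := by
    by_contra! hc
    obtain ⟨rfl, hc⟩ := hc
    apply hx
    have : (p : ℤ) ^ (2 * n) ≠ 0 := by positivity
    have : d = 0 := by simpa [this] using hc
    subst this
    simp
  rcases h n q _ hne ⟨-d, by ring⟩ with h1 | h1
  · left
    simp only [e2]
    refine h1.trans (le_of_eq ?_)
    rw [← abs_mul, mul_neg, abs_neg, ← abs_of_pos (by positivity : 0 < (p : ℝ) ^ (2 * n)),
      ← abs_div]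
    congr 1
    field_simp
    ring
  · right
    simp only [e2, abs_neg]
    rw [abs_mul, abs_of_pos (by positivity), div_mul_eq_mul_div, le_div_iff₀ hp0]
    refine hΘ.trans ?_
    rw [mul_comm]
    gcongr

lemma finite_floorCell_image {E : Set ℝ} {a : ℤ} (hE : E ⊆ Ico (a : ℝ) (a + 1)) (b T : ℕ) :
    (floorCell b T '' E).Finite := by
  refine (Set.finite_Icc ⌊(b : ℝ) ^ T * a⌋ ⌊(b : ℝ) ^ T * (a + 1)⌋).subset ?_
  rintro _ ⟨s, hs, rfl⟩
  have h1 := (hE hs).1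
  have h2 := (hE hs).2.le
  exact ⟨Int.floor_le_floor (by gcongr), Int.floor_le_floor (by gcongr)⟩

/-- A set of badly approximable points meets few cells. -/
theorem eventually_ncard_lt {p B : ℕ} {vn : ℕ → ℤ} (hp : 2 ≤ p) (hB : 2 ≤ B)
    (hv : ∀ n, ((p : ℤ) ^ (2 * n)) ∣ vn (n + 1) - vn n) {ε : ℝ} (hε : 0 < ε) {E : Set ℝ}
    (hE : ∀ s ∈ E, BadMixed p vn ε s) {a : ℤ} (hEa : E ⊆ Ico (a : ℝ) (a + 1)) :
    ∀ᶠ T : ℕ in atTop, ((floorCell (B ^ 2) T '' E).ncard : ℝ) < Real.exp (10 * T) := by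
  by_contra hcon
  rw [not_eventually] at hcon
  obtain ⟨b, hb⟩ : ∃ b, b = B ^ 2 := ⟨_, rfl⟩
  rw [← hb] at hcon
  have hb4 : 4 ≤ b := by rw [hb]; nlinarith
  have key : ∀ j : ℕ, ∃ (T : ℕ) (S : Finset ℝ), (∀ s ∈ S, s ∈ E) ∧ InjOn (floorCell b T) S ∧
      Real.exp (10 * T) ≤ S.card ∧ (5 + b) * ((2 * p + 1) * j) ≤ T ∧ (2 * p + 1) * j + j < T := by
    intro j
    obtain ⟨T, hT, hlt⟩ := (frequently_atTop.1 hcon)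
      ((5 + b) * ((2 * p + 1) * j) + ((2 * p + 1) * j + j + 1))
    obtain ⟨u, huE, hu⟩ := Set.exists_subset_bijOn E (floorCell b T)
    have hfin : u.Finite := (finite_floorCell_image hEa b T).of_injOn hu.mapsTo hu.injOn
    refine ⟨T, hfin.toFinset, fun s hs => huE (by simpa using hs), by simpa using hu.injOn, ?_,
      by omega, by omega⟩
    rw [← hu.image_eq, hu.injOn.ncard_image, not_lt, Set.ncard_eq_toFinset_card u hfin] at hlt
    exact hlt
  choose T S hSE hinj hcard hT hT' using key
  have hcard0 : ∀ j, (0 : ℝ) < (S j).card := fun j => (Real.exp_pos _).trans_le (hcard j)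
  have hb0 : (0 : ℝ) < b := by positivity
  refine no_samples hp hB hb hv hε (p₀ := 4 / b) (by positivity) S (fun j => (2 * p + 1) * j) T
    (fun j => Finset.card_pos.1 (by exact_mod_cast hcard0 j)) (fun j => by nlinarith) hT' ?_ ?_
  · intro Θ
    obtain ⟨j₀, hj₀⟩ := pow_unbounded_of_one_lt (|Θ| / ε) (by norm_num : (1 : ℝ) < 2)
    filter_upwards [eventually_ge_atTop j₀] with j hj s hs t ht n hn
    refine (hE s (hSE j s hs)).fat hp hB ?_
    have hp1 : (1 : ℝ) ≤ p := by exact_mod_cast (by omega : 1 ≤ p)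
    have hB2 : (2 : ℝ) ≤ B := by exact_mod_cast hB
    have hp2 : (p : ℝ) ≤ 2 ^ p := by exact_mod_cast Nat.lt_two_pow_self.le
    rw [div_lt_iff₀ hε] at hj₀
    calc Θ * (p : ℝ) ^ n ≤ |Θ| * (p : ℝ) ^ n := by gcongr; exact le_abs_self Θ
      _ ≤ (2 ^ j₀ * ε) * (p : ℝ) ^ (2 * j) := by gcongr
      _ ≤ (2 ^ j * ε) * ((2 : ℝ) ^ p) ^ (2 * j) := by gcongr; norm_num
      _ = ε * 2 ^ ((2 * p + 1) * j) := by ring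
      _ ≤ ε * (B : ℝ) ^ ((2 * p + 1) * j) := by gcongr
      _ ≤ ε * (B : ℝ) ^ t := by gcongr; linarith
  · intro j
    have h := sum_spread_ge (by omega : 0 < b) (floorCell_succ (by omega)) (S := S j)
      (T₀ := (2 * p + 1) * j) (T := T j) (by have := hT' j; omega) ?_
      (fun s hs s' hs' h => hinj j hs hs' h)
      ((Real.le_log_iff_exp_le (hcard0 j)).2 (hcard j)) (hT j)
    · rw [cnt, div_mul_eq_mul_div, div_le_iff₀ hb0, mul_comm _ (b : ℝ)]
      refine le_trans ?_ h
      have : (0 : ℝ) ≤ ((2 * p + 1) * j : ℕ) := by positivity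
      have := hcard0 j
      calc 4 * (((S j).card : ℝ) * ((T j : ℝ) - ((2 * p + 1) * j : ℕ)))
          ≤ 4 * (((S j).card : ℝ) * (T j : ℝ)) := by gcongr; linarith
        _ = _ := by ring
    · have hz : ∀ s ∈ S j, floorCell b 0 s = a := fun s hs => by
        have := hEa (hSE j s hs)
        simp only [floorCell, pow_zero, one_mul]
        exact Int.floor_eq_iff.2 ⟨this.1, this.2⟩
      intro s hs s' hs'
      rw [hz s hs, hz s' hs']

open scoped NNReal ENNReal

lemma mem_cell {b : ℕ} (hb : 0 < b) (T : ℕ) (s : ℝ) :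
    s ∈ Icc ((floorCell b T s : ℝ) / (b : ℝ) ^ T) ((floorCell b T s + 1 : ℝ) / (b : ℝ) ^ T) := by
  have hpos : (0 : ℝ) < (b : ℝ) ^ T := by positivity
  constructor
  · rw [div_le_iff₀ hpos, mul_comm]
    exact Int.floor_le _
  · rw [le_div_iff₀ hpos, mul_comm]
    exact (Int.lt_floor_add_one _).le

/-- The badly approximable numbers in a unit interval form a set of dimension zero. -/
theorem dimH_badMixed {p : ℕ} {vn : ℕ → ℤ} (hp : 2 ≤ p)
    (hv : ∀ n, ((p : ℤ) ^ (2 * n)) ∣ vn (n + 1) - vn n) {ε : ℝ} (hε : 0 < ε) {E : Set ℝ}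
    (hE : ∀ s ∈ E, BadMixed p vn ε s) {a : ℤ} (hEa : E ⊆ Ico (a : ℝ) (a + 1)) : dimH E = 0 := by
  rw [← nonpos_iff_eq_zero]
  refine ENNReal.le_of_forall_pos_le_add fun d hd _ => ?_
  rw [zero_add]
  obtain ⟨B, hB⟩ := exists_nat_ge (max 2 (Real.exp (5 / d)))
  have hB2 : 2 ≤ B := by exact_mod_cast (le_max_left _ _).trans hB
  have hBlog : Real.exp 10 ≤ ((B ^ 2 : ℕ) : ℝ) ^ (d : ℝ) := by
    have hd' : (0 : ℝ) < d := hd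
    calc Real.exp 10 = (Real.exp (5 / d) ^ 2) ^ (d : ℝ) := by
          rw [← Real.exp_nat_mul, ← Real.exp_mul]
          congr 1
          field_simp
          norm_num
      _ ≤ _ := by
          push_cast
          gcongr
          exact (le_max_right _ _).trans hB
  have hev := eventually_ncard_lt hp hB2 hv hε hE hEa
  obtain ⟨b, hb⟩ : ∃ b, b = B ^ 2 := ⟨_, rfl⟩
  rw [← hb] at hev hBlog
  have hb4 : 4 ≤ b := by rw [hb]; nlinarith
  have hb1 : (1 : ℝ) < b := by exact_mod_cast (by omega : 1 < b)
  refine dimH_le_of_hausdorffMeasure_ne_top (ne_top_of_le_ne_top ENNReal.one_ne_top ?_)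
  have hfin := fun T => finite_floorCell_image hEa b T
  let : ∀ T, Fintype (floorCell b T '' E) := fun T => (hfin T).fintype
  have hdiam : ∀ (T : ℕ) (i : ℤ), Metric.ediam (Icc ((i : ℝ) / (b : ℝ) ^ T)
      ((i + 1 : ℝ) / (b : ℝ) ^ T)) = ENNReal.ofReal ((1 / (b : ℝ)) ^ T) := fun T i => by
    rw [Real.ediam_Icc]
    congr 1
    rw [one_div, inv_pow]
    ring
  refine (Measure.hausdorffMeasure_le_liminf_sum (d : ℝ) E (l := atTop)
    (fun T : ℕ => ENNReal.ofReal ((1 / (b : ℝ)) ^ T)) ?_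
    (fun T (i : floorCell b T '' E) =>
      Icc (((i : ℤ) : ℝ) / (b : ℝ) ^ T) ((((i : ℤ) : ℝ) + 1) / (b : ℝ) ^ T))
    (Eventually.of_forall fun T i => (hdiam T i).le) (Eventually.of_forall fun T s hs => ?_)).trans ?_
  · rw [← ENNReal.ofReal_zero]
    refine ENNReal.tendsto_ofReal (tendsto_pow_atTop_nhds_zero_of_lt_one (by positivity) ?_)
    rw [div_lt_one (by linarith)]
    exact hb1
  · exact mem_iUnion.2 ⟨⟨_, mem_image_of_mem _ hs⟩, mem_cell (by omega) T s⟩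
  · refine (liminf_le_liminf (v := fun _ => (1 : ℝ≥0∞)) ?_).trans (liminf_const _).le
    filter_upwards [hev] with T hT
    simp only [hdiam, Finset.sum_const, Finset.card_univ, nsmul_eq_mul]
    rw [← Nat.card_eq_fintype_card, Nat.card_coe_set_eq,
      ENNReal.ofReal_rpow_of_nonneg (by positivity) d.coe_nonneg, ← ENNReal.ofReal_natCast,
      ← ENNReal.ofReal_mul (by positivity), ENNReal.ofReal_le_one]
    have hpos : (0 : ℝ) < (b : ℝ) ^ (d : ℝ) := by positivity
    calc ((floorCell b T '' E).ncard : ℝ) * ((1 / (b : ℝ)) ^ T) ^ (d : ℝ)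
        ≤ Real.exp (10 * T) * ((1 / (b : ℝ)) ^ T) ^ (d : ℝ) := by gcongr
      _ = (Real.exp 10 / (b : ℝ) ^ (d : ℝ)) ^ T := by
          rw [← Real.rpow_pow_comm (by positivity), Real.div_rpow (by positivity) (by positivity),
            Real.one_rpow, mul_comm 10 (T : ℝ), Real.exp_nat_mul, ← mul_pow, mul_one_div]
      _ ≤ 1 := pow_le_one₀ (by positivity) ((div_le_one hpos).2 hBlog)

section Padic

variable {p : ℕ} [Fact p.Prime]

lemma Cond12.of_mul_pow {u : ℝ} {v : ℚ_[p]} {l : ℕ}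
    (h : Cond12 p ((p : ℝ) ^ l * u) ((p : ℚ_[p]) ^ l * v)) : Cond12 p u v := by
  intro ε hε N
  have hp1 : 1 ≤ p := (Fact.out : p.Prime).one_lt.le
  have hpos : (0 : ℝ) < (p : ℝ) ^ l := by positivity
  obtain ⟨q, q₀, hq, hq₀, hlt⟩ := h (ε / (p : ℝ) ^ l) (by positivity) N
  refine ⟨(p : ℤ) ^ l * q, q₀, ?_, hq₀, ?_⟩
  · rw [abs_mul, abs_of_pos (by positivity)]
    have : (1 : ℤ) ≤ (p : ℤ) ^ l := one_le_pow₀ (by exact_mod_cast hp1)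
    nlinarith [abs_nonneg q]
  · rw [lt_div_iff₀ hpos] at hlt
    refine lt_of_eq_of_lt ?_ hlt
    push_cast
    rw [abs_mul, abs_of_pos hpos,
      show (p : ℝ) ^ l * q * u - q₀ = q * ((p : ℝ) ^ l * u) - q₀ by ring,
      show (p : ℚ_[p]) ^ l * q * v - q₀ = q * ((p : ℚ_[p]) ^ l * v) - q₀ by ring]
    ring

/-- For irrational `s`, a failure of the product condition holds with a uniform constant for all
pairs, up to pairs at which the real linear form is not small. -/
lemma exists_uniform_of_not_cond12 {s : ℝ} (hs : Irrational s) {v : ℚ_[p]} (h : ¬ Cond12 p s v) :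
    ∃ k : ℕ, ∀ q q₀ : ℤ, (q ≠ 0 ∨ q₀ ≠ 0) →
      (1 : ℝ) / (k + 1) ≤ |(q : ℝ)| * |q * s - q₀| * ‖(q : ℚ_[p]) * v - q₀‖ ∨
        (1 : ℝ) / (k + 1) ≤ |q * s - q₀| := by
  unfold Cond12 at h
  push Not at h
  obtain ⟨ε, hε, N, hN⟩ := h
  have hs0 : 0 < |s| := abs_pos.2 hs.ne_zero
  obtain ⟨M, hM⟩ := exists_nat_ge (max (N * |s| + 1) (max ((N + 1) / |s|) N))
  have hM1 : N * |s| + 1 ≤ M := (le_max_left _ _).trans hM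
  have hM2 : (N + 1) / |s| ≤ M := ((le_max_left _ _).trans (le_max_right _ _)).trans hM
  have hM3 : (N : ℝ) ≤ M := ((le_max_right _ _).trans (le_max_right _ _)).trans hM
  have hform : ∀ q q₀ : ℤ, (q ≠ 0 ∨ q₀ ≠ 0) → 0 < |q * s - q₀| := by
    intro q q₀ hne
    rw [abs_pos]
    by_cases hq : q = 0
    · subst hq
      simpa using hne
    · have := ((hs.intCast_mul hq).sub_intCast q₀).ne_zero
      exact this
  have hlim : Tendsto (fun k : ℕ => (1 : ℝ) / (k + 1)) atTop (𝓝 0) :=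
    tendsto_one_div_add_atTop_nhds_zero_nat
  have hfin : ∀ᶠ k : ℕ in atTop, ∀ x ∈ Finset.Icc (-(M : ℤ)) M ×ˢ Finset.Icc (-(M : ℤ)) M,
      (x.1 ≠ 0 ∨ x.2 ≠ 0) → (1 : ℝ) / (k + 1) ≤ |x.1 * s - x.2| := by
    rw [Filter.eventually_all_finset]
    intro x _
    by_cases hx : x.1 ≠ 0 ∨ x.2 ≠ 0
    · filter_upwards [hlim.eventually (gt_mem_nhds (hform x.1 x.2 hx))] with k hk _
      exact hk.le
    · exact Eventually.of_forall fun k hk => absurd hk hx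
  obtain ⟨k, hk, hkε⟩ := (hfin.and (hlim.eventually (gt_mem_nhds hε))).exists
  refine ⟨k, fun q q₀ hne => ?_⟩
  by_cases hbig : (N : ℤ) ≤ |q| ∧ (N : ℤ) ≤ |q₀|
  · left
    refine hkε.le.trans ?_
    have := hN q q₀ hbig.1 hbig.2
    exact this
  · right
    by_cases hone : 1 ≤ |(q : ℝ) * s - q₀|
    · refine le_trans ?_ hone
      rw [div_le_one (by positivity)]
      have : (0 : ℝ) ≤ k := by positivity
      linarith
    push Not at hone
    have hle : |(q : ℝ)| ≤ M ∧ |(q₀ : ℝ)| ≤ M := by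
      have e1 : |(q₀ : ℝ)| ≤ |(q : ℝ)| * |s| + 1 := by
        rw [← abs_mul]
        have := abs_sub_abs_le_abs_sub (q₀ : ℝ) (q * s)
        rw [abs_sub_comm] at this
        linarith
      have e2 : |(q : ℝ)| * |s| ≤ |(q₀ : ℝ)| + 1 := by
        rw [← abs_mul]
        have := abs_sub_abs_le_abs_sub (q * s) (q₀ : ℝ)
        linarith
      rw [not_and_or, not_le, not_le] at hbig
      rcases hbig with hbig | hbig
      · have hb : |(q : ℝ)| ≤ N := by exact_mod_cast hbig.le
        have : |(q : ℝ)| * |s| ≤ N * |s| := by gcongr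
        exact ⟨hb.trans hM3, by linarith⟩
      · have hb : |(q₀ : ℝ)| ≤ N := by exact_mod_cast hbig.le
        refine ⟨le_trans ?_ hM2, hb.trans hM3⟩
        rw [le_div_iff₀ hs0]
        linarith
    refine hk (q, q₀) ?_ hne
    rw [Finset.mem_product, Finset.mem_Icc, Finset.mem_Icc, ← abs_le, ← abs_le]
    exact ⟨by exact_mod_cast hle.1, by exact_mod_cast hle.2⟩

lemma norm_mul_sub_le_of_dvd {v : ℚ_[p]} {w q q₀ : ℤ} {n : ℕ}
    (hw : ‖v - w‖ ≤ (p : ℝ) ^ (-(n : ℤ))) (h : ((p : ℤ) ^ n) ∣ q * w - q₀) :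
    ‖(q : ℚ_[p]) * v - q₀‖ ≤ (p : ℝ) ^ (-(n : ℤ)) := by
  have h2 : ‖((q * w - q₀ : ℤ) : ℚ_[p])‖ ≤ (p : ℝ) ^ (-(n : ℤ)) :=
    (Padic.norm_int_le_pow_iff_dvd _ _).2 (by exact_mod_cast h)
  have e : (q : ℚ_[p]) * v - q₀ = q * (v - w) + ((q * w - q₀ : ℤ) : ℚ_[p]) := by
    push_cast
    ring
  rw [e]
  refine (Padic.nonarchimedean _ _).trans (max_le ?_ h2)
  rw [norm_mul]
  exact (mul_le_of_le_one_left (norm_nonneg _) (Padic.norm_int_le_one q)).trans hw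

lemma dimH_not_cond12_of_norm_le_one {v : ℚ_[p]} (hv : ‖v‖ ≤ 1) :
    dimH {u : ℝ | ¬ Cond12 p u v} = 0 := by
  have hp : p.Prime := Fact.out
  let z : ℤ_[p] := ⟨v, hv⟩
  let vn : ℕ → ℤ := fun n => (z.appr (2 * n) : ℤ)
  have hnorm : ∀ n, ‖v - (vn n : ℚ_[p])‖ ≤ (p : ℝ) ^ (-((2 * n : ℕ) : ℤ)) := fun n => by
    have := (PadicInt.norm_le_pow_iff_mem_span_pow _ _).2 (PadicInt.appr_spec (2 * n) z)
    rw [PadicInt.norm_def, PadicInt.coe_sub, PadicInt.coe_natCast] at this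
    rw [Int.cast_natCast]
    exact this
  have hdvd : ∀ n, ((p : ℤ) ^ (2 * n)) ∣ vn (n + 1) - vn n := fun n => by
    rw [← Padic.norm_int_le_pow_iff_dvd]
    have e : ((vn (n + 1) - vn n : ℤ) : ℚ_[p]) = (v - vn n) + -(v - vn (n + 1)) := by
      push_cast
      ring
    rw [e]
    refine (Padic.nonarchimedean _ _).trans (max_le (hnorm n) ?_)
    rw [norm_neg]
    refine (hnorm (n + 1)).trans ?_
    have : (1 : ℝ) ≤ p := by exact_mod_cast hp.one_lt.le
    gcongr
    omega
  refine nonpos_iff_eq_zero.1 ?_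
  have hsub : {u : ℝ | ¬ Cond12 p u v} ⊆ range ((↑) : ℚ → ℝ) ∪
      ⋃ x : ℕ × ℤ, {s | BadMixed p vn (1 / (x.1 + 1)) s} ∩ Ico (x.2 : ℝ) (x.2 + 1) := by
    intro s hs
    by_cases hirr : Irrational s
    · right
      obtain ⟨k, hk⟩ := exists_uniform_of_not_cond12 hirr hs
      refine mem_iUnion.2 ⟨(k, ⌊s⌋), ?_, Int.floor_le s, Int.lt_floor_add_one s⟩
      intro n q q₀ hne hd
      refine (hk q q₀ hne).imp_left fun h => h.trans ?_
      rw [div_eq_mul_inv]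
      gcongr
      have := norm_mul_sub_le_of_dvd (hnorm n) hd
      rwa [zpow_neg, zpow_natCast] at this
    · left
      simpa [Irrational] using hirr
  refine (dimH_mono hsub).trans ?_
  rw [dimH_union, dimH_iUnion, (countable_range _).dimH_zero]
  refine max_le le_rfl (iSup_le fun x => ?_)
  exact (dimH_badMixed hp.two_le hdvd (by positivity : (0 : ℝ) < 1 / (x.1 + 1))
    (fun s hs => hs.1) inter_subset_right).le

end Padic

/-- For every prime `p` and every `v ∈ ℚ_p`, the set of `u ∈ ℝ` such that `(u,v)` does not
satisfy condition (1.2) has Hausdorff dimension zero. -/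
theorem dimH_not_cond12_eq_zero (p : ℕ) [Fact p.Prime] (v : ℚ_[p]) :
    dimH {u : ℝ | ¬ Cond12 p u v} = 0 := by
  have hp : p.Prime := Fact.out
  have hp0 : (p : ℝ) ≠ 0 := by exact_mod_cast hp.ne_zero
  obtain ⟨l, hl⟩ := pow_unbounded_of_one_lt ‖v‖ (by exact_mod_cast hp.one_lt : (1 : ℝ) < p)
  have hv : ‖(p : ℚ_[p]) ^ l * v‖ ≤ 1 := by
    rw [norm_mul, norm_pow, Padic.norm_p, inv_pow, inv_mul_le_iff₀ (by positivity), mul_one]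
    exact hl.le
  have hsub : {u : ℝ | ¬ Cond12 p u v} ⊆
      (fun x => ((p : ℝ) ^ l)⁻¹ • x) '' {u : ℝ | ¬ Cond12 p u ((p : ℚ_[p]) ^ l * v)} := by
    intro u hu
    exact ⟨(p : ℝ) ^ l * u, fun h => hu h.of_mul_pow, by simp [hp0]⟩
  refine nonpos_iff_eq_zero.1 ((dimH_mono hsub).trans ?_)
  refine ((lipschitzWith_smul ((p : ℝ) ^ l)⁻¹).dimH_image_le _).trans ?_
  rw [dimH_not_cond12_of_norm_le_one hv]
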